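/- Let H be the star-expansion of a forest. Then for every integer ℓ ≥ 3, there exists a real number τ > 0 such that every graph G that is H-free and, for every m ≥ ℓ, is (complement of C_m)-free, satisfies max(α(G), ω(G)) ≥ |G|^τ; that is, the set {H, C̄_ℓ, C̄_{ℓ+1}, C̄_{ℓ+2}, …} has the Erdős–Hajnal property. -/

import Mathlib

open SimpleGraph

/-- The independence (stable set) number of a graph: the clique number of the complement. -/
noncomputable def alphaNum {V : Type*} (G : SimpleGraph V) : ℕ := Gᶜ.cliqueNum

/-- The clique number of a graph. -/
noncomputable def omegaNum {V : Type*} (G : SimpleGraph V) : ℕ := G.cliqueNum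

/-- κ(G) = α(G)·ω(G). -/
noncomputable def kappaNum {V : Type*} (G : SimpleGraph V) : ℕ := alphaNum G * omegaNum G

/-- The star-expansion of `H`: for each vertex `b` of `H`, add a new vertex `a_b` adjacent
to `b` only, and add one further vertex `v` adjacent to all of the `a_b` and nothing else. -/
def starExpansion {W : Type*} (H : SimpleGraph W) : SimpleGraph (W ⊕ W ⊕ Unit) :=
  SimpleGraph.fromRel (fun x y =>
    match x, y with
    | Sum.inl b, Sum.inl b' => H.Adj b b'
    | Sum.inl b, Sum.inr (Sum.inl a) => b = a
    | Sum.inr (Sum.inl _), Sum.inr (Sum.inr _) => True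
    | _, _ => False)

/-!
Let `G` contain neither the star-expansion of the forest `F` nor a long antihole. A large set of
vertices contains a linear pure pair or, by Rödl's theorem, a large sparse subset: in the co-sparse
case, the Gyárfás path argument in the complement finds a long hole or a pure pair.

In many large blocks with small degrees and no large anticomplete pairs between them, there is a
rainbow copy of `F`. By Ramsey's theorem, a small rainbow pattern that occurs on some colours
reappears on all others. Either a gadget appears that attaches a new leaf to a rainbow tree at any
prescribed vertex, and `F` is built leaf by leaf, or rainbow binomial trees with a root of extreme
colour can be joined to form larger ones, and a large binomial tree contains `F`.

In a minimal set `X` with `α * ω < |X| ^ c`, growing a stable set greedily inside a sparse subset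
produces a vertex `v`, a stable set `S` of neighbours of `v`, and many nonneighbours of `v` that
are dominated by `S`. These contain a comb with spine in `S`. A rainbow copy of `F` in its teeth
would complete a star-expansion of `F` rooted at `v`, so every large subset of the teeth that is
spread over them has a linear pure pair. This raises the exponent on the teeth by more than the
passage from `X` to the comb costs, a contradiction.
-/
section Neighbors

variable {V : Type*}

open Classical in
/-- The neighbours of `x` inside the finite set `Y`. -/
noncomputable def neighborsIn (G : SimpleGraph V) (Y : Finset V) (x : V) : Finset V :=
  Y.filter (G.Adj x)

lemma mem_neighborsIn {G : SimpleGraph V} {Y : Finset V} {x y : V} :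
    y ∈ neighborsIn G Y x ↔ y ∈ Y ∧ G.Adj x y := by
  simp [neighborsIn]

lemma neighborsIn_subset (G : SimpleGraph V) (Y : Finset V) (x : V) : neighborsIn G Y x ⊆ Y :=
  fun _ h => (mem_neighborsIn.1 h).1

lemma neighborsIn_mono (G : SimpleGraph V) {Y Z : Finset V} (h : Y ⊆ Z) (x : V) :
    neighborsIn G Y x ⊆ neighborsIn G Z x :=
  fun _ hy => mem_neighborsIn.2 ⟨h (mem_neighborsIn.1 hy).1, (mem_neighborsIn.1 hy).2⟩

lemma card_neighborsIn_mono (G : SimpleGraph V) {Y Z : Finset V} (h : Y ⊆ Z) (x : V) :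
    (neighborsIn G Y x).card ≤ (neighborsIn G Z x).card :=
  Finset.card_le_card (neighborsIn_mono G h x)

lemma sum_card_neighborsIn_comm (G : SimpleGraph V) (A B : Finset V) :
    ∑ a ∈ A, (neighborsIn G B a).card = ∑ b ∈ B, (neighborsIn G A b).card := by
  classical
  simpa [Finset.bipartiteAbove, Finset.bipartiteBelow, neighborsIn, G.adj_comm] using
    Finset.sum_card_bipartiteAbove_eq_sum_card_bipartiteBelow (s := A) (t := B) G.Adj

/-- Every vertex of `A` is adjacent to at most a fraction `1 / E` of the vertices of `B`. -/
def IsSparseTo (G : SimpleGraph V) (E : ℕ) (A B : Finset V) : Prop :=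
  ∀ a ∈ A, E * (neighborsIn G B a).card ≤ B.card

open Classical in
lemma mul_mul_card_filter_le (G : SimpleGraph V) {A B : Finset V} {p s : ℕ}
    (h : ∀ a ∈ A, p * (neighborsIn G B a).card ≤ s) (q t : ℕ) :
    p * (t * (B.filter fun b => t < q * (neighborsIn G A b).card).card) ≤ q * (A.card * s) := by
  set heavy := B.filter fun b => t < q * (neighborsIn G A b).card
  have heavy_le : t * heavy.card ≤ q * ∑ b ∈ B, (neighborsIn G A b).card := by
    rw [mul_comm, ← smul_eq_mul, Finset.mul_sum]
    exact (Finset.card_nsmul_le_sum _ _ _ fun b hb => (Finset.mem_filter.1 hb).2.le).trans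
      (Finset.sum_le_sum_of_subset (Finset.filter_subset _ _))
  calc p * (t * heavy.card) ≤ p * (q * ∑ b ∈ B, (neighborsIn G A b).card) := by gcongr
    _ = q * ∑ a ∈ A, p * (neighborsIn G B a).card := by
      rw [← sum_card_neighborsIn_comm, ← Finset.mul_sum]; ring
    _ ≤ q * (A.card * s) := by
      gcongr
      simpa using Finset.sum_le_sum h

open Classical in
lemma IsSparseTo.two_mul_card_filter_le {G : SimpleGraph V} {A B : Finset V} {P : ℕ}
    (h : IsSparseTo G P A B) :
    2 * (B.filter fun b => 2 * A.card < P * (neighborsIn G A b).card).card ≤ B.card := by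
  rcases (Nat.zero_le (P * A.card)).eq_or_lt with h0 | hpos
  · have hP : ∀ b, P * (neighborsIn G A b).card = 0 := fun b => by
      have := Nat.mul_le_mul_left P (Finset.card_le_card (neighborsIn_subset G A b))
      omega
    simp [hP]
  · have := mul_mul_card_filter_le G h P (2 * A.card)
    exact Nat.le_of_mul_le_mul_left (by linarith) hpos

end Neighbors

section Pigeonhole

lemma exists_le_card_filter_of_cover {V ι : Type*} (A : Finset V) (I : Finset ι) (hI : I.Nonempty)
    (R : ι → V → Prop) [∀ j, DecidablePred (R j)] (hR : ∀ x ∈ A, ∃ j ∈ I, R j x) {k : ℕ}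
    (hA : I.card * k ≤ A.card) : ∃ j ∈ I, k ≤ (A.filter (R j)).card := by
  classical
  have : Nonempty ι := hI.to_type
  choose! f hfI hfR using hR
  obtain ⟨j, hj, hk⟩ := Finset.exists_le_card_fiber_of_mul_le_card_of_maps_to hfI hI hA
  refine ⟨j, hj, hk.trans (Finset.card_le_card fun x hx => ?_)⟩
  obtain ⟨hxA, rfl⟩ := Finset.mem_filter.1 hx
  exact Finset.mem_filter.2 ⟨hxA, hfR x hxA⟩

lemma pairwise_onFun_cons {α : Type*} {h : ℕ} {r : α → α → Prop} [Std.Symm r] {a : α}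
    {f : Fin h → α} (ha : ∀ i, r a (f i)) (hf : Pairwise (Function.onFun r f)) :
    Pairwise (Function.onFun r (Fin.cons a f : Fin (h + 1) → α)) := by
  intro i j hij
  cases i using Fin.cases <;> cases j using Fin.cases
  · exact absurd rfl hij
  · simpa [Function.onFun] using ha _
  · simpa [Function.onFun] using symm (ha _)
  · simpa [Function.onFun] using hf (by simpa using hij)

lemma exists_disjoint_subsets_card_eq {V : Type*} (X : Finset V) (s h : ℕ) (hX : h * s ≤ X.card) :
    ∃ Y : Fin h → Finset V, Pairwise (Function.onFun Disjoint Y) ∧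
      ∀ i, Y i ⊆ X ∧ (Y i).card = s := by
  classical
  induction h generalizing X with
  | zero => exact ⟨Fin.elim0, fun i => i.elim0, fun i => i.elim0⟩
  | succ h ih =>
    rw [Nat.succ_mul] at hX
    obtain ⟨Z, hZ, hZc⟩ := Finset.exists_subset_card_eq (s := X) (n := s) (by omega)
    obtain ⟨Y, hY, hYX⟩ := ih (X \ Z) (by rw [Finset.card_sdiff_of_subset hZ]; omega)
    refine ⟨Fin.cons Z Y, pairwise_onFun_cons
      (fun i => Finset.disjoint_sdiff.mono_right (hYX i).1) hY, Fin.cases ?_ fun i => ?_⟩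
    · simpa using ⟨hZ, hZc⟩
    · simpa using ⟨(hYX i).1.trans Finset.sdiff_subset, (hYX i).2⟩

end Pigeonhole

section Rodl

variable {V : Type*}

/-- The blocks `X i` contain a copy of the graph `H` with the `i`-th vertex in `X i`. -/
def HasTransversalCopy {ι : Type*} (G : SimpleGraph V) (H : SimpleGraph ι) (X : ι → Finset V) :
    Prop :=
  ∃ x : ι → V, (∀ i, x i ∈ X i) ∧ ∀ i j, G.Adj (x i) (x j) ↔ H.Adj i j

lemma HasTransversalCopy.isIndContained {ι : Type*} {G : SimpleGraph V} {H : SimpleGraph ι}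
    {X : ι → Finset V} (h : HasTransversalCopy G H X)
    (hX : Pairwise (Function.onFun Disjoint X)) : H ⊴ G := by
  obtain ⟨x, hx, hadj⟩ := h
  have hinj : Function.Injective x := fun i j hij => by
    by_contra hne
    exact Finset.disjoint_left.1 (hX hne) (hx i) (hij ▸ hx j)
  exact ⟨⟨⟨x, hinj⟩, hadj _ _⟩⟩

/-- A pair of disjoint subsets of `U` of size at least `s`, the first of which is sparse to the
second in `G` or in its complement. -/
def HasSparsePair (G : SimpleGraph V) (E s : ℕ) (U : Finset V) : Prop :=
  ∃ A ⊆ U, ∃ B ⊆ U, Disjoint A B ∧ s ≤ A.card ∧ s ≤ B.card ∧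
    (IsSparseTo G E A B ∨ IsSparseTo Gᶜ E A B)

open Classical in
/-- The vertices of `Y` that relate to `x` in `G` as the vertex `j.succ` relates to `0` in `H`. -/
noncomputable def matchingNeighbors {h : ℕ} (G : SimpleGraph V) (H : SimpleGraph (Fin (h + 1)))
    (j : Fin h) (Y : Finset V) (x : V) : Finset V :=
  neighborsIn (if H.Adj 0 j.succ then G else Gᶜ) Y x

lemma HasTransversalCopy.cons {h : ℕ} {G : SimpleGraph V} {H : SimpleGraph (Fin (h + 1))}
    {X : Fin (h + 1) → Finset V} {x : V} (hx : x ∈ X 0)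
    (hcopy : HasTransversalCopy G (H.comap Fin.succ)
      fun j => matchingNeighbors G H j (X j.succ) x) :
    HasTransversalCopy G H X := by
  obtain ⟨y, hy, hadj⟩ := hcopy
  have hxy : ∀ j, G.Adj x (y j) ↔ H.Adj 0 j.succ := fun j => by
    have := (mem_neighborsIn.1 (hy j)).2
    by_cases hH : H.Adj 0 j.succ
    · simpa [hH] using this
    · simp only [hH, if_false, compl_adj] at this
      simp [hH, this.2]
  refine ⟨Fin.cons x y, Fin.cases hx fun j => neighborsIn_subset _ _ _ (hy j), fun i j => ?_⟩
  cases i using Fin.cases <;> cases j using Fin.cases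
  · simp
  · simpa using hxy _
  · simpa [G.adj_comm, H.adj_comm] using hxy _
  · simpa using hadj _ _

open Classical in
lemma hasSparsePair_of_matchingNeighbors {h E s : ℕ} {G : SimpleGraph V}
    {H : SimpleGraph (Fin (h + 1))} {A Y U : Finset V} {j : Fin h} (hA : A ⊆ U) (hY : Y ⊆ U)
    (hd : Disjoint A Y) (hYs : s ≤ Y.card)
    (hs : s ≤ (A.filter fun x => E * (matchingNeighbors G H j Y x).card < Y.card).card) :
    HasSparsePair G E s U := by
  have hsparse : ∀ x ∈ A.filter fun x => E * (matchingNeighbors G H j Y x).card < Y.card,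
      E * (matchingNeighbors G H j Y x).card ≤ Y.card :=
    fun x hx => (Finset.mem_filter.1 hx).2.le
  refine ⟨_, (Finset.filter_subset _ _).trans hA, Y, hY,
    hd.mono_left (Finset.filter_subset _ _), hs, hYs, ?_⟩
  by_cases hH : H.Adj 0 j.succ
  · exact .inl (by simpa only [IsSparseTo, matchingNeighbors, hH, if_true] using hsparse)
  · exact .inr (by simpa only [IsSparseTo, matchingNeighbors, hH, if_false] using hsparse)

lemma hasTransversalCopy_or_hasSparsePair (G : SimpleGraph V) {E M s h : ℕ} (hE : E ≤ M)
    (hs : 1 ≤ s) (hM : h ≤ M) (H : SimpleGraph (Fin h)) {U : Finset V} (X : Fin h → Finset V)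
    (hXU : ∀ i, X i ⊆ U) (hd : Pairwise (Function.onFun Disjoint X))
    (hX : ∀ i, M ^ h * s ≤ (X i).card) :
    HasTransversalCopy G H X ∨ HasSparsePair G E s U := by
  classical
  induction h with
  | zero => exact .inl ⟨Fin.elim0, fun i => i.elim0, fun i => i.elim0⟩
  | succ h ih =>
    have hX' : ∀ i, M * s ≤ (X i).card := fun i => by
      calc M * s = 1 * (M * s) := (one_mul _).symm
        _ ≤ M ^ h * (M * s) := by gcongr; exact Nat.one_le_pow _ _ (by omega)
        _ ≤ _ := by rw [← mul_assoc, ← pow_succ]; exact hX i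
    let Y : V → Fin h → Finset V := fun x j => matchingNeighbors G H j (X j.succ) x
    by_cases hgood : ∃ x ∈ X 0, ∀ j, (X j.succ).card ≤ E * (Y x j).card
    · obtain ⟨x, hx, hxY⟩ := hgood
      have hYX : ∀ j, Y x j ⊆ X j.succ := fun j => neighborsIn_subset _ _ _
      refine (ih (by omega) (H.comap Fin.succ) (Y x) (fun j => (hYX j).trans (hXU _))
        (fun i j hij => (hd (by simpa using hij)).mono (hYX i) (hYX j)) fun j => ?_).imp_left
          (HasTransversalCopy.cons hx)
      refine Nat.le_of_mul_le_mul_left (c := M) ?_ (by omega)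
      calc M * (M ^ h * s) = M ^ (h + 1) * s := by ring
        _ ≤ E * (Y x j).card := (hX _).trans (hxY j)
        _ ≤ M * (Y x j).card := by gcongr
    · push Not at hgood
      have hne : (Finset.univ : Finset (Fin h)).Nonempty := by
        obtain ⟨x, hx⟩ := Finset.card_pos.1 ((Nat.mul_pos (by omega : 0 < M) hs).trans_le (hX' 0))
        obtain ⟨j, -⟩ := hgood x hx
        exact ⟨j, Finset.mem_univ j⟩
      obtain ⟨j, -, hj⟩ := exists_le_card_filter_of_cover (X 0) Finset.univ hne
        (fun j x => E * (Y x j).card < (X j.succ).card)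
        (fun x hx => (hgood x hx).imp fun j hj => ⟨Finset.mem_univ j, hj⟩) (k := s)
        ((Nat.mul_le_mul_right s (by simp; omega)).trans (hX' 0))
      exact .inr (hasSparsePair_of_matchingNeighbors (hXU 0) (hXU j.succ)
        (hd (Fin.succ_ne_zero j).symm)
        ((Nat.le_mul_of_pos_left s (by omega)).trans (hX' j.succ)) hj)

open Classical in
lemma IsSparseTo.exists_card_eq_right {G : SimpleGraph V} {A B : Finset V} {P w : ℕ}
    (h : IsSparseTo G (2 * P) A B) (hB : 2 * w ≤ B.card) :
    ∃ B₁ ⊆ B, B₁.card = w ∧ IsSparseTo G P B₁ A := by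
  have hheavy := h.two_mul_card_filter_le
  have hsplit := Finset.card_filter_add_card_filter_not (s := B)
    (fun b => 2 * A.card < 2 * P * (neighborsIn G A b).card)
  obtain ⟨B₁, hB₁, hB₁c⟩ := Finset.exists_subset_card_eq (n := w)
    (s := B.filter fun b => ¬ 2 * A.card < 2 * P * (neighborsIn G A b).card) (by omega)
  refine ⟨B₁, hB₁.trans (Finset.filter_subset _ _), hB₁c, fun b hb => ?_⟩
  have := (Finset.mem_filter.1 (hB₁ hb)).2
  linarith

lemma IsSparseTo.exists_card_eq {G : SimpleGraph V} {A B : Finset V} {E w : ℕ}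
    (h : IsSparseTo G (4 * E) A B) (hA : 2 * w ≤ A.card) (hB : 2 * w ≤ B.card) :
    ∃ A₁ ⊆ A, ∃ B₁ ⊆ B, A₁.card = w ∧ B₁.card = w ∧ IsSparseTo G E A₁ B₁ := by
  rw [show 4 * E = 2 * (2 * E) by ring] at h
  obtain ⟨B₁, hB₁, hB₁c, h₁⟩ := h.exists_card_eq_right hB
  obtain ⟨A₁, hA₁, hA₁c, h₂⟩ := h₁.exists_card_eq_right hA
  exact ⟨A₁, hA₁, B₁, hB₁, hA₁c, hB₁c, h₂⟩

lemma exists_isSparseTo_card_eq {h : ℕ} (H : SimpleGraph (Fin h)) (E : ℕ) :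
    ∃ D : ℕ, ∀ {V : Type*} (G : SimpleGraph V), ¬ H ⊴ G →
      ∀ (w : ℕ) (X : Finset V), D * w ≤ X.card →
      ∃ A ⊆ X, ∃ B ⊆ X, Disjoint A B ∧ A.card = w ∧ B.card = w ∧
        (IsSparseTo G E A B ∨ IsSparseTo Gᶜ E A B) := by
  let M := 4 * E + h
  refine ⟨h * (M ^ h * 2), fun {V} G hH w X hX => ?_⟩
  rcases Nat.eq_zero_or_pos w with rfl | hw
  · exact ⟨∅, by simp, ∅, by simp, by simp, rfl, rfl, .inl (by simp [IsSparseTo])⟩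
  obtain ⟨Y, hY, hYX⟩ := exists_disjoint_subsets_card_eq X (M ^ h * (2 * w)) h (by
    rwa [← mul_assoc (M ^ h), ← mul_assoc])
  obtain ⟨A, hA, B, hB, hd, hAc, hBc, hAB⟩ := (hasTransversalCopy_or_hasSparsePair (E := 4 * E) G
    (Nat.le_add_right _ _) (by omega) (Nat.le_add_left _ _) H Y (fun i => (hYX i).1) hY
      fun i => (hYX i).2.ge).resolve_left fun hcopy => hH (hcopy.isIndContained hY)
  rcases hAB with hAB | hAB <;>
    obtain ⟨A₁, hA₁, B₁, hB₁, hA₁c, hB₁c, h₁⟩ := hAB.exists_card_eq hAc hBc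
  · exact ⟨A₁, hA₁.trans hA, B₁, hB₁.trans hB, hd.mono hA₁ hB₁, hA₁c, hB₁c, .inl h₁⟩
  · exact ⟨A₁, hA₁.trans hA, B₁, hB₁.trans hB, hd.mono hA₁ hB₁, hA₁c, hB₁c, .inr h₁⟩

/-- `X` contains `p` disjoint blocks of size `w`, any two of them sparse to each other. -/
def HasSparseBlocks (G : SimpleGraph V) (E w p : ℕ) (X : Finset V) : Prop :=
  ∃ B : Fin p → Finset V, (∀ i, B i ⊆ X ∧ (B i).card = w) ∧
    Pairwise (Function.onFun Disjoint B) ∧ ∀ i j, i ≠ j → IsSparseTo G E (B i) (B j)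

lemma HasSparseBlocks.mono {G : SimpleGraph V} {E w p : ℕ} {X Y : Finset V}
    (h : HasSparseBlocks G E w p X) (hXY : X ⊆ Y) : HasSparseBlocks G E w p Y := by
  obtain ⟨B, hB, hd, hs⟩ := h
  exact ⟨B, fun i => ⟨(hB i).1.trans hXY, (hB i).2⟩, hd, hs⟩

lemma hasSparseBlocks_zero (G : SimpleGraph V) (E w : ℕ) (X : Finset V) :
    HasSparseBlocks G E w 0 X :=
  ⟨Fin.elim0, fun i => i.elim0, fun i => i.elim0, fun i => i.elim0⟩

open Classical in
lemma exists_isSparseTo_blocks {G : SimpleGraph V} {E w p : ℕ} {A B : Finset V}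
    {Y : Fin p → Finset V} (hYA : ∀ i, Y i ⊆ A ∧ (Y i).card = w) (hw : 2 * w ≤ B.card)
    (hs : IsSparseTo G (E * (2 * p + 1)) A B) :
    ∃ Z ⊆ B, Z.card = w ∧ ∀ i, IsSparseTo G E Z (Y i) := by
  let heavy : Fin p → Finset V := fun i => B.filter fun b => w < E * (neighborsIn G (Y i) b).card
  have hheavy : ∀ i, (2 * p + 1) * (heavy i).card ≤ B.card := by
    intro i
    have hcount := mul_mul_card_filter_le G (fun a ha => hs a ((hYA i).1 ha)) E w
    rw [(hYA i).2] at hcount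
    rcases (Nat.zero_le (E * w)).eq_or_lt with h0 | hpos
    · have hsmall : ∀ b, E * (neighborsIn G (Y i) b).card = 0 := fun b => by
        have := Nat.mul_le_mul_left E (Finset.card_le_card (neighborsIn_subset G (Y i) b))
        rw [(hYA i).2] at this
        omega
      simp [heavy, hsmall]
    · refine Nat.le_of_mul_le_mul_left ?_ hpos
      calc E * w * ((2 * p + 1) * (heavy i).card)
          = E * (2 * p + 1) * (w * (heavy i).card) := by ring
        _ ≤ E * w * B.card := by rw [mul_assoc E w]; exact hcount
  have hunion : 2 * (Finset.univ.biUnion heavy).card ≤ B.card := by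
    refine Nat.le_of_mul_le_mul_left (c := 2 * p + 1) ?_ (by omega)
    calc (2 * p + 1) * (2 * (Finset.univ.biUnion heavy).card)
        ≤ 2 * ∑ i, (2 * p + 1) * (heavy i).card := by
          rw [← Finset.mul_sum]
          linarith [Nat.mul_le_mul_left (2 * p + 1)
            (Finset.card_biUnion_le (s := Finset.univ) (t := heavy))]
      _ ≤ 2 * ∑ _i : Fin p, B.card := by gcongr with i; exact hheavy i
      _ ≤ (2 * p + 1) * B.card := by
        simp only [Finset.sum_const, Finset.card_univ, Fintype.card_fin, smul_eq_mul]
        linarith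
  obtain ⟨Z, hZ, hZc⟩ := Finset.exists_subset_card_eq (n := w)
    (s := B \ Finset.univ.biUnion heavy) (by
      have := Finset.le_card_sdiff (Finset.univ.biUnion heavy) B
      omega)
  refine ⟨Z, hZ.trans Finset.sdiff_subset, hZc, fun i z hz => ?_⟩
  obtain ⟨hzB, hzheavy⟩ := Finset.mem_sdiff.1 (hZ hz)
  rw [(hYA i).2]
  by_contra! hlt
  exact hzheavy (Finset.mem_biUnion.2 ⟨i, Finset.mem_univ i, Finset.mem_filter.2 ⟨hzB, hlt⟩⟩)

lemma HasSparseBlocks.succ {G : SimpleGraph V} {E w p D : ℕ} {A B X : Finset V}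
    (hA : A ⊆ X) (hB : B ⊆ X) (hd : Disjoint A B) (hD : 2 ≤ D) (hBc : B.card = D * w)
    (hs : IsSparseTo G (E * D * (2 * p + 1)) A B)
    (h : HasSparseBlocks G E w p A) : HasSparseBlocks G E w (p + 1) X := by
  obtain ⟨Y, hYA, hYd, hYs⟩ := h
  obtain ⟨Z, hZB, hZc, hZY⟩ := exists_isSparseTo_blocks (B := B) (E := E) hYA
    (by rw [hBc]; gcongr) fun a ha => le_trans
      (Nat.mul_le_mul_right _ (Nat.mul_le_mul_right _ (Nat.le_mul_of_pos_right E (by omega))))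
      (hs a ha)
  have hYZ : ∀ i, IsSparseTo G E (Y i) Z := fun i a ha => by
    have hle := card_neighborsIn_mono G hZB a
    refine Nat.le_of_mul_le_mul_left (c := D) ?_ (by omega)
    calc D * (E * (neighborsIn G Z a).card) = E * D * 1 * (neighborsIn G Z a).card := by ring
      _ ≤ E * D * (2 * p + 1) * (neighborsIn G B a).card := by gcongr; omega
      _ ≤ D * Z.card := by rw [hZc, ← hBc]; exact hs a ((hYA i).1 ha)
  refine ⟨Fin.cons Z Y, Fin.cases ⟨hZB.trans hB, hZc⟩ fun i => ⟨(hYA i).1.trans hA, (hYA i).2⟩,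
    pairwise_onFun_cons (fun i => (hd.mono (hYA i).1 hZB).symm) hYd,
    fun i j hij => ?_⟩
  cases i using Fin.cases <;> cases j using Fin.cases
  · exact absurd rfl hij
  · exact hZY _
  · exact hYZ _
  · exact hYs _ _ (by simpa using hij)

/-- As in the Erdős–Szekeres proof of Ramsey's theorem, a sparse pair allows induction on
`p + q`. -/
lemma exists_hasSparseBlocks_or_compl {h : ℕ} (H : SimpleGraph (Fin h)) (E p q : ℕ) :
    ∃ D : ℕ, ∀ {V : Type*} (G : SimpleGraph V), ¬ H ⊴ G →
      ∀ (w : ℕ) (X : Finset V), D * w ≤ X.card →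
      HasSparseBlocks G E w p X ∨ HasSparseBlocks Gᶜ E w q X := by
  induction hn : p + q generalizing p q with
  | zero =>
    obtain rfl : p = 0 := by omega
    exact ⟨0, fun G _ w X _ => .inl (hasSparseBlocks_zero _ _ _ _)⟩
  | succ n ih =>
    rcases p with _ | p
    · exact ⟨0, fun G _ w X _ => .inl (hasSparseBlocks_zero _ _ _ _)⟩
    rcases q with _ | q
    · exact ⟨0, fun G _ w X _ => .inr (hasSparseBlocks_zero _ _ _ _)⟩
    obtain ⟨D₁, h₁⟩ := ih p (q + 1) (by omega)
    obtain ⟨D₂, h₂⟩ := ih (p + 1) q (by omega)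
    let D := D₁ + D₂ + 2
    obtain ⟨D₃, h₃⟩ := exists_isSparseTo_card_eq H (E * D * (2 * (p + q) + 1))
    refine ⟨D₃ * D, fun G hH w X hX => ?_⟩
    obtain ⟨A, hA, B, hB, hd, hAc, hBc, hAB⟩ := h₃ G hH (D * w) X (by rwa [← mul_assoc])
    rcases hAB with hAB | hAB
    · refine (h₁ G hH w A (by rw [hAc]; gcongr; omega)).imp (fun hp => ?_) (·.mono hA)
      refine .succ hA hB hd (by omega : 2 ≤ D) hBc (fun a ha => (?_ : _ ≤ _).trans (hAB a ha)) hp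
      gcongr
      omega
    · refine (h₂ G hH w A (by rw [hAc]; gcongr; omega)).imp (·.mono hA) (fun hq => ?_)
      refine .succ hA hB hd (by omega : 2 ≤ D) hBc (fun a ha => (?_ : _ ≤ _).trans (hAB a ha)) hq
      gcongr
      omega

lemma HasSparseBlocks.exists_sparse {G : SimpleGraph V} {E w : ℕ} {X : Finset V}
    (h : HasSparseBlocks G E w E X) :
    ∃ Y ⊆ X, Y.card = E * w ∧ ∀ x ∈ Y, (neighborsIn G Y x).card ≤ 2 * w := by
  classical
  obtain ⟨B, hB, hd, hs⟩ := h
  refine ⟨Finset.univ.biUnion B, Finset.biUnion_subset.2 fun i _ => (hB i).1, ?_, fun x hx => ?_⟩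
  · rw [Finset.card_biUnion fun _ _ _ _ hij => hd hij]
    simp [(hB _).2]
  obtain ⟨i, -, hi⟩ := Finset.mem_biUnion.1 hx
  have hcover : (neighborsIn G (Finset.univ.biUnion B) x).card
      ≤ ∑ j, (neighborsIn G (B j) x).card := by
    rw [neighborsIn, Finset.filter_biUnion]
    exact Finset.card_biUnion_le
  have hself : (neighborsIn G (B i) x).card ≤ w :=
    (Finset.card_le_card (neighborsIn_subset _ _ _)).trans (hB i).2.le
  have hother : E * ∑ j ∈ Finset.univ.erase i, (neighborsIn G (B j) x).card ≤ E * w := by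
    rw [Finset.mul_sum]
    calc _ ≤ ∑ _ ∈ Finset.univ.erase i, w := Finset.sum_le_sum fun j hj =>
          (hs i j (Finset.ne_of_mem_erase hj).symm x hi).trans (hB j).2.le
      _ = (Finset.univ.erase i).card * w := by simp
      _ ≤ E * w := by gcongr; exact Finset.card_erase_le.trans (by simp)
  rw [← Finset.add_sum_erase _ _ (Finset.mem_univ i)] at hcover
  linarith [Nat.le_of_mul_le_mul_left hother (Fin.pos i)]

theorem exists_sparse_or_sparse_compl {U : Type*} [Finite U] (H : SimpleGraph U) (E : ℕ) :
    ∃ D : ℕ, ∀ {V : Type*} (G : SimpleGraph V), ¬ H ⊴ G →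
      ∀ (w : ℕ) (X : Finset V), D * w ≤ X.card →
      ∃ Y ⊆ X, Y.card = E * w ∧
        ((∀ x ∈ Y, (neighborsIn G Y x).card ≤ 2 * w) ∨
          ∀ x ∈ Y, (neighborsIn Gᶜ Y x).card ≤ 2 * w) := by
  have := Fintype.ofFinite U
  obtain ⟨D, hD⟩ := exists_hasSparseBlocks_or_compl (H.overFin rfl) E E E
  refine ⟨D, fun G hH w X hX => ?_⟩
  have hfree : ¬ H.overFin rfl ⊴ G := fun ⟨f⟩ => hH ⟨f.comp (H.overFinIso rfl).toEmbedding⟩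
  rcases hD G hfree w X hX with h | h <;> obtain ⟨Y, hYX, hYc, hY⟩ := h.exists_sparse
  · exact ⟨Y, hYX, hYc, .inl hY⟩
  · exact ⟨Y, hYX, hYc, .inr hY⟩

end Rodl

section Ramsey

variable {α : Type*} {κ : Type*}

/-- All `r`-element subsets of `T` have the same colour. -/
def IsMonochromatic (f : Finset α → κ) (r : ℕ) (T : Finset α) : Prop :=
  ∃ c, ∀ K ⊆ T, K.card = r → f K = c

lemma IsMonochromatic.mono {f : Finset α → κ} {r : ℕ} {S T : Finset α}
    (hT : IsMonochromatic f r T) (hST : S ⊆ T) : IsMonochromatic f r S :=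
  hT.imp fun _ hc K hK => hc K (hK.trans hST)

variable [LinearOrder α]

/-- The colour of an `(r + 1)`-element subset of `T` only depends on its minimum. -/
def IsMinDetermined (f : Finset α → κ) (r : ℕ) (T : Finset α) : Prop :=
  ∃ g : α → κ, ∀ x ∈ T, ∀ K ⊆ T, (∀ y ∈ K, x < y) → K.card = r → f (insert x K) = g x

lemma IsMinDetermined.insert {f : Finset α → κ} {r : ℕ} {T : Finset α} {x : α}
    (hT : IsMinDetermined f r T) (hxT : ∀ y ∈ T, x < y)
    (hx : IsMonochromatic (fun K => f (insert x K)) r T) : IsMinDetermined f r (insert x T) := by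
  obtain ⟨g, hg⟩ := hT
  obtain ⟨c, hc⟩ := hx
  refine ⟨Function.update g x c, fun y hy K hK hyK hKc => ?_⟩
  have hxy : x ≤ y := (Finset.mem_insert.1 hy).elim ge_of_eq fun h => (hxT y h).le
  have hKT : K ⊆ T := fun z hz =>
    (Finset.mem_insert.1 (hK hz)).resolve_left (hxy.trans_lt (hyK z hz)).ne'
  rcases Finset.mem_insert.1 hy with rfl | hyT
  · rw [Function.update_self]
    exact hc K hKT hKc
  · rw [Function.update_of_ne (hxT y hyT).ne']
    exact hg y hyT K hKT hyK hKc

lemma exists_isMinDetermined {r : ℕ}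
    (ih : ∀ n, ∃ N, ∀ S : Finset α, N ≤ S.card → ∀ f : Finset α → κ,
      ∃ T ⊆ S, T.card = n ∧ IsMonochromatic f r T) (n : ℕ) :
    ∃ N, ∀ S : Finset α, N ≤ S.card → ∀ f : Finset α → κ,
      ∃ T ⊆ S, T.card = n ∧ IsMinDetermined f r T := by
  induction n with
  | zero => exact ⟨0, fun S _ f => ⟨∅, by simp, rfl, fun _ => f ∅, by simp⟩⟩
  | succ n ihn =>
    obtain ⟨N₁, h₁⟩ := ihn
    obtain ⟨N₂, h₂⟩ := ih N₁
    refine ⟨N₂ + 1, fun S hS f => ?_⟩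
    have hne : S.Nonempty := Finset.card_pos.1 (by omega)
    let x := S.min' hne
    obtain ⟨S', hS', hS'c, hx⟩ := h₂ (S.erase x) (by
      rw [Finset.card_erase_of_mem (S.min'_mem hne)]; omega) (fun K => f (insert x K))
    obtain ⟨T, hT, hTc, hTf⟩ := h₁ S' hS'c.ge f
    have hxT : ∀ y ∈ T, x < y := fun y hy => Finset.min'_lt_of_mem_erase_min' _ _ (hS' (hT hy))
    refine ⟨insert x T, Finset.insert_subset (S.min'_mem hne)
      ((hT.trans hS').trans (Finset.erase_subset _ _)), ?_, hTf.insert hxT (hx.mono hT)⟩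
    rw [Finset.card_insert_of_notMem fun h => (hxT x h).false, hTc]

lemma IsMinDetermined.exists_isMonochromatic [Fintype κ] {f : Finset α → κ} {r n : ℕ}
    {T : Finset α} (hT : IsMinDetermined f r T) (hn : Fintype.card κ * n ≤ T.card) :
    ∃ U ⊆ T, U.card = n ∧ IsMonochromatic f (r + 1) U := by
  classical
  obtain ⟨g, hg⟩ := hT
  obtain ⟨c, -, hc⟩ := Finset.exists_le_card_fiber_of_mul_le_card_of_maps_to
    (fun x _ => Finset.mem_univ (g x)) ⟨f ∅, Finset.mem_univ _⟩ hn
  obtain ⟨U, hU, hUc⟩ := Finset.exists_subset_card_eq hc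
  have hUT : U ⊆ T := hU.trans (Finset.filter_subset _ _)
  refine ⟨U, hUT, hUc, c, fun K hK hKc => ?_⟩
  have hne : K.Nonempty := Finset.card_pos.1 (by omega)
  have hmin := K.min'_mem hne
  have hfK := hg _ (hUT (hK hmin)) (K.erase (K.min' hne))
    ((Finset.erase_subset _ _).trans (hK.trans hUT))
    (fun y => Finset.min'_lt_of_mem_erase_min' _ _)
    (by rw [Finset.card_erase_of_mem hmin]; omega)
  rw [Finset.insert_erase hmin] at hfK
  exact hfK.trans (Finset.mem_filter.1 (hU (hK hmin))).2

theorem exists_isMonochromatic (α κ : Type*) [LinearOrder α] [Finite κ] (r n : ℕ) :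
    ∃ N, ∀ S : Finset α, N ≤ S.card → ∀ f : Finset α → κ,
      ∃ T ⊆ S, T.card = n ∧ IsMonochromatic f r T := by
  induction r generalizing n with
  | zero =>
    refine ⟨n, fun S hS f => ?_⟩
    obtain ⟨T, hT, hTc⟩ := Finset.exists_subset_card_eq hS
    exact ⟨T, hT, hTc, f ∅, fun K _ hK => by rw [Finset.card_eq_zero.1 hK]⟩
  | succ r ih =>
    have := Fintype.ofFinite κ
    obtain ⟨N, hN⟩ := exists_isMinDetermined ih (Fintype.card κ * n)
    refine ⟨N, fun S hS f => ?_⟩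
    obtain ⟨T, hT, hTc, hTf⟩ := hN S hS f
    obtain ⟨U, hU, hUc, hUf⟩ := hTf.exists_isMonochromatic hTc.ge
    exact ⟨U, hU.trans hT, hUc, hUf⟩

theorem exists_isMonochromatic_of_lt (α : Type*) [LinearOrder α] (r : ℕ) (κ : ℕ → Type*)
    [∀ t, Finite (κ t)] (n : ℕ) :
    ∃ N, ∀ S : Finset α, N ≤ S.card → ∀ f : (t : ℕ) → Finset α → κ t,
      ∃ T ⊆ S, T.card = n ∧ ∀ t < r, IsMonochromatic (f t) t T := by
  induction r with
  | zero =>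
    refine ⟨n, fun S hS f => ?_⟩
    obtain ⟨T, hT, hTc⟩ := Finset.exists_subset_card_eq hS
    exact ⟨T, hT, hTc, by simp⟩
  | succ r ih =>
    obtain ⟨N, hN⟩ := ih
    obtain ⟨N', hN'⟩ := exists_isMonochromatic α (κ r) r N
    refine ⟨N', fun S hS f => ?_⟩
    obtain ⟨T, hT, hTc, hTf⟩ := hN' S hS (f r)
    obtain ⟨U, hU, hUc, hUf⟩ := hN T hTc.ge f
    refine ⟨U, hU.trans hT, hUc, fun t ht => ?_⟩
    rcases Nat.lt_succ_iff_lt_or_eq.1 ht with ht | rfl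
    · exact hUf t ht
    · exact hTf.mono hU

end Ramsey

section Transfer

variable {V ι : Type*}

/-- `X'` shrinks the blocks `X j` with `j ∈ Γ` to sets of size at least `s`. -/
def IsShrinking (Γ : Finset ι) (s : ℕ) (X' X : ι → Finset V) : Prop :=
  ∀ j ∈ Γ, X' j ⊆ X j ∧ s ≤ (X' j).card

lemma exists_isShrinking_stable {P : Type*} [Finite P] {Φ : (ι → Finset V) → Set P} {Γ : Finset ι}
    (hΦ : ∀ X' X, (∀ j ∈ Γ, X' j ⊆ X j) → Φ X' ⊆ Φ X) (C s₀ : ℕ) {n : ℕ} (X : ι → Finset V)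
    (hn : (Φ X).ncard ≤ n) (hX : ∀ j ∈ Γ, (C + 1) ^ (n + 1) * s₀ ≤ (X j).card) :
    ∃ X' s, s₀ ≤ s ∧ IsShrinking Γ (C * s) X' X ∧
      ∀ X'', IsShrinking Γ s X'' X' → Φ X' ⊆ Φ X'' := by
  induction n generalizing X with
  | zero =>
    refine ⟨X, s₀, le_rfl, fun j hj => ⟨subset_rfl, ?_⟩, fun X'' _ => ?_⟩
    · exact (Nat.mul_le_mul_right _ (by simp)).trans (hX j hj)
    · simp [(Set.ncard_eq_zero (Set.toFinite _)).1 (Nat.le_zero.1 hn)]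
  | succ n ih =>
    let s := (C + 1) ^ (n + 1) * s₀
    by_cases hstable : ∀ X'', IsShrinking Γ s X'' X → Φ X ⊆ Φ X''
    · refine ⟨X, s, Nat.le_mul_of_pos_left _ (by positivity),
        fun j hj => ⟨subset_rfl, le_trans ?_ (hX j hj)⟩, hstable⟩
      calc C * s ≤ (C + 1) * s := by gcongr; omega
        _ = (C + 1) ^ (n + 1 + 1) * s₀ := by ring
    · push Not at hstable
      obtain ⟨X'', hX'', hne⟩ := hstable
      have hlt : (Φ X'').ncard < (Φ X).ncard :=
        Set.ncard_lt_ncard ⟨hΦ _ _ fun j hj => (hX'' j hj).1, hne⟩ (Set.toFinite _)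
      obtain ⟨X', s', hs', hX', hstable⟩ := ih X'' (by omega) fun j hj => (hX'' j hj).2
      exact ⟨X', s', hs', fun j hj => ⟨(hX' j hj).1.trans (hX'' j hj).1, (hX' j hj).2⟩, hstable⟩

/-- The patterns on the colours `K`: the graphs on `Fin t` with a copy in which the `a`-th vertex
lies in the block of the `a`-th smallest colour in `K`; there are none unless `K.card = t`. -/
def patterns (G : SimpleGraph V) (X : ℕ → Finset V) (t : ℕ) (K : Finset ℕ) :
    Set (SimpleGraph (Fin t)) :=
  {H | ∃ h : K.card = t, HasTransversalCopy G H fun a => X (K.orderEmbOfFin h a)}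

lemma patterns_mono (G : SimpleGraph V) {X Y : ℕ → Finset V} {K : Finset ℕ} (t : ℕ)
    (h : ∀ j ∈ K, X j ⊆ Y j) : patterns G X t K ⊆ patterns G Y t K := by
  rintro H ⟨hK, x, hx, hadj⟩
  exact ⟨hK, x, fun a => h _ (Finset.orderEmbOfFin_mem _ _ _) (hx a), hadj⟩

lemma exists_stable_patterns (τ C : ℕ) (Γ : Finset ℕ) : ∃ C' : ℕ, ∀ {V : Type*}
    (G : SimpleGraph V) (X : ℕ → Finset V) (s₀ : ℕ), (∀ j ∈ Γ, C' * s₀ ≤ (X j).card) →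
    ∃ X' s, s₀ ≤ s ∧ IsShrinking Γ (C * s) X' X ∧
      ∀ X'', IsShrinking Γ s X'' X' →
        ∀ t ≤ τ, ∀ K ⊆ Γ, patterns G X' t K ⊆ patterns G X'' t K := by
  let P := Γ.powerset × (Σ t : Fin (τ + 1), SimpleGraph (Fin t))
  refine ⟨(C + 1) ^ (Nat.card P + 1), fun {V} G X s₀ hX => ?_⟩
  let Φ : (ℕ → Finset V) → Set P := fun X => {p | p.2.2 ∈ patterns G X p.2.1 p.1}
  have hΦ : ∀ X' X : ℕ → Finset V, (∀ j ∈ Γ, X' j ⊆ X j) → Φ X' ⊆ Φ X := fun _ _ h p hp =>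
    patterns_mono G _ (fun j hj => h j (Finset.mem_powerset.1 p.1.2 hj)) hp
  obtain ⟨X', s, hs, hX', hstable⟩ :=
    exists_isShrinking_stable hΦ C s₀ X (Set.ncard_le_card _) hX
  refine ⟨X', s, hs, hX', fun X'' hX'' t ht K hK H hH => ?_⟩
  let p : P := ⟨⟨K, Finset.mem_powerset.2 hK⟩, ⟨⟨t, by omega⟩, H⟩⟩
  exact hstable X'' hX'' (show p ∈ Φ X' from hH)

/-- A rainbow set: its vertices have distinct colours from `Γ` and lie in the blocks of their
colours. -/
def IsRainbow (χ : V → ℕ) (X : ℕ → Finset V) (Γ : Finset ℕ) (S : Finset V) : Prop :=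
  (∀ x ∈ S, χ x ∈ Γ ∧ x ∈ X (χ x)) ∧ Set.InjOn χ S

/-- Every small rainbow set reappears, in the same order of colours, on every other set of colours
of the same size, even when the blocks are replaced by subsets of size at least `s`. -/
def HasTransfer (G : SimpleGraph V) (χ : V → ℕ) (X : ℕ → Finset V) (Γ : Finset ℕ) (τ s : ℕ) :
    Prop :=
  ∀ S, IsRainbow χ X Γ S → S.card ≤ τ → ∀ K ⊆ Γ, K.card = S.card →
    ∃ σ : ℕ → ℕ, (∀ x ∈ S, σ (χ x) ∈ K) ∧
      (∀ x ∈ S, ∀ y ∈ S, χ x < χ y → σ (χ x) < σ (χ y)) ∧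
      ∀ X', IsShrinking K s X' X →
        ∃ φ : V → V, (∀ x ∈ S, φ x ∈ X' (σ (χ x))) ∧
          ∀ x ∈ S, ∀ y ∈ S, (G.Adj (φ x) (φ y) ↔ G.Adj x y)

lemma exists_strictMono_enumeration {χ : V → ℕ} {S : Finset V} (hS : Set.InjOn χ S) :
    ∃ z : Fin S.card → V, (∀ x, x ∈ S ↔ ∃ a, z a = x) ∧ StrictMono (χ ∘ z) := by
  have hcard : (S.image χ).card = S.card := Finset.card_image_of_injOn hS
  let e := (S.image χ).orderEmbOfFin hcard
  have hmem : ∀ a, ∃ x ∈ S, χ x = e a := fun a =>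
    Finset.mem_image.1 (Finset.orderEmbOfFin_mem _ hcard a)
  choose z hzS hze using hmem
  refine ⟨z, fun x => ⟨fun hx => ?_, ?_⟩, by 
    rw [show χ ∘ z = e from funext hze]
    exact e.strictMono⟩
  · obtain ⟨a, ha⟩ : χ x ∈ Set.range e := by
      rw [Finset.range_orderEmbOfFin]
      exact Finset.mem_image_of_mem _ hx
    exact ⟨a, hS (hzS a) hx ((hze a).trans ha)⟩
  · rintro ⟨a, rfl⟩
    exact hzS a

lemma hasTransfer_of_patterns {G : SimpleGraph V} {χ : V → ℕ} {X : ℕ → Finset V} {Γ : Finset ℕ}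
    {τ s : ℕ} (hs : ∀ j ∈ Γ, s ≤ (X j).card)
    (hpat : ∀ X', IsShrinking Γ s X' X → ∀ t ≤ τ, ∀ K ⊆ Γ, ∀ K' ⊆ Γ, K.card = t → K'.card = t →
      patterns G X t K ⊆ patterns G X' t K') :
    HasTransfer G χ X Γ τ s := by
  classical
  intro S hS hSτ K hK hKc
  obtain ⟨z, hzS, hz⟩ := exists_strictMono_enumeration hS.2
  have hS₀ : (S.image χ).card = S.card := Finset.card_image_of_injOn hS.2
  have hχz : χ ∘ z = (S.image χ).orderEmbOfFin hS₀ :=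
    Finset.orderEmbOfFin_unique hS₀ (fun a => Finset.mem_image_of_mem _ ((hzS _).2 ⟨a, rfl⟩)) hz
  let e := K.orderEmbOfFin hKc
  let σ : ℕ → ℕ := Function.extend (χ ∘ z) e id
  have hσ : ∀ a, σ (χ (z a)) = e a := hz.injective.extend_apply e id
  refine ⟨σ, fun x hx => ?_, fun x hx y hy hxy => ?_, fun X' hX' => ?_⟩
  · obtain ⟨a, rfl⟩ := (hzS x).1 hx
    rw [hσ]
    exact Finset.orderEmbOfFin_mem _ _ _
  · obtain ⟨a, rfl⟩ := (hzS x).1 hx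
    obtain ⟨b, rfl⟩ := (hzS y).1 hy
    rw [hσ, hσ]
    exact e.strictMono (hz.lt_iff_lt.1 hxy)
  · have hcopy : G.comap z ∈ patterns G X S.card (S.image χ) :=
      ⟨hS₀, z, fun a => by rw [← hχz]; exact (hS.1 _ ((hzS _).2 ⟨a, rfl⟩)).2, fun _ _ => Iff.rfl⟩
    have hX'' : IsShrinking Γ s (fun j => if j ∈ K then X' j else X j) X := fun j hj => by
      by_cases hjK : j ∈ K
      · simpa [hjK] using hX' j hjK
      · simpa [hjK] using hs j hj
    obtain ⟨_, y, hy, hadj⟩ := hpat _ hX'' _ hSτ _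
      (Finset.image_subset_iff.2 fun x hx => (hS.1 x hx).1) K hK hS₀ hKc hcopy
    have hφ := (hz.injective.of_comp).extend_apply y id
    refine ⟨Function.extend z y id, fun x hx => ?_, fun x hx x' hx' => ?_⟩
    · obtain ⟨a, rfl⟩ := (hzS x).1 hx
      rw [hφ, hσ]
      simpa [e, Finset.orderEmbOfFin_mem K hKc a] using hy a
    · obtain ⟨a, rfl⟩ := (hzS x).1 hx
      obtain ⟨b, rfl⟩ := (hzS x').1 hx'
      rw [hφ, hφ]
      exact hadj a b

theorem exists_hasTransfer (τ g C : ℕ) : ∃ N C' : ℕ, ∀ {V : Type*} (G : SimpleGraph V) (χ : V → ℕ)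
    (X : ℕ → Finset V) (s₀ : ℕ), (∀ j < N, C' * s₀ ≤ (X j).card) →
    ∃ Γ : Finset ℕ, (∀ j ∈ Γ, j < N) ∧ Γ.card = g ∧ ∃ X' s, s₀ ≤ s ∧
      IsShrinking Γ (C * s) X' X ∧ HasTransfer G χ X' Γ τ s := by
  classical
  obtain ⟨N, hN⟩ := exists_isMonochromatic_of_lt ℕ (τ + 1) (fun t => Set (SimpleGraph (Fin t))) g
  obtain ⟨C', hC'⟩ := exists_stable_patterns τ (C + 1) (Finset.range N)
  refine ⟨N, C', fun {V} G χ X s₀ hX => ?_⟩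
  obtain ⟨X', s, hs, hX', hstable⟩ := hC' G X s₀ fun j hj => hX j (Finset.mem_range.1 hj)
  obtain ⟨Γ, hΓ, hΓc, hmono⟩ := hN (Finset.range N) (by simp) fun t K => patterns G X' t K
  have hlarge : ∀ j ∈ Finset.range N, C * s ≤ (X' j).card ∧ s ≤ (X' j).card := fun j hj => by
    have := (hX' j hj).2
    constructor <;> nlinarith
  refine ⟨Γ, fun j hj => Finset.mem_range.1 (hΓ hj), hΓc, X', s, hs,
    fun j hj => ⟨(hX' j (hΓ hj)).1, (hlarge j (hΓ hj)).1⟩,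
    hasTransfer_of_patterns (fun j hj => (hlarge j (hΓ hj)).2) ?_⟩
  intro X'' hX'' t ht K hK K' hK' hKc hK'c
  obtain ⟨c, hc⟩ := hmono t (by omega)
  let Y : ℕ → Finset V := fun j => if j ∈ Γ then X'' j else X' j
  have hY : IsShrinking (Finset.range N) s Y X' := fun j hj => by
    by_cases hjΓ : j ∈ Γ
    · simpa [Y, hjΓ] using hX'' j hjΓ
    · simpa [Y, hjΓ] using (hlarge j hj).2
  calc patterns G X' t K = patterns G X' t K' := (hc K hK hKc).trans (hc K' hK' hK'c).symm
    _ ⊆ patterns G Y t K' := hstable Y hY t ht K' (hK'.trans hΓ)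
    _ ⊆ patterns G X'' t K' := patterns_mono G t fun j hj => by simp [Y, hK' hj]

end Transfer

section Copy

variable {U V W : Type*}

/-- `f` embeds the subgraph of `F` induced on `A` into the subgraph of `G` induced on `S`. The
values of `f` outside `A` are irrelevant, so that copies can be extended one vertex at a time. -/
structure IsCopyOn (F : SimpleGraph W) (G : SimpleGraph V) (A : Finset W) (S : Finset V)
    (f : W → V) : Prop where
  mapsTo : Set.MapsTo f A S
  injOn : Set.InjOn f A
  adj_iff : ∀ u ∈ A, ∀ v ∈ A, (G.Adj (f u) (f v) ↔ F.Adj u v)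

variable {F : SimpleGraph W} {G : SimpleGraph V} {A : Finset W} {S T : Finset V} {f : W → V}

lemma isCopyOn_empty (f : W → V) : IsCopyOn F G ∅ S f :=
  ⟨by simp [Set.MapsTo], by simp, by simp⟩

lemma IsCopyOn.mono (hf : IsCopyOn F G A S f) {B : Finset W} (hB : B ⊆ A) (hS : S ⊆ T) :
    IsCopyOn F G B T f :=
  ⟨fun _ hu => hS (hf.mapsTo (hB hu)), hf.injOn.mono hB,
    fun u hu v hv => hf.adj_iff u (hB hu) v (hB hv)⟩

lemma IsCopyOn.comp {G' : SimpleGraph U} {S' : Finset U} {φ : V → U} (hφ : IsCopyOn G G' S S' φ)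
    (hf : IsCopyOn F G A S f) : IsCopyOn F G' A S' (φ ∘ f) :=
  ⟨hφ.mapsTo.comp hf.mapsTo, hφ.injOn.comp hf.injOn hf.mapsTo, fun u hu v hv =>
    (hφ.adj_iff _ (hf.mapsTo hu) _ (hf.mapsTo hv)).trans (hf.adj_iff u hu v hv)⟩

open Classical in
lemma IsCopyOn.insert (hf : IsCopyOn F G A S f) {w : W} (hw : w ∉ A) {y : V} (hy : y ∉ S)
    (hadj : ∀ u ∈ A, (G.Adj (f u) y ↔ F.Adj u w)) :
    IsCopyOn F G (insert w A) (insert y S) (Function.update f w y) := by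
  have hne : ∀ u ∈ A, u ≠ w := fun u hu h => hw (h ▸ hu)
  have hmaps : ∀ u ∈ A, f u ∈ S := fun u hu => hf.mapsTo hu
  refine ⟨fun u hu => ?_, ?_, ?_⟩
  · rcases Finset.mem_insert.1 hu with rfl | hu
    · simp
    · simp [hne u hu, hmaps u hu]
  · rw [Finset.coe_insert, Set.injOn_insert (by simpa using hw)]
    have heq : Set.EqOn (Function.update f w y) f A := fun u hu => by simp [hne u hu]
    refine ⟨hf.injOn.congr heq.symm, ?_⟩
    rw [heq.image_eq, Function.update_self]
    rintro ⟨u, hu, rfl⟩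
    exact hy (hmaps u hu)
  · intro u hu v hv
    rcases Finset.mem_insert.1 hu with hu' | hu <;> rcases Finset.mem_insert.1 hv with hv' | hv
    · simp [hu', hv']
    · simpa [hu', hne v hv, G.adj_comm y, F.adj_comm _ v] using hadj v hv
    · simpa [hv', hne u hu] using hadj u hu
    · simpa [hne u hu, hne v hv] using hf.adj_iff u hu v hv

end Copy

section Forest

variable {W : Type*} {F : SimpleGraph W}

lemma exists_forall_adj_eq_of_isAcyclic [Finite W] [Nonempty W] (hF : F.IsAcyclic) :
    ∃ w, ∀ u v, F.Adj w u → F.Adj w v → u = v := by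
  have ⟨_, w, p, hp, hmax⟩ := Walk.exists_isPath_forall_isPath_length_le_length F
  have eq_penultimate : ∀ u, F.Adj w u → u = p.penultimate := fun u hwu => by
    apply hF.eq_penultimate_of_adj_end hp hwu
    have : ¬(p.concat hwu).IsPath := by grind [Walk.length_concat]
    grind [hp.concat]
  exact ⟨w, fun u v hu hv => (eq_penultimate u hu).trans (eq_penultimate v hv).symm⟩

open Classical in
theorem forest_induction (hF : F.IsAcyclic) {motive : Finset W → Prop} (empty : motive ∅)
    (isolated : ∀ A w, w ∉ A → (∀ u ∈ A, ¬ F.Adj u w) → motive A → motive (insert w A))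
    (leaf : ∀ A w, ∀ v ∈ A, w ∉ A → (∀ u ∈ A, (F.Adj u w ↔ u = v)) → motive A →
      motive (insert w A)) (A : Finset W) : motive A := by
  induction hn : A.card generalizing A with
  | zero => rwa [Finset.card_eq_zero.1 hn]
  | succ n ih =>
    have : Nonempty A := (Finset.card_pos.1 (by omega)).to_subtype
    obtain ⟨⟨w, hwA⟩, hw⟩ := exists_forall_adj_eq_of_isAcyclic (hF.induce (A : Set W))
    have hA := ih (A.erase w) (by rw [Finset.card_erase_of_mem hwA]; omega)
    have unique_neighbor : ∀ u ∈ A.erase w, ∀ v ∈ A.erase w, F.Adj u w → F.Adj v w → u = v :=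
      fun u hu v hv huw hvw => congrArg Subtype.val <|
        hw ⟨u, Finset.mem_of_mem_erase hu⟩ ⟨v, Finset.mem_of_mem_erase hv⟩ huw.symm hvw.symm
    rw [← Finset.insert_erase hwA]
    by_cases hv : ∃ v ∈ A.erase w, F.Adj v w
    · obtain ⟨v, hv, hvw⟩ := hv
      exact leaf _ w v hv (Finset.notMem_erase w A)
        (fun u hu => ⟨fun huw => unique_neighbor u hu v hv huw hvw, fun h => h ▸ hvw⟩) hA
    · push Not at hv
      exact isolated _ w (Finset.notMem_erase w A) hv hA

end Forest

section Binomial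

variable {V : Type*}

open Classical in
/-- `S` induces a binomial tree of order `k` rooted at `r`: two binomial trees of order `k - 1`
joined by an edge between their roots, either of which may serve as the new root. -/
def IsBinomial (G : SimpleGraph V) : ℕ → Finset V → V → Prop
  | 0, S, r => S = {r}
  | k + 1, S, r => ∃ S₁ S₂ r', IsBinomial G k S₁ r ∧ IsBinomial G k S₂ r' ∧ Disjoint S₁ S₂ ∧
      S = S₁ ∪ S₂ ∧ ∀ x ∈ S₁, ∀ y ∈ S₂, (G.Adj x y ↔ x = r ∧ y = r')

variable {G : SimpleGraph V} {k : ℕ} {S S₁ S₂ : Finset V} {r r' : V}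

lemma IsBinomial.root_mem (h : IsBinomial G k S r) : r ∈ S := by
  classical
  induction k generalizing S r with
  | zero => simp [show S = {r} from h]
  | succ k ih =>
    obtain ⟨S₁, S₂, r', h₁, -, -, rfl, -⟩ := h
    exact Finset.mem_union_left _ (ih h₁)

lemma IsBinomial.card_eq (h : IsBinomial G k S r) : S.card = 2 ^ k := by
  classical
  induction k generalizing S r with
  | zero => simp [show S = {r} from h]
  | succ k ih =>
    obtain ⟨S₁, S₂, r', h₁, h₂, hdisj, rfl, -⟩ := h
    rw [Finset.card_union_of_disjoint hdisj, ih h₁, ih h₂]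
    ring

open Classical in
lemma IsBinomial.join (h₁ : IsBinomial G k S₁ r) (h₂ : IsBinomial G k S₂ r')
    (hdisj : Disjoint S₁ S₂) (hadj : ∀ x ∈ S₁, ∀ y ∈ S₂, (G.Adj x y ↔ x = r ∧ y = r')) :
    IsBinomial G (k + 1) (S₁ ∪ S₂) r ∧ IsBinomial G (k + 1) (S₁ ∪ S₂) r' := by
  refine ⟨⟨S₁, S₂, r', h₁, h₂, hdisj, rfl, hadj⟩,
    ⟨S₂, S₁, r, h₂, h₁, hdisj.symm, Finset.union_comm _ _, fun x hx y hy => ?_⟩⟩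
  rw [G.adj_comm, hadj y hy x hx, and_comm]

lemma IsBinomial.exists_subset {j : ℕ} (h : IsBinomial G k S r) (hj : j ≤ k) :
    ∃ T ⊆ S, IsBinomial G j T r := by
  classical
  induction hj generalizing S r with
  | refl => exact ⟨S, subset_rfl, h⟩
  | step _ ih =>
    obtain ⟨S₁, S₂, -, h₁, -, -, rfl, -⟩ := h
    obtain ⟨T, hT, hb⟩ := ih h₁
    exact ⟨T, hT.trans Finset.subset_union_left, hb⟩

open Classical in
lemma IsBinomial.image {U : Type*} {G' : SimpleGraph U} {T : Finset U} {φ : V → U}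
    (h : IsBinomial G k S r) (hφ : IsCopyOn G G' S T φ) :
    IsBinomial G' k (S.image φ) (φ r) := by
  induction k generalizing S r with
  | zero =>
    obtain rfl : S = {r} := h
    exact Finset.image_singleton φ r
  | succ k ih =>
    obtain ⟨S₁, S₂, r', h₁, h₂, hdisj, rfl, hadj⟩ := h
    have hS₁ := Finset.subset_union_left (s₁ := S₁) (s₂ := S₂)
    have hS₂ := Finset.subset_union_right (s₁ := S₁) (s₂ := S₂)
    refine ⟨S₁.image φ, S₂.image φ, φ r', ih h₁ (hφ.mono hS₁ subset_rfl),
      ih h₂ (hφ.mono hS₂ subset_rfl), ?_, Finset.image_union _ _, ?_⟩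
    · rw [← Finset.disjoint_coe, Finset.coe_image, Finset.coe_image]
      exact (Finset.disjoint_coe.2 hdisj).image hφ.injOn (by exact_mod_cast hS₁)
        (by exact_mod_cast hS₂)
    · simp only [Finset.forall_mem_image]
      intro x hx y hy
      rw [hφ.adj_iff x (hS₁ hx) y (hS₂ hy), hadj x hx y hy,
        hφ.injOn.eq_iff (hS₁ hx) (hS₁ h₁.root_mem), hφ.injOn.eq_iff (hS₂ hy) (hS₂ h₂.root_mem)]

/-- `S₀ ⊆ S`, and each vertex of `S₀` has a neighbour in `S \ S₀` that is adjacent to no other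
vertex of `S₀`. -/
def IsCorona (G : SimpleGraph V) (S₀ S : Finset V) : Prop :=
  S₀ ⊆ S ∧ ∀ x ∈ S₀, ∃ y ∈ S, y ∉ S₀ ∧ ∀ z ∈ S₀, (G.Adj z y ↔ z = x)

open Classical in
lemma IsCorona.union {A₁ A₂ : Finset V} (h₁ : IsCorona G A₁ S₁) (h₂ : IsCorona G A₂ S₂)
    (hr : r ∈ A₁) (hr' : r' ∈ A₂) (hdisj : Disjoint S₁ S₂)
    (hadj : ∀ x ∈ S₁, ∀ y ∈ S₂, (G.Adj x y ↔ x = r ∧ y = r')) :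
    IsCorona G (A₁ ∪ A₂) (S₁ ∪ S₂) := by
  refine ⟨Finset.union_subset_union h₁.1 h₂.1, fun x hx => ?_⟩
  have hnot := Finset.disjoint_left.1 hdisj
  rcases Finset.mem_union.1 hx with hx | hx
  · obtain ⟨y, hy, hyA, hzy⟩ := h₁.2 x hx
    refine ⟨y, Finset.mem_union_left _ hy, by grind [h₂.1], fun z hz => ?_⟩
    rcases Finset.mem_union.1 hz with hz | hz
    · exact hzy z hz
    · have := hadj y hy z (h₂.1 hz)
      grind [h₁.1, h₂.1, G.adj_comm]
  · obtain ⟨y, hy, hyA, hzy⟩ := h₂.2 x hx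
    refine ⟨y, Finset.mem_union_right _ hy, by grind [h₁.1], fun z hz => ?_⟩
    rcases Finset.mem_union.1 hz with hz | hz
    · have := hadj z (h₁.1 hz) y hy
      grind [h₁.1, h₂.1]
    · exact hzy z hz

lemma IsBinomial.exists_isCorona (h : IsBinomial G (k + 1) S r) :
    ∃ S₀, IsCorona G S₀ S ∧ IsBinomial G k S₀ r := by
  classical
  induction k generalizing S r with
  | zero =>
    obtain ⟨_, _, r', rfl, rfl, hdisj, rfl, hadj⟩ := h
    have hrr' : r' ≠ r := by simpa [eq_comm] using hdisj
    have : G.Adj r r' := by simpa using hadj r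
    exact ⟨{r}, ⟨Finset.subset_union_left, by simp [hrr', this]⟩, rfl⟩
  | succ k ih =>
    obtain ⟨S₁, S₂, r', h₁, h₂, hdisj, rfl, hadj⟩ := h
    obtain ⟨A₁, hA₁, hb₁⟩ := ih h₁
    obtain ⟨A₂, hA₂, hb₂⟩ := ih h₂
    exact ⟨A₁ ∪ A₂, hA₁.union hA₂ hb₁.root_mem hb₂.root_mem hdisj hadj,
      A₁, A₂, r', hb₁, hb₂, hdisj.mono hA₁.1 hA₂.1, rfl,
      fun x hx y hy => hadj x (hA₁.1 hx) y (hA₂.1 hy)⟩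

lemma IsBinomial.exists_mem_ne (h : IsBinomial G (k + 1) S r) : ∃ x ∈ S, x ≠ r :=
  Finset.exists_mem_ne (by rw [h.card_eq]; exact Nat.one_lt_two_pow k.succ_ne_zero) r

theorem IsBinomial.exists_isCopyOn {W : Type*} {F : SimpleGraph W} (hF : F.IsAcyclic)
    (A : Finset W) (h : IsBinomial G (A.card + 1) S r) : ∃ f, IsCopyOn F G A S f := by
  classical
  induction A using forest_induction hF generalizing S r with
  | empty => exact ⟨fun _ => r, isCopyOn_empty _⟩
  | isolated A w hw hadj ih =>
    rw [Finset.card_insert_of_notMem hw] at h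
    obtain ⟨S₁, S₂, r', h₁, h₂, hdisj, rfl, hS⟩ := h
    obtain ⟨f, hf⟩ := ih h₁
    obtain ⟨y, hy, hyr'⟩ := h₂.exists_mem_ne
    refine ⟨_, (hf.insert hw (Finset.disjoint_right.1 hdisj hy) fun u hu => ?_).mono subset_rfl
      (Finset.insert_subset (Finset.mem_union_right _ hy) Finset.subset_union_left)⟩
    simp [hS _ (hf.mapsTo hu) y hy, hyr', hadj u hu]
  | leaf A w v hv hw hadj ih =>
    rw [Finset.card_insert_of_notMem hw] at h
    obtain ⟨S₀, ⟨hS₀, hleaf⟩, h₀⟩ := h.exists_isCorona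
    obtain ⟨f, hf⟩ := ih h₀
    obtain ⟨y, hy, hyS₀, hfy⟩ := hleaf _ (hf.mapsTo hv)
    refine ⟨_, (hf.insert hw hyS₀ fun u hu => ?_).mono subset_rfl (Finset.insert_subset hy hS₀)⟩
    rw [hfy _ (hf.mapsTo hu), hf.injOn.eq_iff hu hv, hadj u hu]

end Binomial

section Rainbow

variable {V : Type*} {G : SimpleGraph V} {χ : V → ℕ} {X X' : ℕ → Finset V} {Γ K : Finset ℕ}
  {S T : Finset V}

lemma IsRainbow.mono (h : IsRainbow χ X' K S) (hT : T ⊆ S) (hK : K ⊆ Γ)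
    (hX : ∀ j ∈ K, X' j ⊆ X j) : IsRainbow χ X Γ T :=
  ⟨fun x hx => ⟨hK (h.1 x (hT hx)).1, hX _ (h.1 x (hT hx)).1 (h.1 x (hT hx)).2⟩,
    h.2.mono (by exact_mod_cast hT)⟩

lemma isRainbow_singleton {i : ℕ} (hi : i ∈ Γ) {x : V} (hx : x ∈ X i) (hχ : χ x = i) :
    IsRainbow χ X Γ {x} := by
  subst hχ
  simpa [IsRainbow] using ⟨hi, hx⟩

open Classical in
lemma IsRainbow.insert (h : IsRainbow χ X Γ S) {j : ℕ} (hj : j ∈ Γ) {y : V} (hy : y ∈ X j)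
    (hχ : χ y = j) (hS : ∀ x ∈ S, χ x ≠ j) : IsRainbow χ X Γ (insert y S) := by
  subst hχ
  have hyS : y ∉ (S : Set V) := fun hyS => hS y hyS rfl
  refine ⟨(Finset.forall_mem_insert _ _ _).2 ⟨⟨hj, hy⟩, h.1⟩, ?_⟩
  rw [Finset.coe_insert, Set.injOn_insert hyS]
  refine ⟨h.2, ?_⟩
  rintro ⟨x, hx, hxy⟩
  exact hS x hx hxy

/-- An induced copy of `F` whose vertices have distinct colours from `Γ` and lie in the blocks of
their colours. -/
def HasRainbowCopy {W : Type*} (G : SimpleGraph V) (χ : V → ℕ) (X : ℕ → Finset V) (Γ : Finset ℕ)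
    (F : SimpleGraph W) : Prop :=
  ∃ f : F ↪g G, (∀ w, χ (f w) ∈ Γ ∧ f w ∈ X (χ (f w))) ∧ Function.Injective (χ ∘ f)

lemma IsRainbow.hasRainbowCopy {W : Type*} [Fintype W] {F : SimpleGraph W} {f : W → V}
    (hS : IsRainbow χ X Γ S) (hf : IsCopyOn F G Finset.univ S f) : HasRainbowCopy G χ X Γ F := by
  have hfS : ∀ w, f w ∈ S := fun w => hf.mapsTo (Finset.mem_univ w)
  have hinj : Function.Injective f := Set.injOn_univ.1 (by simpa using hf.injOn)
  exact ⟨⟨⟨f, hinj⟩, hf.adj_iff _ (Finset.mem_univ _) _ (Finset.mem_univ _)⟩,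
    fun w => hS.1 _ (hfS w), fun u v huv => hinj (hS.2 (hfS u) (hfS v) huv)⟩

open Classical in
lemma HasTransfer.exists_isRainbow {τ s : ℕ} (ht : HasTransfer G χ X Γ τ s)
    (hcol : ∀ j ∈ Γ, ∀ x ∈ X j, χ x = j) (hS : IsRainbow χ X Γ S) (hSτ : S.card ≤ τ) (hK : K ⊆ Γ)
    (hKS : K.card = S.card) :
    ∃ σ : ℕ → ℕ, (∀ x ∈ S, σ (χ x) ∈ K) ∧ StrictMonoOn σ (χ '' S) ∧
      ∀ X', IsShrinking K s X' X → ∃ φ : V → V, IsCopyOn G G S (S.image φ) φ ∧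
        IsRainbow χ X' K (S.image φ) ∧ ∀ x ∈ S, χ (φ x) = σ (χ x) := by
  obtain ⟨σ, hσK, hσ, hcopy⟩ := ht S hS hSτ K hK hKS
  have hmono : StrictMonoOn σ (χ '' S) := by
    rintro _ ⟨x, hx, rfl⟩ _ ⟨y, hy, rfl⟩ hxy
    exact hσ x hx y hy hxy
  refine ⟨σ, hσK, hmono, fun X' hX' => ?_⟩
  obtain ⟨φ, hφX, hφ⟩ := hcopy X' hX'
  have hχφ : ∀ x ∈ S, χ (φ x) = σ (χ x) := fun x hx =>
    hcol _ (hK (hσK x hx)) _ ((hX' _ (hσK x hx)).1 (hφX x hx))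
  have hinj : Set.InjOn (χ ∘ φ) S := fun x hx y hy hxy => by
    rw [Function.comp_apply, Function.comp_apply, hχφ x hx, hχφ y hy] at hxy
    exact hS.2 hx hy (hmono.injOn (Set.mem_image_of_mem _ hx) (Set.mem_image_of_mem _ hy) hxy)
  refine ⟨φ, ⟨fun x hx => Finset.mem_image_of_mem φ hx, Set.InjOn.of_comp hinj, hφ⟩,
    ⟨?_, ?_⟩, hχφ⟩
  · rw [Finset.forall_mem_image]
    intro x hx
    rw [hχφ x hx]
    exact ⟨hσK x hx, hφX x hx⟩
  · rw [Finset.coe_image]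
    exact hinj.image_of_comp

end Rainbow

section Domination

variable {V : Type*} {G : SimpleGraph V}

open Classical in
/-- The vertices of `A` with a neighbour in `S`. -/
noncomputable def neighborsOf (G : SimpleGraph V) (A S : Finset V) : Finset V :=
  A.filter fun x => ∃ y ∈ S, G.Adj x y

lemma mem_neighborsOf {A S : Finset V} {x : V} :
    x ∈ neighborsOf G A S ↔ x ∈ A ∧ ∃ y ∈ S, G.Adj x y := by
  simp [neighborsOf]

open Classical in
lemma card_neighborsOf_insert (G : SimpleGraph V) (A S : Finset V) (y : V) :
    (neighborsOf G A (insert y S)).card =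
      (neighborsOf G A S).card + (neighborsIn G (A \ neighborsOf G A S) y).card := by
  have hunion : neighborsOf G A (insert y S) =
      neighborsOf G A S ∪ neighborsIn G (A \ neighborsOf G A S) y := by
    ext x
    simp only [mem_neighborsOf, Finset.mem_insert, exists_eq_or_imp, Finset.mem_union,
      mem_neighborsIn, Finset.mem_sdiff, G.adj_comm y x]
    by_cases h : ∃ z ∈ S, G.Adj x z <;> simp [h]
  rw [hunion, Finset.card_union_of_disjoint]
  exact Finset.disjoint_sdiff.mono_right (neighborsIn_subset _ _ _)

variable {A Y : Finset V} {ι : Type*} {P : Finset ι} {U : ι → Finset V} {m C₀ : ℕ}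

lemma exists_sum_card_neighborsIn_lt (hm : 1 ≤ m)
    (hA : ∀ x ∈ A, m ≤ C₀ * (neighborsIn G Y x).card)
    (hU : ∀ u ∈ P, ∀ x ∈ U u, (neighborsIn G Y x).card ≤ m)
    (hcard : C₀ * ∑ u ∈ P, (U u).card < A.card) :
    ∃ y ∈ Y, ∑ u ∈ P, (neighborsIn G (U u) y).card < (neighborsIn G A y).card := by
  by_contra! hle
  refine hcard.not_ge (Nat.le_of_mul_le_mul_right ?_ hm)
  calc A.card * m = ∑ _x ∈ A, m := by simp
    _ ≤ ∑ x ∈ A, C₀ * (neighborsIn G Y x).card := Finset.sum_le_sum hA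
    _ = C₀ * ∑ y ∈ Y, (neighborsIn G A y).card := by
      rw [← Finset.mul_sum, sum_card_neighborsIn_comm]
    _ ≤ C₀ * ∑ y ∈ Y, ∑ u ∈ P, (neighborsIn G (U u) y).card := by
      gcongr with y hy
      exact hle y hy
    _ = C₀ * ∑ u ∈ P, ∑ x ∈ U u, (neighborsIn G Y x).card := by
      rw [Finset.sum_comm]
      simp only [sum_card_neighborsIn_comm G Y]
    _ ≤ C₀ * ∑ u ∈ P, ∑ _x ∈ U u, m := by
      gcongr with u hu x hx
      exact hU u hu x hx
    _ = C₀ * (∑ u ∈ P, (U u).card) * m := by simp [Finset.sum_mul, mul_assoc]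

open Classical in
lemma exists_unbalanced_dominator {s e : ℕ} (hm : 1 ≤ m)
    (hA : ∀ x ∈ A, m ≤ C₀ * (neighborsIn G Y x).card)
    (hU : ∀ u ∈ P, ∀ x ∈ U u, (neighborsIn G Y x).card ≤ m)
    (hcard : C₀ * ∑ u ∈ P, (U u).card + s < A.card)
    (hY : ∀ y ∈ Y, (neighborsIn G A y).card ≤ e) :
    ∃ S ⊆ Y, s ≤ (neighborsOf G A S).card ∧ (neighborsOf G A S).card ≤ s + e ∧
      ∑ u ∈ P, (neighborsOf G (U u) S).card ≤ (neighborsOf G A S).card := by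
  let candidates := Y.powerset.filter fun S => (neighborsOf G A S).card ≤ s + e ∧
    ∑ u ∈ P, (neighborsOf G (U u) S).card ≤ (neighborsOf G A S).card
  have hne : candidates.Nonempty := ⟨∅, Finset.mem_filter.2 (by simp [neighborsOf])⟩
  obtain ⟨S, hS, hmax⟩ :=
    Finset.exists_max_image candidates (fun S => (neighborsOf G A S).card) hne
  simp only [candidates, Finset.mem_filter, Finset.mem_powerset] at hS hmax
  obtain ⟨hSY, hSe, hSU⟩ := hS
  refine ⟨S, hSY, ?_, hSe, hSU⟩
  by_contra! hlt
  have hrest : C₀ * ∑ u ∈ P, (U u).card < (A \ neighborsOf G A S).card := by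
    have := Finset.le_card_sdiff (neighborsOf G A S) A
    omega
  obtain ⟨y, hy, hyU⟩ := exists_sum_card_neighborsIn_lt hm
    (fun x hx => hA x (Finset.mem_sdiff.1 hx).1) hU hrest
  have hye : (neighborsIn G (A \ neighborsOf G A S) y).card ≤ e :=
    (card_neighborsIn_mono G Finset.sdiff_subset y).trans (hY y hy)
  have hinsert := card_neighborsOf_insert G A S y
  have hinsertU : ∑ u ∈ P, (neighborsOf G (U u) (insert y S)).card ≤
      ∑ u ∈ P, (neighborsOf G (U u) S).card + ∑ u ∈ P, (neighborsIn G (U u) y).card := by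
    rw [← Finset.sum_add_distrib]
    gcongr with u
    rw [card_neighborsOf_insert]
    gcongr
    exact neighborsIn_mono G Finset.sdiff_subset y
  have := hmax (insert y S) ⟨Finset.insert_subset hy hSY, by omega, by omega⟩
  omega

end Domination

section Gadget

variable {V : Type*} {G : SimpleGraph V} {χ : V → ℕ} {X : ℕ → Finset V} {Γ : Finset ℕ}

/-- Blocks of distinct colours with bounded degrees into each other and no large anticomplete
pairs between different blocks. -/
structure Coherent (G : SimpleGraph V) (χ : V → ℕ) (X : ℕ → Finset V) (Γ : Finset ℕ) (e : ℕ) :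
    Prop where
  color : ∀ j ∈ Γ, ∀ x ∈ X j, χ x = j
  degree : ∀ i ∈ Γ, ∀ x ∈ X i, ∀ j ∈ Γ, (neighborsIn G (X j) x).card ≤ e
  edge : ∀ i ∈ Γ, ∀ j ∈ Γ, i ≠ j → ∀ A ⊆ X i, ∀ B ⊆ X j, e ≤ A.card → e ≤ B.card →
    ∃ a ∈ A, ∃ b ∈ B, G.Adj a b

open Classical in
/-- At least `τ` blocks, in each of which many vertices have at least `m / C₀` neighbours and few
have more than `m` neighbours in a common subset `Y` of another block. -/
def Gadget (G : SimpleGraph V) (X : ℕ → Finset V) (Γ : Finset ℕ) (τ s K L C₀ : ℕ) : Prop :=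
  ∃ J ⊆ Γ, τ ≤ J.card ∧ ∃ j ∈ Γ, j ∉ J ∧ ∃ Y ⊆ X j, ∃ m, 1 ≤ m ∧ ∀ i ∈ J,
    K * s ≤ ((X i).filter fun x => m ≤ C₀ * (neighborsIn G Y x).card).card ∧
    ((X i).filter fun x => m < (neighborsIn G Y x).card).card ≤ L * s

variable {τ s K L C₀ e : ℕ}

open Classical in
lemma exists_separating_shrinking {P : Finset ℕ} {i₀ : ℕ} (hi₀ : i₀ ∈ P) (hP : P.card ≤ τ)
    (hs : 1 ≤ s) (hes : e ≤ s) (hK : 3 * C₀ * τ + 2 ≤ K)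
    (hX : ∀ i ∈ P, (L + 3) * s ≤ (X i).card) {Y : Finset V} {m : ℕ} (hm : 1 ≤ m)
    (hYe : ∀ y ∈ Y, (neighborsIn G (X i₀) y).card ≤ e)
    (hlarge : K * s ≤ ((X i₀).filter fun x => m ≤ C₀ * (neighborsIn G Y x).card).card)
    (hsmall : ∀ i ∈ P, ((X i).filter fun x => m < (neighborsIn G Y x).card).card ≤ L * s) :
    ∃ X' D, D ⊆ Y ∧ IsShrinking P s X' X ∧ (∀ x ∈ X' i₀, ∃ y ∈ D, G.Adj x y) ∧
      ∀ u ∈ P, u ≠ i₀ → ∀ x ∈ X' u, ∀ y ∈ D, ¬ G.Adj x y := by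
  have hU : ∀ u ∈ P, ∃ U ⊆ (X u).filter fun x => ¬ m < (neighborsIn G Y x).card,
      U.card = 3 * s := fun u hu => by
    apply Finset.exists_subset_card_eq
    have := Finset.card_filter_add_card_filter_not (s := X u) fun x => m < (neighborsIn G Y x).card
    linarith [hX u hu, hsmall u hu]
  choose! U hUX hUs using hU
  set A := (X i₀).filter fun x => m ≤ C₀ * (neighborsIn G Y x).card
  have hUA : C₀ * ∑ u ∈ P, (U u).card + s < A.card := by
    calc C₀ * ∑ u ∈ P, (U u).card + s = C₀ * (P.card * (3 * s)) + s := by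
          rw [Finset.sum_const_nat hUs]
      _ ≤ C₀ * (τ * (3 * s)) + s := by gcongr
      _ < (3 * C₀ * τ + 2) * s := by linarith
      _ ≤ K * s := by gcongr
      _ ≤ A.card := hlarge
  obtain ⟨D, hDY, hsD, hDe, hDU⟩ := exists_unbalanced_dominator (s := s) hm
    (fun x hx => (Finset.mem_filter.1 hx).2)
    (fun u hu x hx => not_lt.1 (Finset.mem_filter.1 (hUX u hu hx)).2) hUA
    (fun y hy => (card_neighborsIn_mono G (Finset.filter_subset _ _) y).trans (hYe y hy))
  refine ⟨fun u => if u = i₀ then neighborsOf G A D else U u \ neighborsOf G (U u) D, D, hDY,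
    fun u hu => ?_, fun x hx => ?_, fun u _ hne x hx y hy hxy => ?_⟩
  · by_cases h : u = i₀
    · subst h
      simp only [if_true]
      exact ⟨fun x hx => Finset.filter_subset _ _ (mem_neighborsOf.1 hx).1, hsD⟩
    · simp only [h, if_false]
      have hle := Finset.single_le_sum (f := fun u => (neighborsOf G (U u) D).card)
        (fun _ _ => Nat.zero_le _) hu
      have := Finset.le_card_sdiff (neighborsOf G (U u) D) (U u)
      exact ⟨Finset.sdiff_subset.trans ((hUX u hu).trans (Finset.filter_subset _ _)),
        by grind⟩
  · simp only [if_true] at hx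
    exact (mem_neighborsOf.1 hx).2
  · simp only [hne, if_false, Finset.mem_sdiff] at hx
    exact hx.2 (mem_neighborsOf.2 ⟨hx.1, y, hy, hxy⟩)

open Classical in
lemma Gadget.exists_leaf (hg : Gadget G X Γ τ s K L C₀) (hc : Coherent G χ X Γ e)
    (ht : HasTransfer G χ X Γ τ s) (hs : 1 ≤ s) (hes : e ≤ s) (hK : 3 * C₀ * τ + 2 ≤ K)
    (hX : ∀ i ∈ Γ, (L + 3) * s ≤ (X i).card) {S : Finset V} (hS : IsRainbow χ X Γ S)
    (hSτ : S.card ≤ τ) {v : V} (hv : v ∈ S) :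
    ∃ φ y, IsCopyOn G G S (S.image φ) φ ∧ y ∉ S.image φ ∧
      IsRainbow χ X Γ (insert y (S.image φ)) ∧ ∀ x ∈ S, (G.Adj (φ x) y ↔ x = v) := by
  obtain ⟨J, hJ, hJc, j, hj, hjJ, Y, hY, m, hm, hgd⟩ := hg
  obtain ⟨P, hPJ, hPc⟩ := Finset.exists_subset_card_eq (hSτ.trans hJc)
  have hPΓ := hPJ.trans hJ
  obtain ⟨σ, hσP, -, hcopy⟩ := ht.exists_isRainbow hc.color hS hSτ hPΓ hPc
  obtain ⟨X', D, hDY, hX', hdom, hundom⟩ := exists_separating_shrinking (hσP v hv)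
    (hPc.trans_le hSτ) hs hes hK (fun i hi => hX i (hPΓ hi)) hm
    (fun y hy => hc.degree j hj y (hY hy) _ (hPΓ (hσP v hv))) (hgd _ (hPJ (hσP v hv))).1
    fun i hi => (hgd i (hPJ hi)).2
  obtain ⟨φ, hφ, hφR, hχφ⟩ := hcopy X' hX'
  have hφX' : ∀ x ∈ S, χ (φ x) ∈ P ∧ φ x ∈ X' (χ (φ x)) := fun x hx => hφR.1 _ (hφ.mapsTo hx)
  obtain ⟨y, hyD, hvy⟩ := hdom (φ v) (hχφ v hv ▸ (hφX' v hv).2)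
  have hyj := hY (hDY hyD)
  have hχy := hc.color j hj y hyj
  have hχne : ∀ z ∈ S.image φ, χ z ≠ j := fun z hz h => hjJ (hPJ (h ▸ (hφR.1 z hz).1))
  refine ⟨φ, y, hφ, fun hy => hχne y hy hχy,
    (hφR.mono subset_rfl hPΓ fun i hi => (hX' i hi).1).insert hj hyj hχy hχne,
    fun x hx => ⟨fun hxy => ?_, fun h => h ▸ hvy⟩⟩
  by_contra hne
  refine hundom _ (hφX' x hx).1 (fun h => hne ?_) _ (hφX' x hx).2 y hyD hxy
  exact hφ.injOn hx hv (hφR.2 (hφ.mapsTo hx) (hφ.mapsTo hv) (h.trans (hχφ v hv).symm))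

open Classical in
lemma card_insert_image_le {α β : Type*} (S : Finset α) (φ : α → β) (y : β) :
    (insert y (S.image φ)).card ≤ S.card + 1 :=
  (Finset.card_insert_le _ _).trans (Nat.add_le_add_right Finset.card_image_le 1)

open Classical in
theorem Gadget.hasRainbowCopy {W : Type*} [Fintype W] {F : SimpleGraph W} (hF : F.IsAcyclic)
    (hg : Gadget G X Γ τ s K L C₀) (hc : Coherent G χ X Γ e) (ht : HasTransfer G χ X Γ τ s)
    (hs : 1 ≤ s) (hes : e ≤ s) (hK : 3 * C₀ * τ + 2 ≤ K)
    (hX : ∀ i ∈ Γ, (L + 3) * s ≤ (X i).card) (hΓ : Γ.Nonempty)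
    (hτ : 2 * Fintype.card W + 1 ≤ τ) : HasRainbowCopy G χ X Γ F := by
  -- An isolated vertex is obtained by adding a leaf at a new leaf of an arbitrary vertex.
  suffices h : ∀ A : Finset W, ∃ S f, S.Nonempty ∧ S.card ≤ 2 * A.card + 1 ∧ IsRainbow χ X Γ S ∧
      IsCopyOn F G A S f by
    obtain ⟨S, f, -, -, hS, hf⟩ := h Finset.univ
    exact hS.hasRainbowCopy hf
  intro A
  have hAW : A.card ≤ Fintype.card W := Finset.card_le_univ A
  induction A using forest_induction hF with
  | empty =>
    obtain ⟨i, hi⟩ := hΓ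
    obtain ⟨x, hx⟩ := Finset.card_pos.1 (lt_of_lt_of_le (by positivity) (hX i hi))
    exact ⟨{x}, fun _ => x, by simp, by simp, isRainbow_singleton hi hx (hc.color i hi x hx),
      isCopyOn_empty _⟩
  | isolated A w hw hadj ih =>
    have hA := Finset.card_insert_of_notMem hw
    obtain ⟨S, f, ⟨v, hv⟩, hSA, hS, hf⟩ := ih (by omega)
    obtain ⟨φ, y, hφ, hy, hS', -⟩ :=
      hg.exists_leaf hc ht hs hes hK hX hS (by omega) hv
    have hS'c := card_insert_image_le S φ y
    obtain ⟨ψ, z, hψ, hz, hS'', hψz⟩ :=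
      hg.exists_leaf hc ht hs hes hK hX hS' (by omega) (Finset.mem_insert_self y _)
    have hS''c := card_insert_image_le (insert y (S.image φ)) ψ z
    have hφ' := hφ.mono subset_rfl (Finset.subset_insert y _)
    refine ⟨_, _, Finset.insert_nonempty _ _, by omega, hS'',
      ((hψ.comp hφ').comp hf).insert hw hz fun u hu => ?_⟩
    have hφu := hφ.mapsTo (hf.mapsTo hu)
    simp only [Function.comp_apply, hadj u hu, iff_false]
    rw [hψz _ (Finset.mem_insert_of_mem hφu)]
    exact fun h => hy (h ▸ hφu)
  | leaf A w v hv hw hadj ih =>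
    have hA := Finset.card_insert_of_notMem hw
    obtain ⟨S, f, -, hSA, hS, hf⟩ := ih (by omega)
    obtain ⟨φ, y, hφ, hy, hS', hφy⟩ :=
      hg.exists_leaf hc ht hs hes hK hX hS (by omega) (hf.mapsTo hv)
    have hS'c := card_insert_image_le S φ y
    refine ⟨_, _, Finset.insert_nonempty _ _, by omega, hS',
      (hφ.comp hf).insert hw hy fun u hu => ?_⟩
    rw [Function.comp_apply, hφy _ (hf.mapsTo hu), hf.injOn.eq_iff hu hv, hadj u hu]

end Gadget

section Run

variable {V : Type*}

open Classical in
/-- The largest positive threshold `m` reached by at least `k` of the values of `M` on `A`. -/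
def IsLevel (A : Finset V) (M : V → ℕ) (k m : ℕ) : Prop :=
  1 ≤ m ∧ k ≤ (A.filter fun x => m ≤ M x).card ∧ (A.filter fun x => m < M x).card < k

open Classical in
lemma exists_isLevel {A : Finset V} {M : V → ℕ} {e k : ℕ} (hM : ∀ x ∈ A, M x ≤ e) (hk : 1 ≤ k)
    (hA : k ≤ (A.filter fun x => 1 ≤ M x).card) : ∃ m, IsLevel A M k m := by
  by_contra! hlevel
  have hall : ∀ m ≥ 1, k ≤ (A.filter fun x => m ≤ M x).card := by
    intro m hm
    induction m, hm using Nat.le_induction with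
    | base => exact hA
    | succ m hm ih =>
      by_contra! hlt
      exact hlevel m ⟨hm, ih, hlt⟩
  obtain ⟨x, hx⟩ := Finset.card_pos.1 (hk.trans (hall (e + 1) (by omega)))
  obtain ⟨hxA, hxe⟩ := Finset.mem_filter.1 hx
  have := hM x hxA
  omega

/-- The largest degree of `x` into one of the sets `Y j` with `j ∈ I`. -/
noncomputable def maxDegreeTo (G : SimpleGraph V) (I : Finset ℕ) (Y : ℕ → Finset V) (x : V) : ℕ :=
  I.sup fun j => (neighborsIn G (Y j) x).card

variable {G : SimpleGraph V} {χ : V → ℕ} {X Y : ℕ → Finset V} {Γ J I : Finset ℕ}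

lemma card_neighborsIn_le_maxDegreeTo (x : V) {j : ℕ} (hj : j ∈ I) :
    (neighborsIn G (Y j) x).card ≤ maxDegreeTo G I Y x :=
  Finset.le_sup (f := fun j => (neighborsIn G (Y j) x).card) hj

lemma exists_maxDegreeTo_eq (hI : I.Nonempty) (x : V) :
    ∃ j ∈ I, maxDegreeTo G I Y x = (neighborsIn G (Y j) x).card :=
  Finset.exists_mem_eq_sup I hI _

/-- The vertex `y` is adjacent to the root and to no other vertex of a tile, and the tile sends no
edges to the sets `Y j` with `j ∈ I`. Here a tile is a vertex set with a root satisfying `P`. -/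
def IsAttached (G : SimpleGraph V) (P : Finset V → V → Prop) (I : Finset ℕ) (Y : ℕ → Finset V)
    (y : V) : Prop :=
  ∃ S r, P S r ∧ r ∈ S ∧ (∀ x ∈ S, (G.Adj x y ↔ x = r)) ∧
    ∀ j ∈ I, ∀ x ∈ S, ∀ z ∈ Y j, ¬ G.Adj x z

lemma IsAttached.mono {P : Finset V → V → Prop} {Y' : ℕ → Finset V} {y : V}
    (h : IsAttached G P I Y y) (hY : ∀ j ∈ I, Y' j ⊆ Y j) : IsAttached G P I Y' y := by
  obtain ⟨S, r, hP, hr, hadj, hanti⟩ := h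
  exact ⟨S, r, hP, hr, hadj, fun j hj x hx z hz => hanti j hj x hx z (hY j hj hz)⟩

/-- Tiles can be found with the root in any `s` vertices of the block `i` and the other vertices in
any `s` vertices of each block in `K`. -/
def HasTiles (P : Finset V → V → Prop) (X : ℕ → Finset V) (s i : ℕ) (K : Finset ℕ) : Prop :=
  ∀ A ⊆ X i, s ≤ A.card → ∀ Z, IsShrinking K s Z X →
    ∃ S r, P S r ∧ r ∈ S ∧ r ∈ A ∧ ∀ x ∈ S, x ≠ r → ∃ u ∈ K, x ∈ Z u

/-- A stage of the run: a set `Z` of attached vertices in the blocks of `I`, and the parts `Y j` of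
these blocks that are not yet seen by a tile. -/
structure RunState (G : SimpleGraph V) (χ : V → ℕ) (X : ℕ → Finset V) (J I : Finset ℕ)
    (Q : ℕ → ℕ → Finset V → V → Prop) (Y : ℕ → Finset V) (Z : Finset V) : Prop where
  subset : ∀ j ∈ I, Y j ⊆ X j
  attached : ∀ y ∈ Z, χ y ∈ I ∧ y ∈ X (χ y) ∧ ∃ i ∈ J, IsAttached G (Q i (χ y)) I Y y
  card_le : ∀ j ∈ I, (X j).card ≤ (Y j).card + 4 * Z.card

variable {Q Q₁ Q₂ : ℕ → ℕ → Finset V → V → Prop} {Z : Finset V}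

lemma RunState.notMem (h : RunState G χ X J I Q Y Z) {y : V} (hy : y ∈ Z) {j : ℕ} (hj : j ∈ I) :
    y ∉ Y j := by
  obtain ⟨-, -, i, -, S, r, -, hr, hadj, hanti⟩ := h.attached y hy
  exact fun hyj => hanti j hj r hr y hyj ((hadj r hr).2 rfl)

open Classical in
/-- The part of `Y j` that the tile `S` does not see. -/
noncomputable def unseen (G : SimpleGraph V) (Y : ℕ → Finset V) (S : Finset V) (j : ℕ) : Finset V :=
  Y j \ neighborsOf G (Y j) S

lemma not_adj_of_mem_unseen {S : Finset V} {j : ℕ} {x z : V} (hx : x ∈ S)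
    (hz : z ∈ unseen G Y S j) : ¬ G.Adj x z := by
  classical
  obtain ⟨hzY, hzS⟩ := Finset.mem_sdiff.1 hz
  exact fun hxz => hzS (mem_neighborsOf.2 ⟨hzY, x, hx, hxz.symm⟩)

lemma card_neighborsOf_le_sum (G : SimpleGraph V) (A S : Finset V) :
    (neighborsOf G A S).card ≤ ∑ x ∈ S, (neighborsIn G A x).card := by
  classical
  refine (Finset.card_le_card fun z hz => ?_).trans Finset.card_biUnion_le
  obtain ⟨hzA, x, hx, hzx⟩ := mem_neighborsOf.1 hz
  exact Finset.mem_biUnion.2 ⟨x, hx, mem_neighborsIn.2 ⟨hzA, hzx.symm⟩⟩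

open Classical in
lemma card_le_card_unseen_add {S : Finset V} {r : V} (hr : r ∈ S) (k : ℕ) :
    (Y k).card ≤ (unseen G Y S k).card + (neighborsOf G (Y k) (S.erase r)).card +
      (neighborsIn G (Y k) r).card := by
  have hsplit : (neighborsOf G (Y k) S).card ≤
      (neighborsOf G (Y k) (S.erase r)).card + (neighborsIn G (Y k) r).card := by
    rw [← Finset.insert_erase hr, card_neighborsOf_insert, Finset.erase_insert_eq_erase,
      Finset.erase_eq_of_notMem (Finset.notMem_erase r S)]
    exact Nat.add_le_add_left (card_neighborsIn_mono G Finset.sdiff_subset r) _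
  have hunseen : (Y k).card ≤ (unseen G Y S k).card + (neighborsOf G (Y k) S).card :=
    Nat.sub_le_iff_le_add.1 (Finset.le_card_sdiff _ _)
  omega

open Classical in
lemma RunState.extend (h : RunState G χ X J I Q Y Z) {i j : ℕ} (hi : i ∈ J) (hj : j ∈ I)
    (hcol : ∀ y ∈ X j, χ y = j) {S : Finset V} {r : V} (hQ : Q i j S r) (hr : r ∈ S)
    (hrj : maxDegreeTo G I Y r = (neighborsIn G (Y j) r).card) (hpos : 1 ≤ maxDegreeTo G I Y r)
    (hsum : 4 * ∑ x ∈ S.erase r, maxDegreeTo G I Y x ≤ maxDegreeTo G I Y r) :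
    ∃ Y' Z', RunState G χ X J I Q Y' Z' ∧ Z.card < Z'.card ∧
      Z'.card ≤ Z.card + maxDegreeTo G I Y r := by
  have hseen : ∀ k ∈ I, 4 * (neighborsOf G (Y k) (S.erase r)).card ≤ maxDegreeTo G I Y r :=
    fun k hk => hsum.trans' <| Nat.mul_le_mul_left 4 <| (card_neighborsOf_le_sum G _ _).trans <|
      Finset.sum_le_sum fun x _ => card_neighborsIn_le_maxDegreeTo x hk
  obtain ⟨new, hnew⟩ : ∃ new, new = neighborsIn G (Y j) r \ neighborsOf G (Y j) (S.erase r) :=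
    ⟨_, rfl⟩
  have hnewY : ∀ y ∈ new, y ∈ Y j := fun y hy =>
    (mem_neighborsIn.1 (Finset.mem_sdiff.1 (hnew ▸ hy)).1).1
  have hcard : maxDegreeTo G I Y r ≤ 2 * new.card := by
    have := Finset.le_card_sdiff (neighborsOf G (Y j) (S.erase r)) (neighborsIn G (Y j) r)
    rw [← hnew] at this
    have := hseen j hj
    omega
  have hcard_le : new.card ≤ maxDegreeTo G I Y r :=
    hrj ▸ hnew ▸ Finset.card_le_card Finset.sdiff_subset
  have hadj : ∀ y ∈ new, ∀ x ∈ S, (G.Adj x y ↔ x = r) := by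
    intro y hy x hx
    obtain ⟨hyr, hyS⟩ := Finset.mem_sdiff.1 (hnew ▸ hy)
    refine ⟨fun hxy => ?_, fun h => h ▸ (mem_neighborsIn.1 hyr).2⟩
    by_contra hne
    exact hyS (mem_neighborsOf.2 ⟨hnewY y hy, x, Finset.mem_erase.2 ⟨hne, hx⟩, hxy.symm⟩)
  have hunion : (Z ∪ new).card = Z.card + new.card :=
    Finset.card_union_of_disjoint <| Finset.disjoint_left.2 fun y hy hy' =>
      h.notMem hy hj (hnewY y hy')
  refine ⟨unseen G Y S, Z ∪ new, ⟨fun k hk => Finset.sdiff_subset.trans (h.subset k hk),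
    fun y hy => ?_, fun k hk => ?_⟩, by omega, by omega⟩
  · rcases Finset.mem_union.1 hy with hy | hy
    · obtain ⟨hyI, hyX, i', hi', hatt⟩ := h.attached y hy
      exact ⟨hyI, hyX, i', hi', hatt.mono fun k _ => Finset.sdiff_subset⟩
    · have hyX := h.subset j hj (hnewY y hy)
      obtain rfl := hcol y hyX
      exact ⟨hj, hyX, i, hi, S, r, hQ, hr, hadj y hy,
        fun k _ x hx z hz => not_adj_of_mem_unseen hx hz⟩
  · have := card_le_card_unseen_add (G := G) (Y := Y) hr k
    have := card_neighborsIn_le_maxDegreeTo (G := G) (Y := Y) r hk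
    have := h.card_le k hk
    have := hseen k hk
    omega

/-- Coherent blocks together with tiles of two kinds: those satisfying `Q₁ i j` have their root in
the block `i ∈ J` and can avoid a few blocks of `J`, those satisfying `Q₂ i j` have their root in
the block `j ∈ I`. -/
structure RunSetup (G : SimpleGraph V) (χ : V → ℕ) (X : ℕ → Finset V) (Γ J I : Finset ℕ)
    (Q₁ Q₂ : ℕ → ℕ → Finset V → V → Prop) (τ s K C₀ e : ℕ) : Prop where
  coherent : Coherent G χ X Γ e
  subset_left : J ⊆ Γ
  subset_right : I ⊆ Γ
  disjoint : Disjoint J I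
  nonempty_left : J.Nonempty
  nonempty_right : I.Nonempty
  one_le_degree : 1 ≤ e
  degree_le : e ≤ s
  one_le_factor : 1 ≤ K
  le_card : ∀ i ∈ Γ, (K * I.card + 4 * (J.card * I.card) + 5) * s ≤ (X i).card
  card_tile_le : ∀ i ∈ J, ∀ j ∈ I, ∀ S r, Q₁ i j S r → 4 * S.card ≤ C₀
  hasTiles_left : ∀ i ∈ J, ∀ j ∈ I, ∀ Lt ⊆ J, (J \ Lt).card ≤ τ * I.card →
    HasTiles (Q₁ i j) X s i Lt
  hasTiles_right : ∀ i ∈ J, ∀ j ∈ I, HasTiles (Q₂ i j) X s j I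

namespace RunSetup

variable {τ s K C₀ e : ℕ}

lemma isShrinking (h : RunSetup G χ X Γ J I Q₁ Q₂ τ s K C₀ e) (hst : RunState G χ X J I Q Y Z)
    (hZ : Z.card ≤ J.card * I.card * s + e) : IsShrinking I s Y X := by
  refine fun j hj => ⟨hst.subset j hj, ?_⟩
  have := hst.card_le j hj
  have := h.le_card j (h.subset_right hj)
  have := h.degree_le
  have : 0 ≤ K * I.card * s := Nat.zero_le _
  linarith

lemma maxDegreeTo_le (h : RunSetup G χ X Γ J I Q₁ Q₂ τ s K C₀ e) (hY : ∀ j ∈ I, Y j ⊆ X j)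
    {i : ℕ} (hi : i ∈ J) {x : V} (hx : x ∈ X i) : maxDegreeTo G I Y x ≤ e :=
  Finset.sup_le fun j hj => (card_neighborsIn_mono G (hY j hj) x).trans
    (h.coherent.degree i (h.subset_left hi) x hx j (h.subset_right hj))

lemma exists_isLevel (h : RunSetup G χ X Γ J I Q₁ Q₂ τ s K C₀ e) (hY : IsShrinking I s Y X)
    {i : ℕ} (hi : i ∈ J) : ∃ m, IsLevel (X i) (maxDegreeTo G I Y) (K * I.card * s) m := by
  classical
  have hpos : 1 ≤ K * I.card * s := Nat.mul_pos
    (Nat.mul_pos h.one_le_factor h.nonempty_right.card_pos) (h.one_le_degree.trans h.degree_le)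
  refine _root_.exists_isLevel (fun x => h.maxDegreeTo_le (fun j hj => (hY j hj).1) hi) hpos ?_
  by_contra! hlt
  obtain ⟨j, hj⟩ := h.nonempty_right
  have hcard := Finset.card_filter_add_card_filter_not (s := X i) fun x => 1 ≤ maxDegreeTo G I Y x
  have hes := h.degree_le
  have hX := h.le_card i (h.subset_left hi)
  have he : e ≤ ((X i).filter fun x => ¬ 1 ≤ maxDegreeTo G I Y x).card := by
    have : 0 ≤ J.card * I.card * s := Nat.zero_le _
    linarith
  obtain ⟨a, ha, b, hb, hab⟩ := h.coherent.edge i (h.subset_left hi) j (h.subset_right hj)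
    (Finset.disjoint_iff_ne.1 h.disjoint i hi j hj) _ (Finset.filter_subset _ _) (Y j) (hY j hj).1
    he (hes.trans (hY j hj).2)
  refine (Finset.mem_filter.1 ha).2 ((card_neighborsIn_le_maxDegreeTo a hj).trans' ?_)
  exact Finset.card_pos.2 ⟨b, mem_neighborsIn.2 ⟨hb, hab⟩⟩

variable {m : ℕ → ℕ} {v : ℕ}

open Classical in
lemma gadget (h : RunSetup G χ X Γ J I Q₁ Q₂ τ s K C₀ e) (hY : ∀ j ∈ I, Y j ⊆ X j)
    (hm : ∀ i ∈ J, IsLevel (X i) (maxDegreeTo G I Y) (K * I.card * s) (m i)) (hv : v ∈ J)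
    (hmax : ∀ i ∈ J, m i ≤ m v)
    (hcard : τ * I.card ≤ (J \ J.filter fun i => C₀ * m i ≤ m v).card) :
    Gadget G X Γ τ s K (K * I.card) C₀ := by
  have hlarge : ∀ i ∈ J \ J.filter fun i => C₀ * m i ≤ m v, ∃ j ∈ I, K * s ≤
      ((X i).filter fun x => m v ≤ C₀ * (neighborsIn G (Y j) x).card).card := by
    intro i hi
    obtain ⟨hiJ, hiv⟩ := Finset.mem_sdiff.1 hi
    have hiv : m v ≤ C₀ * m i := by
      by_contra! hlt
      exact hiv (Finset.mem_filter.2 ⟨hiJ, hlt.le⟩)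
    obtain ⟨j, hj, hcard⟩ := exists_le_card_filter_of_cover
      ((X i).filter fun x => m i ≤ maxDegreeTo G I Y x) I h.nonempty_right
      (fun j x => maxDegreeTo G I Y x = (neighborsIn G (Y j) x).card)
      (fun x _ => exists_maxDegreeTo_eq h.nonempty_right x) (k := K * s)
      ((hm i hiJ).2.1.trans' (le_of_eq (by ring)))
    refine ⟨j, hj, hcard.trans (Finset.card_le_card fun x hx => ?_)⟩
    simp only [Finset.mem_filter] at hx ⊢
    obtain ⟨⟨hxi, hmx⟩, hxj⟩ := hx
    exact ⟨hxi, hiv.trans (Nat.mul_le_mul_left _ (hxj ▸ hmx))⟩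
  obtain ⟨j, hj, hτ⟩ := exists_le_card_filter_of_cover _ I h.nonempty_right
    (fun j i => K * s ≤ ((X i).filter fun x => m v ≤ C₀ * (neighborsIn G (Y j) x).card).card)
    hlarge (k := τ) (by rwa [mul_comm])
  have hsub : ∀ i ∈ (J \ J.filter fun i => C₀ * m i ≤ m v).filter fun i =>
      K * s ≤ ((X i).filter fun x => m v ≤ C₀ * (neighborsIn G (Y j) x).card).card, i ∈ J :=
    fun i hi => (Finset.mem_sdiff.1 (Finset.mem_filter.1 hi).1).1
  refine ⟨_, fun i hi => h.subset_left (hsub i hi), hτ, j, h.subset_right hj,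
    fun hjJ => Finset.disjoint_left.1 h.disjoint (hsub j hjJ) hj, Y j, hY j hj, m v, (hm v hv).1,
    fun i hi => ⟨(Finset.mem_filter.1 hi).2, ?_⟩⟩
  refine (Finset.card_le_card fun x hx => ?_).trans (hm i (hsub i hi)).2.2.le
  obtain ⟨hxi, hvx⟩ := Finset.mem_filter.1 hx
  exact Finset.mem_filter.2 ⟨hxi,
    (hmax i (hsub i hi)).trans_lt (hvx.trans_le (card_neighborsIn_le_maxDegreeTo x hj))⟩

open Classical in
lemma exists_dominant_tile (h : RunSetup G χ X Γ J I Q₁ Q₂ τ s K C₀ e)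
    (hm : ∀ i ∈ J, IsLevel (X i) (maxDegreeTo G I Y) (K * I.card * s) (m i)) (hv : v ∈ J)
    (hcard : (J \ J.filter fun i => C₀ * m i ≤ m v).card ≤ τ * I.card) :
    ∃ j ∈ I, ∃ S r, Q₁ v j S r ∧ r ∈ S ∧ r ∈ X v ∧
      maxDegreeTo G I Y r = (neighborsIn G (Y j) r).card ∧ 1 ≤ maxDegreeTo G I Y r ∧
      4 * ∑ x ∈ S.erase r, maxDegreeTo G I Y x ≤ maxDegreeTo G I Y r := by
  obtain ⟨j, hj, hjA⟩ := exists_le_card_filter_of_cover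
    ((X v).filter fun x => m v ≤ maxDegreeTo G I Y x) I h.nonempty_right
    (fun j x => maxDegreeTo G I Y x = (neighborsIn G (Y j) x).card)
    (fun x _ => exists_maxDegreeTo_eq h.nonempty_right x) (k := s)
    ((hm v hv).2.1.trans' (Nat.mul_le_mul_right s (Nat.le_mul_of_pos_left _ h.one_le_factor)))
  have hX' : IsShrinking (J.filter fun i => C₀ * m i ≤ m v) s
      (fun u => (X u).filter fun x => ¬ m u < maxDegreeTo G I Y x) X := by
    refine fun u hu => ⟨Finset.filter_subset _ _, ?_⟩
    have huJ := (Finset.mem_filter.1 hu).1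
    have hsplit :=
      Finset.card_filter_add_card_filter_not (s := X u) fun x => m u < maxDegreeTo G I Y x
    have hX := h.le_card u (h.subset_left huJ)
    have := (hm u huJ).2.2
    have : 0 ≤ J.card * I.card * s := Nat.zero_le _
    linarith
  obtain ⟨S, r, hQ, hrS, hrA, hS⟩ := h.hasTiles_left v hv j hj _ (Finset.filter_subset _ _) hcard
    _ ((Finset.filter_subset _ _).trans (Finset.filter_subset _ _)) hjA _ hX'
  simp only [Finset.mem_filter] at hrA
  obtain ⟨⟨hrX, hmr⟩, hrj⟩ := hrA
  refine ⟨j, hj, S, r, hQ, hrS, hrX, hrj, (hm v hv).1.trans hmr, ?_⟩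
  have hsmall : ∀ x ∈ S.erase r, C₀ * maxDegreeTo G I Y x ≤ maxDegreeTo G I Y r := by
    intro x hx
    obtain ⟨u, hu, hxu⟩ := hS x (Finset.mem_of_mem_erase hx) (Finset.ne_of_mem_erase hx)
    exact (Nat.mul_le_mul_left _ (not_lt.1 (Finset.mem_filter.1 hxu).2)).trans
      ((Finset.mem_filter.1 hu).2.trans hmr)
  refine Nat.le_of_mul_le_mul_left (c := S.card) ?_ (Finset.card_pos.2 ⟨r, hrS⟩)
  calc S.card * (4 * ∑ x ∈ S.erase r, maxDegreeTo G I Y x)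
      = 4 * S.card * ∑ x ∈ S.erase r, maxDegreeTo G I Y x := by ring
    _ ≤ C₀ * ∑ x ∈ S.erase r, maxDegreeTo G I Y x := by
      gcongr
      exact h.card_tile_le v hv j hj S r hQ
    _ ≤ (S.erase r).card * maxDegreeTo G I Y r := by
      rw [Finset.mul_sum]
      exact Finset.sum_le_card_nsmul _ _ _ hsmall
    _ ≤ S.card * maxDegreeTo G I Y r := by
      gcongr
      exact Finset.erase_subset r S

lemma step (h : RunSetup G χ X Γ J I Q₁ Q₂ τ s K C₀ e) (hst : RunState G χ X J I Q₁ Y Z)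
    (hZ : Z.card ≤ J.card * I.card * s) :
    Gadget G X Γ τ s K (K * I.card) C₀ ∨ ∃ Y' Z', RunState G χ X J I Q₁ Y' Z' ∧
      Z.card < Z'.card ∧ Z'.card ≤ Z.card + e := by
  classical
  have hY := h.isShrinking hst (hZ.trans (Nat.le_add_right _ e))
  choose! m hm using fun i (hi : i ∈ J) => h.exists_isLevel hY hi
  obtain ⟨v, hv, hmax⟩ := Finset.exists_max_image J m h.nonempty_left
  rcases le_total (τ * I.card) (J \ J.filter fun i => C₀ * m i ≤ m v).card with hcard | hcard
  · exact .inl (h.gadget hst.subset hm hv hmax hcard)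
  · obtain ⟨j, hj, S, r, hQ, hrS, hrX, hrj, hpos, hsum⟩ := h.exists_dominant_tile hm hv hcard
    obtain ⟨Y', Z', hst', hlt, hle⟩ := hst.extend hv hj
      (h.coherent.color j (h.subset_right hj)) hQ hrS hrj hpos hsum
    have := h.maxDegreeTo_le hst.subset hv hrX
    exact .inr ⟨Y', Z', hst', hlt, by omega⟩

lemma exists_large_runState (h : RunSetup G χ X Γ J I Q₁ Q₂ τ s K C₀ e)
    (hg : ¬ Gadget G X Γ τ s K (K * I.card) C₀) {n : ℕ} (hn : n ≤ J.card * I.card * s) :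
    ∃ Y Z, RunState G χ X J I Q₁ Y Z ∧ n ≤ Z.card ∧ Z.card ≤ J.card * I.card * s + e := by
  induction n with
  | zero => exact ⟨X, ∅, ⟨fun _ _ => subset_rfl, by simp, by simp⟩, by simp, by simp⟩
  | succ n ih =>
    obtain ⟨Y, Z, hst, hnZ, hZ⟩ := ih (by omega)
    rcases Nat.lt_or_ge Z.card (n + 1) with hlt | hge
    · obtain ⟨Y', Z', hst', hlt', hle⟩ := (h.step hst (by omega)).resolve_left hg
      exact ⟨Y', Z', hst', by omega, by omega⟩
    · exact ⟨Y, Z, hst, hge, hZ⟩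

theorem gadget_or_exists_joined_tiles (h : RunSetup G χ X Γ J I Q₁ Q₂ τ s K C₀ e) :
    Gadget G X Γ τ s K (K * I.card) C₀ ∨ ∃ i ∈ J, ∃ j ∈ I, ∃ S₁ r₁ S₂ r₂, Q₁ i j S₁ r₁ ∧
      Q₂ i j S₂ r₂ ∧ ∀ x ∈ S₁, ∀ y ∈ S₂, (G.Adj x y ↔ x = r₁ ∧ y = r₂) := by
  classical
  refine or_iff_not_imp_left.2 fun hg => ?_
  obtain ⟨Y, Z, hst, hle, hZ⟩ := h.exists_large_runState hg le_rfl
  obtain ⟨⟨i, j⟩, hij, hcard⟩ := exists_le_card_filter_of_cover Z (J ×ˢ I)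
    (h.nonempty_left.product h.nonempty_right)
    (fun ij y => χ y = ij.2 ∧ y ∈ X ij.2 ∧ IsAttached G (Q₁ ij.1 ij.2) I Y y) (k := s)
    (fun y hy => by
      obtain ⟨hyI, hyX, i, hi, hatt⟩ := hst.attached y hy
      exact ⟨(i, χ y), Finset.mem_product.2 ⟨hi, hyI⟩, rfl, hyX, hatt⟩)
    (by rwa [Finset.card_product])
  obtain ⟨hi, hj⟩ := Finset.mem_product.1 hij
  obtain ⟨S₂, r₂, hQ₂, -, hr₂, hS₂⟩ := h.hasTiles_right i hi j hj _
    (fun y hy => (Finset.mem_filter.1 hy).2.2.1) hcard Y (h.isShrinking hst hZ)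
  obtain ⟨-, -, -, S₁, r₁, hQ₁, -, hadj, hanti⟩ := Finset.mem_filter.1 hr₂
  refine ⟨i, hi, j, hj, S₁, r₁, S₂, r₂, hQ₁, hQ₂, fun x hx y hy => ?_⟩
  by_cases hyr : y = r₂
  · rw [hyr, hadj x hx, and_iff_left rfl]
  · obtain ⟨u, hu, hyu⟩ := hS₂ y hy hyr
    simp [hyr, hanti u hu x hx y hyu]

end RunSetup

end Run

section Tile

variable {V : Type*} {G : SimpleGraph V} {χ : V → ℕ} {X : ℕ → Finset V} {Γ P P' : Finset ℕ}
  {R : ℕ → ℕ → Prop} {c d i j : ℕ}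

/-- A rainbow binomial tree of order `c` in which the colour of the root is related by `R` to all
colours. For `R = (· ≤ ·)` and `R = (· ≥ ·)` the root has the smallest and the largest colour. -/
def HasRootedTree (G : SimpleGraph V) (χ : V → ℕ) (X : ℕ → Finset V) (Γ : Finset ℕ)
    (R : ℕ → ℕ → Prop) (c : ℕ) : Prop :=
  ∃ S r, IsRainbow χ X Γ S ∧ IsBinomial G c S r ∧ ∀ x ∈ S, R (χ r) (χ x)

lemma HasRootedTree.mono (h : HasRootedTree G χ X Γ R d) (hcd : c ≤ d) :
    HasRootedTree G χ X Γ R c := by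
  obtain ⟨S, r, hS, hB, hr⟩ := h
  obtain ⟨T, hT, hBT⟩ := hB.exists_subset hcd
  exact ⟨T, r, hS.mono hT subset_rfl fun _ _ => subset_rfl, hBT, fun x hx => hr x (hT hx)⟩

lemma HasRootedTree.exists_last (hzero : HasRootedTree G χ X Γ R 0)
    (hd : ¬ HasRootedTree G χ X Γ R d) :
    ∃ k < d, HasRootedTree G χ X Γ R k ∧ ¬ HasRootedTree G χ X Γ R (k + 1) := by
  obtain ⟨k, hk, hsucc⟩ := Nat.exists_not_and_succ_of_not_zero_of_exists
    (p := fun k => ¬ HasRootedTree G χ X Γ R k) (not_not.2 hzero) ⟨d, hd⟩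
  have hk := not_not.1 hk
  exact ⟨k, lt_of_not_ge fun hdk => hd (hk.mono hdk), hk, hsucc⟩

/-- Binomial trees of order `c` exist with the root and the other vertices coloured in the same
order as `i` and `P`, so that they can be transferred to the root colour `i` and colours in `P`. -/
def Placeable (G : SimpleGraph V) (χ : V → ℕ) (X : ℕ → Finset V) (Γ : Finset ℕ) (c i : ℕ)
    (P : Finset ℕ) : Prop :=
  (HasRootedTree G χ X Γ (· ≤ ·) c ∧ ∀ u ∈ P, i < u) ∨
    (HasRootedTree G χ X Γ (· ≥ ·) c ∧ ∀ u ∈ P, u < i)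

lemma Placeable.mono (h : Placeable G χ X Γ c i P) (hP : P' ⊆ P) : Placeable G χ X Γ c i P' :=
  h.imp (And.imp_right fun hi u hu => hi u (hP hu)) (And.imp_right fun hi u hu => hi u (hP hu))

lemma Placeable.notMem (h : Placeable G χ X Γ c i P) : i ∉ P := fun hi =>
  h.elim (fun h => (h.2 i hi).false) (fun h => (h.2 i hi).false)

lemma Placeable.exists_isBinomial (h : Placeable G χ X Γ c i P) :
    ∃ S r, IsRainbow χ X Γ S ∧ IsBinomial G c S r ∧ ∀ σ : ℕ → ℕ, StrictMonoOn σ (χ '' S) →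
      (∀ x ∈ S, σ (χ x) ∈ insert i P) → (∃ x ∈ S, σ (χ x) = i) → σ (χ r) = i := by
  rcases h with ⟨⟨S, r, hS, hB, hr⟩, hi⟩ | ⟨⟨S, r, hS, hB, hr⟩, hi⟩
  all_goals
    refine ⟨S, r, hS, hB, fun σ hσ hσP ⟨x, hx, hxi⟩ => ?_⟩
    refine (Finset.mem_insert.1 (hσP r hB.root_mem)).elim id fun hrP => ?_
  · have := hσ.monotoneOn ⟨r, hB.root_mem, rfl⟩ ⟨x, hx, rfl⟩ (hr x hx)
    exact absurd (hi _ hrP) (by omega)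
  · have := hσ.monotoneOn ⟨x, hx, rfl⟩ ⟨r, hB.root_mem, rfl⟩ (hr x hx)
    exact absurd (hi _ hrP) (by omega)

/-- A rainbow binomial tree of order `c` with root of colour `i` and other colours in `P`. -/
def IsTile (G : SimpleGraph V) (χ : V → ℕ) (X : ℕ → Finset V) (c i : ℕ) (P : Finset ℕ)
    (S : Finset V) (r : V) : Prop :=
  IsBinomial G c S r ∧ IsRainbow χ X (insert i P) S ∧ χ r = i

lemma IsTile.mono {S : Finset V} {r : V} (h : IsTile G χ X c i P' S r) (hP : P' ⊆ P) :
    IsTile G χ X c i P S r :=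
  ⟨h.1, h.2.1.mono subset_rfl (Finset.insert_subset_insert i hP) fun _ _ => subset_rfl, h.2.2⟩

lemma Placeable.hasTiles {τ s : ℕ} (h : Placeable G χ X Γ c i P)
    (hcol : ∀ j ∈ Γ, ∀ x ∈ X j, χ x = j) (ht : HasTransfer G χ X Γ τ s) (hi : i ∈ Γ) (hP : P ⊆ Γ)
    (hc : 2 ^ c ≤ τ) (hPc : 2 ^ c ≤ P.card + 1) : HasTiles (IsTile G χ X c i P) X s i P := by
  classical
  intro A hA hAs X' hX'
  obtain ⟨S, r, hS, hB, hroot⟩ := h.exists_isBinomial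
  obtain ⟨P', hP', hP'c⟩ := Finset.exists_subset_card_eq (s := P) (n := 2 ^ c - 1) (by omega)
  have hcard : (insert i P').card = S.card := by
    rw [Finset.card_insert_of_notMem fun hi => h.notMem (hP' hi), hP'c, hB.card_eq]
    exact Nat.sub_add_cancel Nat.one_le_two_pow
  obtain ⟨σ, hσP, hσ, hσX⟩ := ht.exists_isRainbow hcol hS (hB.card_eq ▸ hc)
    (Finset.insert_subset hi (hP'.trans hP)) hcard
  have hσr : σ (χ r) = i := by
    refine hroot σ hσ (fun x hx => Finset.insert_subset_insert i hP' (hσP x hx)) ?_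
    have hinj : Set.InjOn (σ ∘ χ) S := hσ.injOn.comp hS.2 fun x hx => ⟨x, hx, rfl⟩
    exact Finset.surjOn_of_injOn_of_card_le (σ ∘ χ) hσP hinj hcard.le
      (Finset.mem_insert_self i P')
  obtain ⟨φ, hφ, hφX, hφχ⟩ := hσX (Function.update X' i A) fun u hu => by
    rcases eq_or_ne u i with rfl | hui
    · simpa using ⟨hA, hAs⟩
    · simpa [hui] using hX' u (hP' (Finset.mem_of_mem_insert_of_ne hu hui))
  have hr := Finset.mem_image_of_mem φ hB.root_mem
  have hφr : χ (φ r) = i := (hφχ r hB.root_mem).trans hσr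
  refine ⟨S.image φ, φ r, ⟨hB.image hφ, hφX.mono subset_rfl (Finset.insert_subset_insert i hP')
    fun u hu => ?_, hφr⟩, hr, ?_, fun x hx hxr => ?_⟩
  · rcases eq_or_ne u i with rfl | hui
    · simpa using hA
    · simpa [hui] using (hX' u (hP' (Finset.mem_of_mem_insert_of_ne hu hui))).1
  · simpa [hφr] using (hφX.1 (φ r) hr).2
  · have hxi : χ x ≠ i := fun hxi => hxr (hφX.2 hx hr (hxi.trans hφr.symm))
    obtain ⟨hxP, hxX⟩ := hφX.1 x hx
    exact ⟨χ x, hP' (Finset.mem_of_mem_insert_of_ne hxP hxi), by simpa [hxi] using hxX⟩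

/-- A rainbow binomial tree of order `c` that can be rooted at a vertex of colour `i` and also at a
vertex of colour `j`, and whose other colours are in `P`. -/
def HasDoublyRootedTree (G : SimpleGraph V) (χ : V → ℕ) (X : ℕ → Finset V) (c i j : ℕ)
    (P : Finset ℕ) : Prop :=
  ∃ S r₁ r₂, IsRainbow χ X (insert i (insert j P)) S ∧ IsBinomial G c S r₁ ∧
    IsBinomial G c S r₂ ∧ χ r₁ = i ∧ χ r₂ = j

lemma HasDoublyRootedTree.symm (h : HasDoublyRootedTree G χ X c i j P) :
    HasDoublyRootedTree G χ X c j i P := by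
  obtain ⟨S, r₁, r₂, hS, hB₁, hB₂, hr₁, hr₂⟩ := h
  exact ⟨S, r₂, r₁, Finset.insert_comm i j P ▸ hS, hB₂, hB₁, hr₂, hr₁⟩

lemma HasDoublyRootedTree.hasRootedTree [Std.Refl R] (h : HasDoublyRootedTree G χ X c i j P)
    (hi : i ∈ Γ) (hj : j ∈ Γ) (hP : P ⊆ Γ) (hij : R i j) (hiP : ∀ u ∈ P, R i u) :
    HasRootedTree G χ X Γ R c := by
  obtain ⟨S, r, -, hS, hB, -, rfl, -⟩ := h
  refine ⟨S, r, hS.mono subset_rfl (Finset.insert_subset hi (Finset.insert_subset hj hP))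
    fun _ _ => subset_rfl, hB, fun x hx => ?_⟩
  rcases Finset.mem_insert.1 (hS.1 x hx).1 with h | h
  · exact h ▸ refl _
  · rcases Finset.mem_insert.1 h with h | h
    exacts [h ▸ hij, hiP _ h]

lemma HasDoublyRootedTree.hasRootedTree_of_total [Std.Refl R] [Std.Total R]
    (h : HasDoublyRootedTree G χ X c i j P) (hi : i ∈ Γ) (hj : j ∈ Γ) (hP : P ⊆ Γ)
    (hiP : ∀ u ∈ P, R i u) (hjP : ∀ u ∈ P, R j u) : HasRootedTree G χ X Γ R c :=
  (total_of R i j).elim (fun hij => h.hasRootedTree hi hj hP hij hiP)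
    fun hji => h.symm.hasRootedTree hj hi hP hji hjP

lemma IsTile.hasDoublyRootedTree {P₁ P₂ : Finset ℕ} {S₁ S₂ : Finset V} {r₁ r₂ : V}
    (h₁ : IsTile G χ X c i P₁ S₁ r₁) (h₂ : IsTile G χ X c j P₂ S₂ r₂)
    (hdisj : Disjoint (insert i P₁) (insert j P₂)) (hP₁ : P₁ ⊆ P) (hP₂ : P₂ ⊆ P)
    (hadj : ∀ x ∈ S₁, ∀ y ∈ S₂, (G.Adj x y ↔ x = r₁ ∧ y = r₂)) :
    HasDoublyRootedTree G χ X (c + 1) i j P := by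
  classical
  obtain ⟨hB₁, hS₁, hr₁⟩ := h₁
  obtain ⟨hB₂, hS₂, hr₂⟩ := h₂
  have hχ : ∀ x ∈ S₁, ∀ y ∈ S₂, χ x ≠ χ y := fun x hx y hy =>
    Finset.disjoint_iff_ne.1 hdisj _ (hS₁.1 x hx).1 _ (hS₂.1 y hy).1
  have hS : Disjoint S₁ S₂ := Finset.disjoint_left.2 fun x hx₁ hx₂ => hχ x hx₁ x hx₂ rfl
  obtain ⟨hj₁, hj₂⟩ := hB₁.join hB₂ hS hadj
  refine ⟨S₁ ∪ S₂, r₁, r₂, ⟨fun x hx => ?_, ?_⟩, hj₁, hj₂, hr₁, hr₂⟩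
  · have hsub₁ : insert i P₁ ⊆ insert i (insert j P) :=
      Finset.insert_subset_insert i (hP₁.trans (Finset.subset_insert j P))
    have hsub₂ : insert j P₂ ⊆ insert i (insert j P) :=
      (Finset.insert_subset_insert j hP₂).trans (Finset.subset_insert i _)
    exact (Finset.mem_union.1 hx).elim (fun hx => (hS₁.1 x hx).imp_left (hsub₁ ·))
      fun hx => (hS₂.1 x hx).imp_left (hsub₂ ·)
  · rw [Finset.coe_union, Set.injOn_union (by exact_mod_cast hS)]
    exact ⟨hS₁.2, hS₂.2, hχ⟩

end Tile

section Region

lemma exists_ordered_blocks {Γ : Finset ℕ} {n a : ℕ} (h : n * a ≤ Γ.card) :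
    ∃ A : Fin n → Finset ℕ, (∀ r, A r ⊆ Γ) ∧ (∀ r, (A r).card = a) ∧
      ∀ r t, r < t → ∀ u ∈ A r, ∀ v ∈ A t, u < v := by
  let enum : Fin n × Fin a → ℕ := fun p => Γ.orderEmbOfFin rfl (Fin.castLE h (finProdFinEquiv p))
  have henum : Function.Injective enum := (Γ.orderEmbOfFin rfl).injective.comp
    ((Fin.castLE_injective h).comp finProdFinEquiv.injective)
  refine ⟨fun r => Finset.univ.image fun t => enum (r, t), fun r => ?_, fun r => ?_, ?_⟩
  · exact Finset.image_subset_iff.2 fun t _ => Γ.orderEmbOfFin_mem rfl _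
  · have hr := henum.comp (Prod.mk_right_injective r)
    exact (Finset.card_image_of_injective _ hr).trans (by simp)
  · simp only [Finset.mem_image, Finset.mem_univ, true_and, forall_exists_index,
      forall_apply_eq_imp_iff]
    intro r t hrt u v
    refine (Γ.orderEmbOfFin rfl).strictMono (Fin.lt_def.2 ?_)
    simp only [Fin.val_castLE, finProdFinEquiv_apply_val]
    calc (u : ℕ) + a * r < a + a * r := by omega
      _ = a * (r + 1) := by ring
      _ ≤ a * t := Nat.mul_le_mul_left a hrt
      _ ≤ v + a * t := Nat.le_add_left _ _

/-- Consecutive regions `A r` of colours, with two disjoint parts `J r` and `I r` of each region. -/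
structure IsDivision (Γ : Finset ℕ) (A J I : Fin 3 → Finset ℕ) : Prop where
  subset : ∀ r, A r ⊆ Γ
  lt : ∀ r t, r < t → ∀ u ∈ A r, ∀ v ∈ A t, u < v
  left_subset : ∀ r, J r ⊆ A r
  right_subset : ∀ r, I r ⊆ A r
  disjoint_self : ∀ r, Disjoint (J r) (I r)

variable {Γ : Finset ℕ} {A J I : Fin 3 → Finset ℕ}

lemma exists_isDivision {a b : ℕ} (h : 3 * (a + b) ≤ Γ.card) :
    ∃ A J I : Fin 3 → Finset ℕ, IsDivision Γ A J I ∧ (∀ r, (J r).card = a) ∧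
      ∀ r, (I r).card = b := by
  obtain ⟨A, hAΓ, hA, hlt⟩ := exists_ordered_blocks h
  choose J hJA hJ using fun r => Finset.exists_subset_card_eq (n := a)
    ((Nat.le_add_right a b).trans_eq (hA r).symm)
  refine ⟨A, J, fun r => A r \ J r, ⟨hAΓ, hlt, hJA, fun r => Finset.sdiff_subset,
    fun r => Finset.disjoint_sdiff⟩, hJ, fun r => ?_⟩
  rw [Finset.card_sdiff_of_subset (hJA r), hA, hJ, Nat.add_sub_cancel_left]

namespace IsDivision

lemma disjoint (h : IsDivision Γ A J I) (r t : Fin 3) : Disjoint (J r) (I t) := by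
  rcases lt_trichotomy r t with hrt | rfl | hrt
  · exact Finset.disjoint_iff_ne.2 fun u hu v hv =>
      (h.lt r t hrt u (h.left_subset r hu) v (h.right_subset t hv)).ne
  · exact h.disjoint_self r
  · exact Finset.disjoint_iff_ne.2 fun u hu v hv =>
      (h.lt t r hrt v (h.right_subset t hv) u (h.left_subset r hu)).ne'

lemma exists_mem_of_mem_left (h : IsDivision Γ A J I) {i : ℕ} (hi : i ∈ Finset.univ.biUnion J) :
    ∃ r, i ∈ A r :=
  (Finset.mem_biUnion.1 hi).imp fun r hr => h.left_subset r hr.2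

lemma exists_mem_of_mem_right (h : IsDivision Γ A J I) {j : ℕ} (hj : j ∈ Finset.univ.biUnion I) :
    ∃ r, j ∈ A r :=
  (Finset.mem_biUnion.1 hj).imp fun r hr => h.right_subset r hr.2

variable {V : Type*} {G : SimpleGraph V} {χ : V → ℕ} {X : ℕ → Finset V} {k l i j : ℕ}

lemma placeable_middle {c : ℕ} (hD : IsDivision Γ A J I) (hl : HasRootedTree G χ X Γ (· ≤ ·) c)
    (hk : HasRootedTree G χ X Γ (· ≥ ·) c)
    (hc : ¬ (HasRootedTree G χ X Γ (· ≤ ·) (c + 1) ∧ HasRootedTree G χ X Γ (· ≥ ·) (c + 1)))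
    (hi : i ∈ A 0) (hj : j ∈ A 2) :
    Placeable G χ X Γ c i (A 1) ∧ Placeable G χ X Γ c j (A 1) ∧
      ¬ HasDoublyRootedTree G χ X (c + 1) i j (A 1) := by
  have hi1 := hD.lt 0 1 (by decide) i hi
  have hj1 : ∀ u ∈ A 1, u < j := fun u hu => hD.lt 1 2 (by decide) u hu j hj
  have hij := hD.lt 0 2 (by decide) i hi j hj
  have hiΓ := hD.subset 0 hi
  have hjΓ := hD.subset 2 hj
  exact ⟨.inl ⟨hl, hi1⟩, .inr ⟨hk, hj1⟩, fun h => hc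
    ⟨h.hasRootedTree hiΓ hjΓ (hD.subset 1) hij.le fun u hu => (hi1 u hu).le,
      h.symm.hasRootedTree hjΓ hiΓ (hD.subset 1) hij.le fun u hu => (hj1 u hu).le⟩⟩

/-- If both roots lie left of the last region or both right of the first, place all other vertices
in that region. Otherwise one root lies left and one right of the middle region. -/
lemma exists_placeable (hD : IsDivision Γ A J I) (hl : HasRootedTree G χ X Γ (· ≤ ·) l)
    (hl' : ¬ HasRootedTree G χ X Γ (· ≤ ·) (l + 1)) (hk : HasRootedTree G χ X Γ (· ≥ ·) k)
    (hk' : ¬ HasRootedTree G χ X Γ (· ≥ ·) (k + 1)) (hi : ∃ r, i ∈ A r) (hj : ∃ r, j ∈ A r) :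
    ∃ c r, c ≤ max k l ∧ Placeable G χ X Γ c i (A r) ∧ Placeable G χ X Γ c j (A r) ∧
      ¬ HasDoublyRootedTree G χ X (c + 1) i j (A r) := by
  obtain ⟨a, hi⟩ := hi
  obtain ⟨b, hj⟩ := hj
  have hiΓ := hD.subset a hi
  have hjΓ := hD.subset b hj
  by_cases hlast : a < 2 ∧ b < 2
  · have hi2 := hD.lt a 2 hlast.1 i hi
    have hj2 := hD.lt b 2 hlast.2 j hj
    exact ⟨l, 2, le_max_right k l, .inl ⟨hl, hi2⟩, .inl ⟨hl, hj2⟩, fun h =>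
      hl' (h.hasRootedTree_of_total hiΓ hjΓ (hD.subset 2) (fun u hu => (hi2 u hu).le)
        fun u hu => (hj2 u hu).le)⟩
  by_cases hfirst : 0 < a ∧ 0 < b
  · have hi0 : ∀ u ∈ A 0, u < i := fun u hu => hD.lt 0 a hfirst.1 u hu i hi
    have hj0 : ∀ u ∈ A 0, u < j := fun u hu => hD.lt 0 b hfirst.2 u hu j hj
    exact ⟨k, 0, le_max_left k l, .inr ⟨hk, hi0⟩, .inr ⟨hk, hj0⟩, fun h =>
      hk' (h.hasRootedTree_of_total hiΓ hjΓ (hD.subset 0) (fun u hu => (hi0 u hu).le)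
        fun u hu => (hj0 u hu).le)⟩
  have hmin : ¬ (HasRootedTree G χ X Γ (· ≤ ·) (min k l + 1) ∧
      HasRootedTree G χ X Γ (· ≥ ·) (min k l + 1)) := by
    rcases min_choice k l with h | h <;> rw [h]
    exacts [fun h => hk' h.2, fun h => hl' h.1]
  have hl := hl.mono (min_le_right k l)
  have hk := hk.mono (min_le_left k l)
  have hsplit : (a = 0 ∧ b = 2) ∨ (a = 2 ∧ b = 0) := by omega
  refine ⟨min k l, 1, min_le_max, ?_⟩
  rcases hsplit with ⟨rfl, rfl⟩ | ⟨rfl, rfl⟩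
  · exact hD.placeable_middle hl hk hmin hi hj
  · obtain ⟨hj1, hi1, hno⟩ := hD.placeable_middle hl hk hmin hj hi
    exact ⟨hi1, hj1, fun h => hno h.symm⟩

end IsDivision

end Region

section RainbowForest

variable {V W : Type*} {G : SimpleGraph V} {F : SimpleGraph W} {χ : V → ℕ} {X X' : ℕ → Finset V}
  {Γ Γ' : Finset ℕ} {A J I : Fin 3 → Finset ℕ} {τ s K e : ℕ}

lemma HasTiles.mono {P P' : Finset V → V → Prop} {i : ℕ} {T T' : Finset ℕ}
    (h : HasTiles P X s i T) (hP : ∀ S r, P S r → P' S r) (hT : T ⊆ T') :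
    HasTiles P' X s i T' := by
  intro B hB hBs X' hX'
  obtain ⟨S, r, hPS, hr, hrB, hS⟩ := h B hB hBs X' fun u hu => hX' u (hT hu)
  exact ⟨S, r, hP S r hPS, hr, hrB, fun x hx hxr =>
    (hS x hx hxr).imp fun u hu => ⟨hT hu.1, hu.2⟩⟩

/-- Removing at most `τ * (3 * τ)` colours from `J r` leaves at least `τ` of them. -/
lemma IsDivision.runSetup (hD : IsDivision Γ A J I) (hJ : ∀ r, (J r).card = 3 * τ * τ + τ)
    (hI : ∀ r, (I r).card = τ) (hτ : 1 ≤ τ) (hcoh : Coherent G χ X Γ e) (he : 1 ≤ e) (hes : e ≤ s)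
    (ht : HasTransfer G χ X Γ τ s) (hK : 1 ≤ K)
    (hX : ∀ i ∈ Γ, (K * (3 * τ) + 4 * (3 * (3 * τ * τ + τ) * (3 * τ)) + 5) * s ≤ (X i).card)
    {c : ℕ → ℕ → ℕ} {r : ℕ → ℕ → Fin 3}
    (hplace : ∀ i ∈ Finset.univ.biUnion J, ∀ j ∈ Finset.univ.biUnion I, 2 ^ c i j ≤ τ ∧
      Placeable G χ X Γ (c i j) i (A (r i j)) ∧ Placeable G χ X Γ (c i j) j (A (r i j))) :
    RunSetup G χ X Γ (Finset.univ.biUnion J) (Finset.univ.biUnion I)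
      (fun i j => IsTile G χ X (c i j) i (J (r i j)))
      (fun i j => IsTile G χ X (c i j) j (I (r i j))) τ s K (4 * τ) e := by
  have hJsub : ∀ r, J r ⊆ Finset.univ.biUnion J := fun r =>
    Finset.subset_biUnion_of_mem J (Finset.mem_univ r)
  have hIsub : ∀ r, I r ⊆ Finset.univ.biUnion I := fun r =>
    Finset.subset_biUnion_of_mem I (Finset.mem_univ r)
  have hJΓ : Finset.univ.biUnion J ⊆ Γ :=
    Finset.biUnion_subset.2 fun r _ => (hD.left_subset r).trans (hD.subset r)
  have hIΓ : Finset.univ.biUnion I ⊆ Γ :=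
    Finset.biUnion_subset.2 fun r _ => (hD.right_subset r).trans (hD.subset r)
  have hJcard : (Finset.univ.biUnion J).card ≤ 3 * (3 * τ * τ + τ) :=
    Finset.card_biUnion_le_card_mul _ _ _ fun r _ => (hJ r).le
  have hIcard : (Finset.univ.biUnion I).card ≤ 3 * τ :=
    Finset.card_biUnion_le_card_mul _ _ _ fun r _ => (hI r).le
  refine
    { coherent := hcoh
      subset_left := hJΓ
      subset_right := hIΓ
      disjoint := ?_
      nonempty_left := (Finset.card_pos.1 (by rw [hJ]; omega)).mono (hJsub 0)
      nonempty_right := (Finset.card_pos.1 (by rw [hI]; omega)).mono (hIsub 0)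
      one_le_degree := he
      degree_le := hes
      one_le_factor := hK
      le_card := fun i hi => (hX i hi).trans' (by gcongr)
      card_tile_le := fun i hi j hj S x hS => ?_
      hasTiles_left := fun i hi j hj T _ hT => ?_
      hasTiles_right := fun i hi j hj => ?_ }
  · simp only [Finset.disjoint_biUnion_left, Finset.disjoint_biUnion_right]
    exact fun r _ t _ => hD.disjoint t r
  · rw [hS.1.card_eq]
    exact Nat.mul_le_mul_left 4 (hplace i hi j hj).1
  · obtain ⟨hc, hl, -⟩ := hplace i hi j hj
    have hsub : J (r i j) ∩ T ⊆ A (r i j) :=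
      Finset.inter_subset_left.trans (hD.left_subset _)
    have hcard : τ ≤ (J (r i j) ∩ T).card := by
      have hlost : (J (r i j) \ T).card ≤ τ * (3 * τ) :=
        (Finset.card_le_card (Finset.sdiff_subset_sdiff (hJsub _) subset_rfl)).trans
          (hT.trans (Nat.mul_le_mul_left τ hIcard))
      have := Finset.card_inter_add_card_sdiff (J (r i j)) T
      rw [hJ] at this
      linarith
    exact ((hl.mono hsub).hasTiles hcoh.color ht (hJΓ hi) (hsub.trans (hD.subset _)) hc
      (by omega)).mono (fun _ _ h => h.mono Finset.inter_subset_left) Finset.inter_subset_right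
  · obtain ⟨hc, -, hr⟩ := hplace i hi j hj
    have hsub := hD.right_subset (r i j)
    exact ((hr.mono hsub).hasTiles hcoh.color ht (hIΓ hj) (hsub.trans (hD.subset _)) hc
      (by rw [hI]; omega)).mono (fun _ _ h => h) (hIsub _)

lemma hasRootedTree_zero {R : ℕ → ℕ → Prop} [Std.Refl R] (hcol : ∀ j ∈ Γ, ∀ x ∈ X j, χ x = j)
    {i : ℕ} (hi : i ∈ Γ) {x : V} (hx : x ∈ X i) : HasRootedTree G χ X Γ R 0 :=
  ⟨{x}, x, isRainbow_singleton hi hx (hcol i hi x hx), rfl, fun _ hy =>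
    Finset.mem_singleton.1 hy ▸ refl _⟩

lemma HasRootedTree.hasRainbowCopy [Fintype W] (hF : F.IsAcyclic) {R : ℕ → ℕ → Prop}
    (h : HasRootedTree G χ X Γ R (Fintype.card W + 1)) : HasRainbowCopy G χ X Γ F := by
  classical
  obtain ⟨S, r, hS, hB, -⟩ := h
  obtain ⟨f, hf⟩ := hB.exists_isCopyOn hF Finset.univ
  exact hS.hasRainbowCopy hf

/-- The factor by which the blocks of a coherent family exceed the degree scale when a rainbow
forest is extracted from tiles with at most `τ` vertices. -/
def blockFactor (τ : ℕ) : ℕ :=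
  (3 * (4 * τ) * τ + 2) * (3 * τ) + 4 * (3 * (3 * τ * τ + τ) * (3 * τ)) + 5

theorem Coherent.hasRainbowCopy_of_hasTransfer [Fintype W] (hF : F.IsAcyclic)
    (hcoh : Coherent G χ X Γ e) (he : 1 ≤ e) (hes : e ≤ s) (hτ : τ = 2 ^ (Fintype.card W + 1))
    (hΓ : 3 * ((3 * τ * τ + τ) + τ) ≤ Γ.card) (hX : ∀ i ∈ Γ, blockFactor τ * s ≤ (X i).card)
    (ht : HasTransfer G χ X Γ τ s) : HasRainbowCopy G χ X Γ F := by
  by_contra hno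
  have hτ1 : 1 ≤ τ := hτ ▸ Nat.one_le_two_pow
  have hΓne : Γ.Nonempty := Finset.card_pos.1 (by omega)
  obtain ⟨i₀, hi₀⟩ := hΓne
  obtain ⟨x₀, hx₀⟩ : (X i₀).Nonempty := Finset.card_pos.1 <|
    (hX i₀ hi₀).trans_lt' (Nat.mul_pos (Nat.succ_pos _) (he.trans hes))
  obtain ⟨l, hln, hl, hl'⟩ := (hasRootedTree_zero (R := (· ≤ ·)) hcoh.color hi₀ hx₀).exists_last
    fun h => hno (h.hasRainbowCopy hF)
  obtain ⟨k, hkn, hk, hk'⟩ := (hasRootedTree_zero (R := (· ≥ ·)) hcoh.color hi₀ hx₀).exists_last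
    fun h => hno (h.hasRainbowCopy hF)
  obtain ⟨A, J, I, hD, hJ, hI⟩ := exists_isDivision hΓ
  choose! c r hc hleft hright hjoin using
    fun i (hi : i ∈ Finset.univ.biUnion J) j (hj : j ∈ Finset.univ.biUnion I) =>
      hD.exists_placeable hl hl' hk hk' (hD.exists_mem_of_mem_left hi)
        (hD.exists_mem_of_mem_right hj)
  have hsetup := hD.runSetup hJ hI hτ1 hcoh he hes ht (Nat.le_add_left 1 _) hX fun i hi j hj =>
    ⟨(Nat.pow_le_pow_right two_pos ((hc i hi j hj).trans (by omega))).trans_eq hτ.symm,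
      hleft i hi j hj, hright i hi j hj⟩
  rcases hsetup.gadget_or_exists_joined_tiles with
    hg | ⟨i, hi, j, hj, S₁, r₁, S₂, r₂, h₁, h₂, hadj⟩
  · refine hno (hg.hasRainbowCopy hF hcoh ht (he.trans hes) hes le_rfl (fun i hi => ?_)
      ⟨i₀, hi₀⟩ ?_)
    · have := hsetup.le_card i hi
      exact this.trans' (Nat.mul_le_mul_right s (by omega))
    · have := Nat.lt_two_pow_self (n := Fintype.card W)
      omega
  · have hA₁ := hD.left_subset (r i j)
    have hA₂ := hD.right_subset (r i j)
    refine hjoin i hi j hj (h₁.hasDoublyRootedTree h₂ ?_ hA₁ hA₂ hadj)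
    rw [Finset.disjoint_insert_left, Finset.disjoint_insert_right, Finset.mem_insert, not_or]
    exact ⟨⟨Finset.disjoint_iff_ne.1 hsetup.disjoint i hi j hj,
      fun hiI => (hleft i hi j hj).notMem (hA₂ hiI)⟩,
      fun hjJ => (hright i hi j hj).notMem (hA₁ hjJ), hD.disjoint _ _⟩

lemma Coherent.mono (h : Coherent G χ X Γ e) (hΓ : Γ' ⊆ Γ) (hX : ∀ j ∈ Γ', X' j ⊆ X j) :
    Coherent G χ X' Γ' e where
  color j hj x hx := h.color j (hΓ hj) x (hX j hj hx)
  degree i hi x hx j hj := (card_neighborsIn_mono G (hX j hj) x).trans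
    (h.degree i (hΓ hi) x (hX i hi hx) j (hΓ hj))
  edge i hi j hj hij A hA B hB :=
    h.edge i (hΓ hi) j (hΓ hj) hij A (hA.trans (hX i hi)) B (hB.trans (hX j hj))

lemma HasRainbowCopy.mono (h : HasRainbowCopy G χ X' Γ' F) (hΓ : Γ' ⊆ Γ)
    (hX : ∀ j ∈ Γ', X' j ⊆ X j) : HasRainbowCopy G χ X Γ F := by
  obtain ⟨f, hf, hinj⟩ := h
  exact ⟨f, fun w => ⟨hΓ (hf w).1, hX _ (hf w).1 (hf w).2⟩, hinj⟩

theorem exists_hasRainbowCopy_of_coherent [Finite W] (hF : F.IsAcyclic) :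
    ∃ N C, ∀ {V : Type*} (G : SimpleGraph V) (χ : V → ℕ) (X : ℕ → Finset V) (e : ℕ), 1 ≤ e →
      Coherent G χ X (Finset.range N) e → (∀ i < N, C * e ≤ (X i).card) →
      HasRainbowCopy G χ X (Finset.range N) F := by
  have := Fintype.ofFinite W
  obtain ⟨τ, hτ⟩ : ∃ τ, τ = 2 ^ (Fintype.card W + 1) := ⟨_, rfl⟩
  obtain ⟨N, C, hN⟩ := exists_hasTransfer τ (3 * ((3 * τ * τ + τ) + τ)) (blockFactor τ)
  refine ⟨N, C, fun G χ X e he hcoh hX => ?_⟩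
  obtain ⟨Γ, hΓN, hΓ, X', s, hes, hX', ht⟩ := hN G χ X e hX
  have hsub : Γ ⊆ Finset.range N := fun j hj => Finset.mem_range.2 (hΓN j hj)
  have hcoh' := hcoh.mono hsub fun j hj => (hX' j hj).1
  exact (hcoh'.hasRainbowCopy_of_hasTransfer hF he hes hτ hΓ.ge (fun i hi => (hX' i hi).2)
    ht).mono hsub fun j hj => (hX' j hj).1

end RainbowForest

section Hole

variable {V W : Type*} {G : SimpleGraph V} {H : SimpleGraph W}

/-- The vertices `f 0, …, f n` form an induced path of length `n` in `G`, in this order; the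
values of `f` beyond `n` are irrelevant. -/
structure IsInducedPath (G : SimpleGraph V) (n : ℕ) (f : ℕ → V) : Prop where
  inj : ∀ i ≤ n, ∀ j ≤ n, f i = f j → i = j
  adj_iff : ∀ i ≤ n, ∀ j ≤ n, (G.Adj (f i) (f j) ↔ i + 1 = j ∨ j + 1 = i)

lemma IsInducedPath.comp_embedding {n : ℕ} {f : ℕ → W} (hf : IsInducedPath H n f) (e : H ↪g G) :
    IsInducedPath G n (e ∘ f) where
  inj i hi j hj hij := hf.inj i hi j hj (e.injective hij)
  adj_iff i hi j hj := e.map_adj_iff.trans (hf.adj_iff i hi j hj)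

lemma IsInducedPath.update_succ {k : ℕ} {f : ℕ → V} (hf : IsInducedPath G k f) {v : V}
    (hne : ∀ i ≤ k, f i ≠ v) (hadj : ∀ i ≤ k, (G.Adj (f i) v ↔ i = k)) :
    IsInducedPath G (k + 1) (Function.update f (k + 1) v) := by
  have hold (i) (hi : i ≤ k) : Function.update f (k + 1) v i = f i :=
    Function.update_of_ne (by omega) _ _
  have hnew : Function.update f (k + 1) v (k + 1) = v := Function.update_self _ _ _
  constructor
  · intro i hi j hj hij
    rcases Nat.le_succ_iff.1 hi with hi | rfl <;> rcases Nat.le_succ_iff.1 hj with hj | rfl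
    · rw [hold i hi, hold j hj] at hij
      exact hf.inj i hi j hj hij
    · rw [hold i hi, hnew] at hij
      exact absurd hij (hne i hi)
    · rw [hold j hj, hnew] at hij
      exact absurd hij.symm (hne j hj)
    · rfl
  · intro i hi j hj
    rcases Nat.le_succ_iff.1 hi with hi | rfl <;> rcases Nat.le_succ_iff.1 hj with hj | rfl
    · rw [hold i hi, hold j hj, hf.adj_iff i hi j hj]
    · rw [hold i hi, hnew, hadj i hi]
      omega
    · rw [hold j hj, hnew, G.adj_comm, hadj j hj]
      omega
    · simp

lemma exists_isInducedPath_of_reachable {u v : V} (huv : G.Reachable u v) :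
    ∃ n f, IsInducedPath G n f ∧ f 0 = u ∧ f n = v := by
  obtain ⟨p, hp⟩ := huv.exists_walk_length_eq_dist
  have hdist (i) (hi : i ≤ p.length) : G.dist u (p.getVert i) = i := by
    rw [← length_eq_dist_of_subwalk hp (p.isSubwalk_take i), Walk.take_length, min_eq_left hi]
  refine ⟨p.length, p.getVert, ⟨fun i hi j hj hij => ?_, fun i hi j hj => ⟨fun hadj => ?_, ?_⟩⟩,
    p.getVert_zero, p.getVert_length⟩
  · rw [← hdist i hi, ← hdist j hj, hij]
  · have hij : i ≠ j := fun hij => hadj.ne (congrArg p.getVert hij)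
    have hdiff := hadj.diff_dist_adj (u := u)
    rw [hdist i hi, hdist j hj] at hdiff
    omega
  · rintro (rfl | rfl)
    · exact p.adj_getVert_succ hj
    · exact (p.adj_getVert_succ hi).symm

lemma cycleGraph_adj_iff_of_lt {n : ℕ} {u v : Fin n} (huv : u < v) :
    (cycleGraph n).Adj u v ↔ v.val = u.val + 1 ∨ u.val = 0 ∧ v.val + 1 = n := by
  rw [cycleGraph_adj', Fin.coe_sub_iff_lt.2 huv, Fin.sub_val_of_le huv.le]
  have := Fin.lt_def.1 huv
  omega

lemma cycleGraph_isIndContained_of_forall_lt {n : ℕ} {c : ℕ → V}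
    (hne : ∀ i j, i < j → j < n → c i ≠ c j)
    (hadj : ∀ i j, i < j → j < n → (G.Adj (c i) (c j) ↔ j = i + 1 ∨ i = 0 ∧ j + 1 = n)) :
    cycleGraph n ⊴ G := by
  refine ⟨⟨⟨fun i => c i, fun u v huv => ?_⟩, fun {u v} => ?_⟩⟩
  · rcases lt_trichotomy u v with h | h | h
    · exact absurd huv (hne _ _ h v.isLt)
    · exact h
    · exact absurd huv.symm (hne _ _ h u.isLt)
  · change G.Adj (c u) (c v) ↔ _
    rcases lt_trichotomy u v with h | rfl | h
    · rw [hadj _ _ h v.isLt, cycleGraph_adj_iff_of_lt h]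
    · simp
    · rw [G.adj_comm, (cycleGraph _).adj_comm, hadj _ _ h u.isLt, cycleGraph_adj_iff_of_lt h]

lemma IsInducedPath.cycleGraph_isIndContained {m n : ℕ} {f g : ℕ → V} (hf : IsInducedPath G m f)
    (hg : IsInducedPath G n g) (hm : 2 ≤ m) (hn : 2 ≤ n) (hstart : f 0 = g 0) (hend : f m = g n)
    (hne : ∀ i, 0 < i → i < m → ∀ j, 0 < j → j < n → f i ≠ g j)
    (hadj : ∀ i, 0 < i → i < m → ∀ j, 0 < j → j < n → ¬ G.Adj (f i) (g j)) :
    cycleGraph (m + n) ⊴ G := by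
  let c : ℕ → V := fun i => if i ≤ m then f i else g (m + n - i)
  have hcf (i) (hi : i ≤ m) : c i = f i := if_pos hi
  have hcg (i) (hi : m ≤ i) : c i = g (m + n - i) := by
    rcases hi.eq_or_lt with rfl | hi
    · rw [hcf m le_rfl, hend, Nat.add_sub_cancel_left]
    · exact if_neg (by omega)
  have hpair (i j) (hij : i < j) (hj : j < m + n) :
      c i ≠ c j ∧ (G.Adj (c i) (c j) ↔ j = i + 1 ∨ i = 0 ∧ j + 1 = m + n) := by
    rcases le_or_gt j m with hjm | hjm
    · rw [hcf i (by omega), hcf j hjm, hf.adj_iff i (by omega) j hjm]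
      exact ⟨fun h => by have := hf.inj i (by omega) j hjm h; omega, by omega⟩
    rw [hcg j hjm.le]
    rcases le_or_gt m i with him | him
    · rw [hcg i him, hg.adj_iff _ (by omega) _ (by omega)]
      exact ⟨fun h => by have := hg.inj _ (by omega) _ (by omega) h; omega, by omega⟩
    rw [hcf i him.le]
    rcases i.eq_zero_or_pos with rfl | hi
    · rw [hstart, hg.adj_iff _ (by omega) _ (by omega)]
      exact ⟨fun h => by have := hg.inj _ (by omega) _ (by omega) h; omega, by omega⟩
    · refine ⟨hne i hi him _ (by omega) (by omega), ?_⟩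
      simp only [hadj i hi him _ (by omega : 0 < m + n - j) (by omega), false_iff]
      omega
  exact cycleGraph_isIndContained_of_forall_lt (fun i j hij hj => (hpair i j hij hj).1)
    fun i j hij hj => (hpair i j hij hj).2

lemma preconnected_induce_iff_forall_cut {A : Finset V} :
    (G.induce (A : Set V)).Preconnected ↔
      ∀ B ⊆ A, B.Nonempty → B ≠ A → ∃ x ∈ B, ∃ y ∈ A, y ∉ B ∧ G.Adj x y := by
  classical
  constructor
  · rintro hA B hBA ⟨b, hb⟩ hne
    obtain ⟨a, ha, haB⟩ := Finset.exists_of_ssubset (hBA.ssubset_of_ne hne)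
    obtain ⟨p⟩ := hA ⟨b, hBA hb⟩ ⟨a, ha⟩
    obtain ⟨d, -, hd, hd'⟩ := p.exists_boundary_dart {x | x.1 ∈ B} hb haB
    exact ⟨d.fst, hd, d.snd, d.snd.2, hd', d.adj⟩
  · rintro hcut ⟨u, hu⟩ ⟨v, hv⟩
    by_contra huv
    obtain ⟨x, hx, y, hy, hyB, hxy⟩ :=
      hcut (A.filter fun x => ∃ hx, (G.induce (A : Set V)).Reachable ⟨u, hu⟩ ⟨x, hx⟩)
        (Finset.filter_subset _ _) ⟨u, Finset.mem_filter.2 ⟨hu, hu, Reachable.refl _⟩⟩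
        fun h => huv (Finset.mem_filter.1 (h.symm ▸ hv)).2.2
    obtain ⟨-, hxA, hux⟩ := Finset.mem_filter.1 hx
    have hxy' : (G.induce (A : Set V)).Adj ⟨x, hxA⟩ ⟨y, hy⟩ := hxy
    exact hyB (Finset.mem_filter.2 ⟨hy, hy, hux.trans hxy'.reachable⟩)

lemma connected_induce_insert [DecidableEq V] {A : Finset V}
    (hA : (G.induce (A : Set V)).Connected) {a b : V} (ha : a ∈ A) (hab : G.Adj a b) :
    (G.induce (insert b A : Finset V)).Connected := by
  rw [Finset.coe_insert, Set.insert_eq, Set.union_comm]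
  exact connected_induce_union hA.preconnected Preconnected.of_subsingleton ha
    (Set.mem_singleton b) hab

lemma exists_isInducedPath_of_connected_induce {A : Set V} (hA : (G.induce A).Connected) {u v : V}
    (hu : u ∈ A) (hv : v ∈ A) :
    ∃ n f, IsInducedPath G n f ∧ f 0 = u ∧ f n = v ∧ ∀ i, f i ∈ A := by
  obtain ⟨n, f, hf, h0, hn⟩ := exists_isInducedPath_of_reachable (hA ⟨u, hu⟩ ⟨v, hv⟩)
  exact ⟨n, _, hf.comp_embedding (Embedding.induce A), congrArg Subtype.val h0,
    congrArg Subtype.val hn, fun i => (f i).2⟩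

/-- In `X`, every vertex has at most `e` neighbours, but any two disjoint sets of at least `e`
vertices are joined by an edge. -/
structure Linked (G : SimpleGraph V) (X : Finset V) (e : ℕ) : Prop where
  degree : ∀ x ∈ X, (neighborsIn G X x).card ≤ e
  edge : ∀ A ⊆ X, ∀ B ⊆ X, Disjoint A B → e ≤ A.card → e ≤ B.card → ∃ a ∈ A, ∃ b ∈ B, G.Adj a b

lemma Linked.card_lt_or_card_lt_add_of_closed {X Z A : Finset V} {e : ℕ} (h : Linked G X e)
    (hZ : Z ⊆ X) (hA : A ⊆ Z) (hclosed : ∀ x ∈ A, ∀ y ∈ Z, y ∉ A → ¬ G.Adj x y) :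
    A.card < e ∨ Z.card < A.card + e := by
  classical
  by_contra! hlarge
  have hcard := Finset.card_sdiff_of_subset hA
  obtain ⟨a, ha, b, hb, hab⟩ := h.edge A (hA.trans hZ) (Z \ A) (Finset.sdiff_subset.trans hZ)
    Finset.disjoint_sdiff hlarge.1 (by omega)
  exact hclosed a ha b (Finset.mem_sdiff.1 hb).1 (Finset.mem_sdiff.1 hb).2 hab

lemma Linked.exists_connected_component {X Z : Finset V} {e : ℕ} (h : Linked G X e) (he : 1 ≤ e)
    (hZ : Z ⊆ X) (hZc : 3 * e ≤ Z.card) :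
    ∃ A ⊆ Z, (G.induce (A : Set V)).Connected ∧ Z.card < A.card + e ∧
      ∀ x ∈ A, ∀ y ∈ Z, y ∉ A → ¬ G.Adj x y := by
  classical
  let Closed (A : Finset V) := ∀ x ∈ A, ∀ y ∈ Z, y ∉ A → ¬ G.Adj x y
  let candidates := Z.powerset.filter fun A => Z.card < A.card + e ∧ Closed A
  obtain ⟨A, hA, hmin⟩ := candidates.exists_min_image Finset.card
    ⟨Z, Finset.mem_filter.2 ⟨by simp, by omega, fun x _ y hy hyZ => absurd hy hyZ⟩⟩
  simp only [candidates, Finset.mem_filter, Finset.mem_powerset] at hA hmin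
  obtain ⟨hAZ, hAc, hAcl⟩ := hA
  have hsmall (C) (hC : C ⊂ A) (hcl : Closed C) : C.card < e := by
    have hlt := Finset.card_lt_card hC
    have hCZ := hC.subset.trans hAZ
    refine (h.card_lt_or_card_lt_add_of_closed hZ hCZ hcl).resolve_right fun hbig => ?_
    have := hmin C ⟨hCZ, hbig, hcl⟩
    omega
  have hAne : A.Nonempty := Finset.card_pos.1 (by omega)
  refine ⟨A, hAZ, (connected_iff _).2 ⟨?_, hAne.to_subtype⟩, hAc, hAcl⟩
  refine preconnected_induce_iff_forall_cut.2 fun B hB hBne hBA => ?_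
  by_contra! hcut
  have hB_closed : Closed B := fun x hx y hy hyB hxy =>
    hAcl x (hB hx) y hy (fun hyA => hcut x hx y hyA hyB hxy) hxy
  have hdiff_closed : Closed (A \ B) := fun x hx y hy hyAB hxy => by
    obtain ⟨hxA, hxB⟩ := Finset.mem_sdiff.1 hx
    refine hAcl x hxA y hy (fun hyA => ?_) hxy
    exact hcut y (by simpa [hyA] using hyAB) x hxA hxB hxy.symm
  have hBc := hsmall B (hB.ssubset_of_ne hBA) hB_closed
  have hdc := hsmall (A \ B) (Finset.sdiff_ssubset hB hBne) hdiff_closed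
  have := Finset.card_sdiff_of_subset hB
  omega

end Hole

section LongHole

variable {V : Type*} {G : SimpleGraph V} {X : Finset V} {e : ℕ}

lemma IsInducedPath.exists_cycleGraph_isIndContained {n : ℕ} {f : ℕ → V} {D : Set V}
    (hf : IsInducedPath G n f) (hn : 2 ≤ n) (hD : (G.induce D).Connected)
    (hstart : ∃ x ∈ D, G.Adj (f 0) x) (hend : ∃ x ∈ D, G.Adj (f n) x)
    (hnotMem : ∀ i, 0 < i → i < n → f i ∉ D)
    (hnadj : ∀ i, 0 < i → i < n → ∀ x ∈ D, ¬ G.Adj (f i) x) : ∃ m, n ≤ m ∧ cycleGraph m ⊴ G := by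
  obtain ⟨x, hx, hfx⟩ := hstart
  obtain ⟨y, hy, hfy⟩ := hend
  have hconn : (G.induce (D ∪ {f 0} ∪ {f n})).Connected := by
    have hstart_conn := connected_induce_union hD.preconnected
      (Preconnected.of_subsingleton (G := G.induce {f 0})) hx rfl hfx.symm
    exact connected_induce_union hstart_conn.preconnected Preconnected.of_subsingleton
      (Or.inl hy) rfl hfy.symm
  obtain ⟨d, g, hg, hg0, hgd, hgD⟩ := exists_isInducedPath_of_connected_induce hconn
    (u := f 0) (v := f n) (by simp) (by simp)
  have hd : 2 ≤ d := by
    by_contra! hd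
    have hends : ¬ G.Adj (g 0) (g d) := by
      rw [hg0, hgd, hf.adj_iff 0 n.zero_le n le_rfl]
      omega
    rw [hg.adj_iff 0 d.zero_le d le_rfl] at hends
    obtain rfl : d = 0 := by omega
    have := hf.inj 0 n.zero_le n le_rfl (hg0.symm.trans hgd)
    omega
  have hg_mem (j) (hj : 0 < j) (hjd : j < d) : g j ∈ D := by
    rcases hgD j with (hj' | hj') | hj'
    · exact hj'
    · have := hg.inj j hjd.le 0 d.zero_le (hj'.trans hg0.symm)
      omega
    · have := hg.inj j hjd.le d le_rfl (hj'.trans hgd.symm)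
      omega
  refine ⟨n + d, by omega, hf.cycleGraph_isIndContained hg hn hd hg0.symm hgd.symm ?_ ?_⟩
  · exact fun i hi hin j hj hjd h => hnotMem i hi hin (h ▸ hg_mem j hj hjd)
  · exact fun i hi hin j hj hjd => hnadj i hi hin _ (hg_mem j hj hjd)

/-- A state of the Gyárfás path argument: an induced path of length `k` from `v₀` into `C₀`, of
which only the last vertex has neighbours in the connected set `C ⊆ C₀` left to be explored. -/
structure GyarfasPath (G : SimpleGraph V) (v₀ : V) (C₀ : Finset V) (k : ℕ) (f : ℕ → V)
    (C : Finset V) : Prop where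
  isInducedPath : IsInducedPath G k f
  start : f 0 = v₀
  mem : ∀ i, 0 < i → i ≤ k → f i ∈ C₀
  subset : C ⊆ C₀
  connected : (G.induce (C : Set V)).Connected
  notMem : ∀ i ≤ k, f i ∉ C
  last_adj : ∃ y ∈ C, G.Adj (f k) y
  not_adj : ∀ i < k, ∀ y ∈ C, ¬ G.Adj (f i) y

lemma GyarfasPath.mem_of_subset {v₀ : V} {C₀ C : Finset V} {k : ℕ} {f : ℕ → V}
    (hP : GyarfasPath G v₀ C₀ k f C) {Y : Finset V} (hv₀ : v₀ ∈ Y) (hC₀ : C₀ ⊆ Y) (i : ℕ)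
    (hi : i ≤ k) : f i ∈ Y := by
  rcases i.eq_zero_or_pos with rfl | hpos
  · rwa [hP.start]
  · exact hC₀ (hP.mem i hpos hi)

lemma GyarfasPath.update_succ {v₀ v : V} {C₀ C A : Finset V} {k : ℕ} {f : ℕ → V}
    (hP : GyarfasPath G v₀ C₀ k f C) (hAC : A ⊆ C) (hA : (G.induce (A : Set V)).Connected)
    (hv : v ∈ C) (hvA : v ∉ A) (hlast : G.Adj (f k) v) (hvadj : ∃ y ∈ A, G.Adj v y)
    (hAadj : ∀ y ∈ A, ¬ G.Adj (f k) y) :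
    GyarfasPath G v₀ C₀ (k + 1) (Function.update f (k + 1) v) A := by
  have hold (i) (hi : i ≤ k) : Function.update f (k + 1) v i = f i :=
    Function.update_of_ne (by omega) _ _
  have hnew : Function.update f (k + 1) v (k + 1) = v := Function.update_self _ _ _
  refine ⟨hP.isInducedPath.update_succ (fun i hi h => hP.notMem i hi (h ▸ hv)) fun i hi => ?_, ?_,
    fun i hi hik => ?_, hAC.trans hP.subset, hA, fun i hik => ?_, ?_, fun i hi z hz => ?_⟩
  · refine ⟨fun hadj => ?_, fun h => h ▸ hlast⟩
    by_contra hne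
    exact hP.not_adj i (by omega) v hv hadj
  · rw [hold 0 k.zero_le, hP.start]
  · rcases Nat.le_succ_iff.1 hik with hik | rfl
    · exact hold i hik ▸ hP.mem i hi hik
    · exact hnew.symm ▸ hP.subset hv
  · rcases Nat.le_succ_iff.1 hik with hik | rfl
    · exact hold i hik ▸ fun h => hP.notMem i hik (hAC h)
    · exact hnew.symm ▸ hvA
  · rwa [hnew]
  · rw [hold i (by omega)]
    rcases Nat.lt_succ_iff_lt_or_eq.1 hi with hi | rfl
    · exact hP.not_adj i hi z (hAC hz)
    · exact hAadj z hz

lemma Linked.exists_gyarfasPath_succ (h : Linked G X e) (he : 1 ≤ e) {v₀ : V} {C₀ C : Finset V}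
    {k : ℕ} {f : ℕ → V} (hC₀ : C₀ ⊆ X) (hv₀ : v₀ ∈ X) (hP : GyarfasPath G v₀ C₀ k f C)
    (hC : 4 * e ≤ C.card) :
    ∃ f' C', GyarfasPath G v₀ C₀ (k + 1) f' C' ∧ C.card ≤ C'.card + 2 * e := by
  classical
  have hCX : C ⊆ X := hP.subset.trans hC₀
  have hcard := Finset.le_card_sdiff (neighborsIn G X (f k)) C
  have hdeg := h.degree (f k) (hP.mem_of_subset hv₀ hC₀ k le_rfl)
  obtain ⟨A, hA, hAconn, hAc, hAclosed⟩ := h.exists_connected_component he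
    (Z := C \ neighborsIn G X (f k)) (Finset.sdiff_subset.trans hCX) (by omega)
  have hAC : A ⊆ C := hA.trans Finset.sdiff_subset
  have hAadj (z) (hz : z ∈ A) : ¬ G.Adj (f k) z := fun hadj =>
    (Finset.mem_sdiff.1 (hA hz)).2 (mem_neighborsIn.2 ⟨hCX (hAC hz), hadj⟩)
  obtain ⟨y, hy, hfy⟩ := hP.last_adj
  -- An edge of `C` leaving the component `A` must lead to a neighbour of the last vertex `f k`.
  obtain ⟨x, hx, v, hv, hvA, hxv⟩ := preconnected_induce_iff_forall_cut.1 hP.connected.preconnected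
    A hAC (Finset.card_pos.1 (by omega)) (by rintro rfl; exact hAadj y hy hfy)
  have hlast : G.Adj (f k) v := by
    by_contra hnadj
    exact hAclosed x hx v
      (Finset.mem_sdiff.2 ⟨hv, fun hmem => hnadj (mem_neighborsIn.1 hmem).2⟩) hvA hxv
  exact ⟨_, A, hP.update_succ hAC hAconn hv hvA hlast ⟨x, hx, hxv.symm⟩ hAadj, by omega⟩

lemma Linked.exists_gyarfasPath (h : Linked G X e) (he : 1 ≤ e) {v₀ : V} {C₀ : Finset V}
    (hC₀ : C₀ ⊆ X) (hconn : (G.induce (C₀ : Set V)).Connected) (hv₀ : v₀ ∈ X) (hv₀C : v₀ ∉ C₀)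
    (hadj : ∃ y ∈ C₀, G.Adj v₀ y) (k : ℕ) (hk : (2 * k + 2) * e ≤ C₀.card) :
    ∃ f C, GyarfasPath G v₀ C₀ k f C ∧ C₀.card ≤ C.card + 2 * k * e := by
  induction k with
  | zero =>
    refine ⟨fun _ => v₀, C₀, ⟨⟨fun i hi j hj _ => by omega, fun i hi j hj => ?_⟩, rfl,
      fun i hi hi' => by omega, subset_rfl, hconn, fun _ _ => hv₀C, hadj,
      fun i hi => absurd hi i.not_lt_zero⟩, by simp⟩
    simp [Nat.le_zero.1 hi, Nat.le_zero.1 hj]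
  | succ k ih =>
    obtain ⟨f, C, hP, hC⟩ := ih (by linarith)
    obtain ⟨f', C', hP', hC'⟩ := h.exists_gyarfasPath_succ he hC₀ hv₀ hP (by linarith)
    exact ⟨f', C', hP', by linarith⟩

open Classical in
lemma card_insert_union_neighborsOf_le (G : SimpleGraph V) (Y A : Finset V) (y : V) :
    (insert y A ∪ neighborsOf G Y (insert y A)).card ≤
      (A ∪ neighborsOf G Y A).card + (neighborsIn G Y y).card + 1 := by
  have hsub : insert y A ∪ neighborsOf G Y (insert y A) ⊆
      insert y ((A ∪ neighborsOf G Y A) ∪ neighborsIn G Y y) := by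
    intro z
    simp only [Finset.mem_union, Finset.mem_insert, mem_neighborsOf, mem_neighborsIn,
      exists_eq_or_imp, G.adj_comm y z]
    grind
  calc _ ≤ _ := Finset.card_le_card hsub
    _ ≤ _ := Finset.card_insert_le _ _
    _ ≤ _ := Nat.add_le_add_right (Finset.card_union_le _ _) 1

open Classical in
lemma exists_connected_card_union_neighborsOf {Y : Finset V} {t : ℕ}
    (hY : (G.induce (Y : Set V)).Connected) (hdeg : ∀ x ∈ Y, (neighborsIn G Y x).card ≤ e)
    (ht : e + 1 ≤ t) (htY : t < Y.card) :
    ∃ A ⊆ Y, (G.induce (A : Set V)).Connected ∧ (A ∪ neighborsOf G Y A).card ≤ t ∧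
      t ≤ (A ∪ neighborsOf G Y A).card + e := by
  let candidates := Y.powerset.filter fun A : Finset V =>
    (G.induce (A : Set V)).Connected ∧ (A ∪ neighborsOf G Y A).card ≤ t
  have hne : candidates.Nonempty := by
    obtain ⟨y, hy⟩ : Y.Nonempty := Finset.card_pos.1 (by omega)
    refine ⟨{y}, Finset.mem_filter.2 ⟨by simpa using hy, ?_, ?_⟩⟩
    · rw [Finset.coe_singleton]
      exact (connected_iff _).2 ⟨Preconnected.of_subsingleton, inferInstance⟩
    · have hcard := card_insert_union_neighborsOf_le G Y ∅ y
      have hempty : neighborsOf G Y ∅ = ∅ := by simp [neighborsOf]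
      rw [hempty, Finset.union_empty, Finset.card_empty, insert_empty_eq] at hcard
      have := hdeg y hy
      omega
  obtain ⟨A, hA, hmax⟩ := candidates.exists_max_image Finset.card hne
  simp only [candidates, Finset.mem_filter, Finset.mem_powerset] at hA hmax
  obtain ⟨hAY, hAconn, hAt⟩ := hA
  refine ⟨A, hAY, hAconn, hAt, ?_⟩
  have hAY' : A ≠ Y := by
    rintro rfl
    have := Finset.card_le_card (Finset.subset_union_left (s₁ := A) (s₂ := neighborsOf G A A))
    omega
  obtain ⟨x, hx, y, hy, hyA, hxy⟩ := preconnected_induce_iff_forall_cut.1 hY.preconnected A hAY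
    (Finset.coe_nonempty.1 (Set.nonempty_coe_sort.1 hAconn.nonempty)) hAY'
  by_contra! hlt
  have hcard := card_insert_union_neighborsOf_le G Y A y
  have hdegy := hdeg y hy
  have hgrow := hmax (insert y A) ⟨Finset.insert_subset hy hAY,
    connected_induce_insert hAconn hx hxy, by omega⟩
  rw [Finset.card_insert_of_notMem hyA] at hgrow
  omega

lemma Linked.exists_connected_boundary (h : Linked G X e) (he : 1 ≤ e) {b r : ℕ} (hr : e ≤ r)
    (hX : b + 3 * e + r ≤ X.card) :
    ∃ A : Finset V, ∃ B ⊆ X, ∃ R ⊆ X, (G.induce (A : Set V)).Connected ∧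
      (∀ x ∈ B, ∃ a ∈ A, G.Adj x a) ∧
      Disjoint A R ∧ Disjoint B R ∧ (∀ a ∈ A, ∀ y ∈ R, ¬ G.Adj a y) ∧ b ≤ B.card ∧ r ≤ R.card := by
  classical
  obtain ⟨Y, hYX, hYconn, hYc, -⟩ := h.exists_connected_component he (Z := X) subset_rfl (by omega)
  obtain ⟨A, hAY, hAconn, hAt, hAt'⟩ := exists_connected_card_union_neighborsOf (t := b + 2 * e)
    hYconn (fun x hx => (card_neighborsIn_mono G hYX x).trans (h.degree x (hYX hx)))
    (by omega) (by omega)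
  have hN : A ∪ neighborsOf G Y A ⊆ Y :=
    Finset.union_subset hAY fun x hx => (mem_neighborsOf.1 hx).1
  have hRc := Finset.card_sdiff_of_subset hN
  have hRX : Y \ (A ∪ neighborsOf G Y A) ⊆ X := Finset.sdiff_subset.trans hYX
  have hAR : Disjoint A (Y \ (A ∪ neighborsOf G Y A)) :=
    Finset.disjoint_sdiff.mono_left Finset.subset_union_left
  have hnadj : ∀ a ∈ A, ∀ y ∈ Y \ (A ∪ neighborsOf G Y A), ¬ G.Adj a y := fun a ha y hy hay =>
    (Finset.mem_sdiff.1 hy).2 <| Finset.mem_union_right _ <|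
      mem_neighborsOf.2 ⟨(Finset.mem_sdiff.1 hy).1, a, ha, hay.symm⟩
  have hAe : A.card < e := by
    by_contra! hAe
    obtain ⟨a, ha, y, hy, hay⟩ := h.edge A (hAY.trans hYX) _ hRX hAR hAe (by omega)
    exact hnadj a ha y hy hay
  have hBc := Finset.card_union_le A (neighborsOf G Y A)
  exact ⟨A, neighborsOf G Y A, fun x hx => hYX (mem_neighborsOf.1 hx).1, _, hRX,
    hAconn, fun x hx => (mem_neighborsOf.1 hx).2, hAR,
    Finset.disjoint_sdiff.mono_left Finset.subset_union_right, hnadj, by omega, by omega⟩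

lemma Linked.exists_adj_of_forall_not_adj (h : Linked G X e) {B C : Finset V} {p : ℕ} {f : ℕ → V}
    (hB : B ⊆ X) (hC : C ⊆ X) (hBC : Disjoint B C) (hf : ∀ i < p, f i ∈ X)
    (hBc : (p + 1) * e ≤ B.card) (hCc : e ≤ C.card) :
    ∃ b ∈ B, ∃ z ∈ C, G.Adj b z ∧ ∀ i < p, ¬ G.Adj (f i) b := by
  classical
  let seen := (Finset.range p).biUnion fun i => neighborsIn G X (f i)
  have hseen : seen.card ≤ p * e := by
    refine (Finset.card_biUnion_le_card_mul _ _ e fun i hi => ?_).trans_eq (by simp)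
    exact h.degree _ (hf i (Finset.mem_range.1 hi))
  have hBseen := Nat.sub_le_iff_le_add.1 (Finset.le_card_sdiff seen B)
  obtain ⟨b, hb, z, hz, hbz⟩ := h.edge (B \ seen) (Finset.sdiff_subset.trans hB) C hC
    (hBC.mono_left Finset.sdiff_subset) (by linarith) hCc
  obtain ⟨hbB, hbseen⟩ := Finset.mem_sdiff.1 hb
  exact ⟨b, hbB, z, hz, hbz, fun i hi hadj => hbseen <| Finset.mem_biUnion.2
    ⟨i, Finset.mem_range.2 hi, mem_neighborsIn.2 ⟨hB hbB, hadj⟩⟩⟩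

theorem Linked.exists_cycleGraph_isIndContained (h : Linked G X e) (he : 1 ≤ e) {n : ℕ}
    (hn : 2 ≤ n) (hX : (3 * n + 10) * e ≤ X.card) : ∃ m, n ≤ m ∧ cycleGraph m ⊴ G := by
  classical
  obtain ⟨A, B, hB, R, hR, hAconn, hBA, hAR, hBR, hAR_nadj, hBc, hRc⟩ :=
    h.exists_connected_boundary he (b := (n + 3) * e) (r := (2 * n + 4) * e)
      (Nat.le_mul_of_pos_left _ (by omega)) (by linarith)
  obtain ⟨C₀, hC₀R, hC₀conn, hC₀c, -⟩ := h.exists_connected_component he hR (by nlinarith)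
  have hC₀X := hC₀R.trans hR
  obtain ⟨v₀, hv₀, hv₀C₀⟩ := h.edge B hB C₀ hC₀X (hBR.mono_right hC₀R) (by nlinarith) (by nlinarith)
  obtain ⟨f, C, hP, hC⟩ := h.exists_gyarfasPath he hC₀X hC₀conn (hB hv₀)
    (fun hv₀C => Finset.disjoint_left.1 hBR hv₀ (hC₀R hv₀C)) hv₀C₀ n (by linarith)
  -- A second vertex `b` of `B` which sees `C` but none of the path leads from `C` back to `A`.
  have hCR := hP.subset.trans hC₀R
  obtain ⟨b, hbB, z, hz, hbz, hfb⟩ := h.exists_adj_of_forall_not_adj (p := n + 1) hB (hCR.trans hR)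
    (hBR.mono_right hCR) (fun i hi => hP.mem_of_subset (hB hv₀) hC₀X i (Nat.lt_succ_iff.1 hi))
    (by linarith) (by linarith)
  obtain ⟨a, ha, hba⟩ := hBA b hbB
  have hD : (G.induce ((insert b A : Finset V) ∪ C : Set V)).Connected :=
    connected_induce_union (connected_induce_insert hAconn ha hba.symm).preconnected
      hP.connected.preconnected (Finset.mem_insert_self b A) hz hbz
  refine hP.isInducedPath.exists_cycleGraph_isIndContained hn hD ?_ ?_ ?_ ?_
  · obtain ⟨a', ha', hv₀a'⟩ := hBA v₀ hv₀
    exact ⟨a', Or.inl (Finset.mem_insert_of_mem ha'), hP.start ▸ hv₀a'⟩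
  · obtain ⟨y, hy, hfy⟩ := hP.last_adj
    exact ⟨y, Or.inr hy, hfy⟩
  · rintro i hi hin (hmem | hmem)
    · have hfR := hC₀R (hP.mem i hi hin.le)
      rcases Finset.mem_insert.1 hmem with rfl | hmem
      · exact Finset.disjoint_left.1 hBR hbB hfR
      · exact Finset.disjoint_left.1 hAR hmem hfR
    · exact hP.notMem i hin.le hmem
  · rintro i hi hin x (hx | hx)
    · rcases Finset.mem_insert.1 hx with rfl | hx
      · exact hfb i (by omega)
      · exact fun hadj => hAR_nadj x hx _ (hC₀R (hP.mem i hi hin.le)) hadj.symm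
    · exact hP.not_adj i hin x hx

end LongHole

section Comb

variable {V : Type*} {G : SimpleGraph V}

open Classical in
/-- The vertices of `B` whose only neighbour in `T` is `a`. -/
noncomputable def privateNeighbors (G : SimpleGraph V) (B T : Finset V) (a : V) : Finset V :=
  B.filter fun b => ∀ x ∈ T, (G.Adj x b ↔ x = a)

/-- The vertices of `A` carry the teeth of a comb in `B`: each `a ∈ A` comes with a set `P a` of
`w` vertices of `B` whose only neighbour in `A` is `a`. -/
structure IsComb (G : SimpleGraph V) (A B : Finset V) (w : ℕ) (P : V → Finset V) : Prop where
  subset : ∀ a ∈ A, P a ⊆ B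
  card : ∀ a ∈ A, (P a).card = w
  adj_iff : ∀ a ∈ A, ∀ b ∈ P a, ∀ x ∈ A, (G.Adj x b ↔ x = a)

lemma mem_privateNeighbors {B T : Finset V} {a b : V} :
    b ∈ privateNeighbors G B T a ↔ b ∈ B ∧ ∀ x ∈ T, (G.Adj x b ↔ x = a) := by
  simp [privateNeighbors]

lemma privateNeighbors_subset_neighborsIn {B T : Finset V} {a : V} (ha : a ∈ T) :
    privateNeighbors G B T a ⊆ neighborsIn G B a := fun _ hb =>
  have hb' := mem_privateNeighbors.1 hb
  mem_neighborsIn.2 ⟨hb'.1, (hb'.2 a ha).2 rfl⟩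

open Classical in
lemma two_le_card_neighborsIn_add_card_filter_mem_privateNeighbors {B T : Finset V} {b : V}
    (hb : b ∈ neighborsOf G B T) :
    2 ≤ (neighborsIn G T b).card + (T.filter fun a => b ∈ privateNeighbors G B T a).card := by
  obtain ⟨hbB, x, hx, hbx⟩ := mem_neighborsOf.1 hb
  have hmem : x ∈ neighborsIn G T b := mem_neighborsIn.2 ⟨hx, hbx⟩
  have hpos := Finset.card_pos.2 ⟨x, hmem⟩
  obtain htwo | hone := Nat.lt_or_ge 1 (neighborsIn G T b).card
  · omega
  · have hprivate : x ∈ T.filter fun a => b ∈ privateNeighbors G B T a := by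
      refine Finset.mem_filter.2 ⟨hx, mem_privateNeighbors.2 ⟨hbB, fun y hy => ⟨fun hyb => ?_, ?_⟩⟩⟩
      · exact Finset.card_le_one.1 hone y (mem_neighborsIn.2 ⟨hy, hyb.symm⟩) x hmem
      · rintro rfl
        exact hbx.symm
    have := Finset.card_pos.2 ⟨x, hprivate⟩
    omega

lemma two_mul_card_neighborsOf_le (G : SimpleGraph V) (B T : Finset V) :
    2 * (neighborsOf G B T).card ≤
      ∑ a ∈ T, (neighborsIn G B a).card + ∑ a ∈ T, (privateNeighbors G B T a).card := by
  classical
  have hdouble : ∑ b ∈ neighborsOf G B T, (T.filter fun a => b ∈ privateNeighbors G B T a).card ≤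
      ∑ a ∈ T, (privateNeighbors G B T a).card := by
    simp only [Finset.card_filter]
    rw [Finset.sum_comm]
    refine Finset.sum_le_sum fun a _ => ?_
    rw [← Finset.card_filter]
    exact Finset.card_le_card fun b hb => (Finset.mem_filter.1 hb).2
  have hle : ∑ b ∈ neighborsOf G B T, (neighborsIn G T b).card ≤
      ∑ a ∈ T, (neighborsIn G B a).card :=
    (Finset.sum_le_sum_of_subset fun b hb => (mem_neighborsOf.1 hb).1).trans_eq
      (sum_card_neighborsIn_comm G B T)
  calc 2 * (neighborsOf G B T).card = ∑ _b ∈ neighborsOf G B T, 2 := by simp [mul_comm]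
    _ ≤ ∑ b ∈ neighborsOf G B T, ((neighborsIn G T b).card +
          (T.filter fun a => b ∈ privateNeighbors G B T a).card) :=
        Finset.sum_le_sum fun b hb =>
          two_le_card_neighborsIn_add_card_filter_mem_privateNeighbors hb
    _ ≤ _ := Finset.sum_add_distrib.trans_le (Nat.add_le_add hle hdouble)

lemma card_le_six_mul_card_filter_privateNeighbors {T B : Finset V} {Δ : ℕ} (hΔ : 1 ≤ Δ)
    (hdeg : ∀ a ∈ T, (neighborsIn G B a).card ≤ Δ)
    (hcover : 2 * Δ * T.card ≤ 3 * (neighborsOf G B T).card) :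
    T.card ≤ 6 * (T.filter fun a => Δ ≤ 6 * (privateNeighbors G B T a).card).card := by
  set A := T.filter fun a => Δ ≤ 6 * (privateNeighbors G B T a).card
  have hsum : ∑ a ∈ T, (neighborsIn G B a).card ≤ T.card * Δ := by
    simpa using Finset.sum_le_card_nsmul T _ Δ hdeg
  have hprivate : 6 * ∑ a ∈ T, (privateNeighbors G B T a).card ≤
      6 * (A.card * Δ) + T.card * Δ := by
    calc 6 * ∑ a ∈ T, (privateNeighbors G B T a).card
        = ∑ a ∈ T, 6 * (privateNeighbors G B T a).card := Finset.mul_sum ..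
      _ ≤ ∑ a ∈ T, ((if Δ ≤ 6 * (privateNeighbors G B T a).card then 6 * Δ else 0) + Δ) := by
          refine Finset.sum_le_sum fun a ha => ?_
          have := (Finset.card_le_card (privateNeighbors_subset_neighborsIn ha)).trans (hdeg a ha)
          split_ifs <;> omega
      _ = 6 * (A.card * Δ) + T.card * Δ := by
          rw [Finset.sum_add_distrib, ← Finset.sum_filter, Finset.sum_const, Finset.sum_const,
            smul_eq_mul, smul_eq_mul, Nat.mul_left_comm]
  have hmul : Δ * T.card ≤ Δ * (6 * A.card) := by
    linarith [two_mul_card_neighborsOf_le G B T]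
  exact Nat.le_of_mul_le_mul_left hmul hΔ

lemma exists_isComb_of_cover {T B : Finset V} {Δ : ℕ} (hΔ : 1 ≤ Δ)
    (hdeg : ∀ a ∈ T, (neighborsIn G B a).card ≤ Δ)
    (hcover : 2 * Δ * T.card ≤ 3 * (neighborsOf G B T).card) :
    ∃ A ⊆ T, T.card ≤ 6 * A.card ∧ ∃ P, IsComb G A B ((Δ + 5) / 6) P := by
  set A := T.filter fun a => Δ ≤ 6 * (privateNeighbors G B T a).card
  have hex : ∀ a ∈ A, ∃ P ⊆ privateNeighbors G B T a, P.card = (Δ + 5) / 6 := fun a ha =>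
    Finset.exists_subset_card_eq (by have := (Finset.mem_filter.1 ha).2; omega)
  choose! P hP hPc using hex
  exact ⟨A, Finset.filter_subset _ _, card_le_six_mul_card_filter_privateNeighbors hΔ hdeg hcover,
    P, fun a ha b hb => (mem_privateNeighbors.1 (hP a ha hb)).1, hPc, fun a ha b hb x hx =>
      (mem_privateNeighbors.1 (hP a ha hb)).2 x (Finset.mem_filter.1 hx).1⟩

open Classical in
lemma exists_cover_forall_card_neighborsIn_sdiff_le (G : SimpleGraph V) (S B : Finset V) (Δ : ℕ) :
    ∃ T ⊆ S, 2 * Δ * T.card ≤ 3 * (neighborsOf G B T).card ∧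
      ∀ s ∈ S, (neighborsIn G (B \ neighborsOf G B T) s).card ≤ 2 * Δ / 3 := by
  let covers := S.powerset.filter fun T => 2 * Δ * T.card ≤ 3 * (neighborsOf G B T).card
  obtain ⟨T, hT, hmax⟩ := covers.exists_max_image Finset.card ⟨∅, by simp [covers]⟩
  simp only [covers, Finset.mem_filter, Finset.mem_powerset] at hT hmax
  obtain ⟨hTS, hcover⟩ := hT
  refine ⟨T, hTS, hcover, fun s hs => ?_⟩
  by_cases hsT : s ∈ T
  · have hempty : neighborsIn G (B \ neighborsOf G B T) s = ∅ := by
      refine Finset.eq_empty_iff_forall_notMem.2 fun b hb => ?_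
      obtain ⟨hbB, hsb⟩ := mem_neighborsIn.1 hb
      exact (Finset.mem_sdiff.1 hbB).2 <|
        mem_neighborsOf.2 ⟨(Finset.mem_sdiff.1 hbB).1, s, hsT, hsb.symm⟩
    simp [hempty]
  · by_contra! hlarge
    have hbigger := hmax (insert s T) ⟨Finset.insert_subset hs hTS, by
      rw [card_neighborsOf_insert, Finset.card_insert_of_notMem hsT, Nat.mul_add]
      omega⟩
    rw [Finset.card_insert_of_notMem hsT] at hbigger
    omega

lemma mul_le_fifteen_mul_sqrt {a t m Δ : ℕ} (ht : t ≤ 6 * a) (hm : a ^ 2 * ((Δ + 5) / 6) ≤ m) :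
    (t * Δ : ℝ) ≤ 15 * √(m * Δ) := by
  have hnat : t ^ 2 * Δ ≤ 216 * m := by
    calc t ^ 2 * Δ ≤ (6 * a) ^ 2 * (6 * ((Δ + 5) / 6)) :=
          Nat.mul_le_mul (Nat.pow_le_pow_left ht 2) (by omega)
      _ = 216 * (a ^ 2 * ((Δ + 5) / 6)) := by ring
      _ ≤ 216 * m := Nat.mul_le_mul_left _ hm
  have hreal : (t ^ 2 * Δ : ℝ) ≤ 216 * m := mod_cast hnat
  refine le_of_sq_le_sq ?_ (by positivity)
  rw [mul_pow 15, Real.sq_sqrt (by positivity)]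
  calc (t * Δ : ℝ) ^ 2 = (t ^ 2 * Δ : ℝ) * Δ := by ring
    _ ≤ (216 * m : ℝ) * Δ := by gcongr
    _ ≤ (15 : ℝ) ^ 2 * (m * Δ) := by linarith [show (0 : ℝ) ≤ m * Δ by positivity]

lemma sqrt_mul_two_thirds_le (m Δ : ℕ) :
    √(m * (2 * Δ / 3 : ℕ)) ≤ 83 / 100 * √(m * Δ) := by
  have hdiv : ((2 * Δ / 3 : ℕ) : ℝ) ≤ 2 * Δ / 3 := mod_cast Nat.cast_div_le (m := 2 * Δ) (n := 3)
  refine Real.sqrt_le_iff.2 ⟨by positivity, ?_⟩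
  rw [mul_pow, Real.sq_sqrt (by positivity)]
  calc (m * (2 * Δ / 3 : ℕ) : ℝ) ≤ m * (2 * Δ / 3) := by gcongr
    _ ≤ (83 / 100) ^ 2 * (m * Δ) := by linarith [show (0 : ℝ) ≤ m * Δ by positivity]

/-- Either a maximal cover `T` of two thirds efficiency yields the comb directly, or it is so small
that removing `N(T)` from `B` costs little, while it lowers the degrees by a third. -/
theorem exists_isComb {S B : Finset V} {m Δ : ℕ} (hdeg : ∀ s ∈ S, (neighborsIn G B s).card ≤ Δ)
    (hnb : ∀ b ∈ B, ∃ s ∈ S, G.Adj s b) (hB : 100 * √(m * Δ) < B.card) :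
    ∃ A ⊆ S, ∃ w P, 1 ≤ w ∧ m ≤ A.card ^ 2 * w ∧ IsComb G A B w P := by
  classical
  induction Δ using Nat.strong_induction_on generalizing B with
  | _ Δ ih =>
  have hΔ : 1 ≤ Δ := by
    obtain ⟨b, hb⟩ : B.Nonempty := by
      rw [← Finset.card_pos, ← Nat.cast_pos (α := ℝ)]
      exact lt_of_le_of_lt (by positivity) hB
    obtain ⟨s, hs, hsb⟩ := hnb b hb
    exact (Finset.card_pos.2 ⟨b, mem_neighborsIn.2 ⟨hb, hsb⟩⟩).trans_le (hdeg s hs)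
  obtain ⟨T, hTS, hcover, hdeg'⟩ := exists_cover_forall_card_neighborsIn_sdiff_le G S B Δ
  obtain ⟨A, hAT, hTA, P, hP⟩ := exists_isComb_of_cover hΔ (fun s hs => hdeg s (hTS hs)) hcover
  by_cases hm : m ≤ A.card ^ 2 * ((Δ + 5) / 6)
  · exact ⟨A, hAT.trans hTS, (Δ + 5) / 6, P, by omega, hm, hP⟩
  have hN : ((neighborsOf G B T).card : ℝ) ≤ 15 * √(m * Δ) := by
    refine le_trans ?_ (mul_le_fifteen_mul_sqrt hTA (not_le.1 hm).le)
    exact_mod_cast (card_neighborsOf_le_sum G B T).trans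
      (by simpa using Finset.sum_le_card_nsmul T _ Δ fun s hs => hdeg s (hTS hs))
  have hremoved : (B.card : ℝ) - (neighborsOf G B T).card ≤ (B \ neighborsOf G B T).card := by
    rw [sub_le_iff_le_add]
    exact_mod_cast Nat.sub_le_iff_le_add.1 (Finset.le_card_sdiff (neighborsOf G B T) B)
  obtain ⟨A', hA', w, P', hw, hmw, hP'⟩ := ih (2 * Δ / 3) (by omega) hdeg'
    (fun b hb => hnb b (Finset.mem_sdiff.1 hb).1)
    (by linarith [sqrt_mul_two_thirds_le m Δ, Real.sqrt_nonneg (m * Δ : ℝ)])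
  exact ⟨A', hA', w, P', hw, hmw,
    fun a ha => (hP'.subset a ha).trans Finset.sdiff_subset, hP'.card, hP'.adj_iff⟩

lemma IsComb.card_biUnion [DecidableEq V] {A B : Finset V} {w : ℕ} {P : V → Finset V}
    (h : IsComb G A B w P) : (A.biUnion P).card = A.card * w := by
  have hdisj : (A : Set V).PairwiseDisjoint P := fun x hx y hy hxy =>
    Finset.disjoint_left.2 fun b hbx hby => hxy
      ((h.adj_iff y hy b hby x hx).1 ((h.adj_iff x hx b hbx x hx).2 rfl))
  rw [Finset.card_biUnion hdisj, Finset.sum_congr rfl h.card, Finset.sum_const, smul_eq_mul]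

end Comb

section PurePairs

variable {V : Type*} {G : SimpleGraph V} {X Y A B : Finset V}

/-- `X` contains a linear pure pair: two disjoint subsets of size at least `|X| / D` which are
complete or anticomplete to each other. -/
def HasPurePair (G : SimpleGraph V) (X : Finset V) (D : ℕ) : Prop :=
  ∃ A ⊆ X, ∃ B ⊆ X, Disjoint A B ∧ X.card ≤ D * A.card ∧ X.card ≤ D * B.card ∧
    ((∀ a ∈ A, ∀ b ∈ B, G.Adj a b) ∨ ∀ a ∈ A, ∀ b ∈ B, ¬ G.Adj a b)

lemma exists_adj_and_exists_compl_adj_of_not_hasPurePair {D e : ℕ} (h : ¬ HasPurePair G X D)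
    (hX : X.card ≤ D * e) (hA : A ⊆ X) (hB : B ⊆ X) (hAB : Disjoint A B) (hAe : e ≤ A.card)
    (hBe : e ≤ B.card) :
    (∃ a ∈ A, ∃ b ∈ B, G.Adj a b) ∧ ∃ a ∈ A, ∃ b ∈ B, Gᶜ.Adj a b := by
  by_contra hpure
  refine h ⟨A, hA, B, hB, hAB, hX.trans (Nat.mul_le_mul_left _ hAe),
    hX.trans (Nat.mul_le_mul_left _ hBe), ?_⟩
  rcases not_and_or.1 hpure with hanti | hcomplete
  · exact .inr fun a ha b hb hab => hanti ⟨a, ha, b, hb, hab⟩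
  · refine .inl fun a ha b hb => by_contra fun hab => hcomplete ⟨a, ha, b, hb, ?_⟩
    exact (compl_adj ..).2 ⟨fun h => Finset.disjoint_left.1 hAB ha (h ▸ hb), hab⟩

lemma hasPurePair_of_sparse_compl {D e L : ℕ} (he : 1 ≤ e) (hL : 2 ≤ L) (hYX : Y ⊆ X)
    (hX : X.card ≤ D * e) (hY : (3 * L + 10) * e ≤ Y.card)
    (hdeg : ∀ x ∈ Y, (neighborsIn Gᶜ Y x).card ≤ e)
    (hC : ∀ m, L ≤ m → ¬ (cycleGraph m)ᶜ ⊴ G) : HasPurePair G X D := by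
  by_contra hpure
  have hlinked : Linked Gᶜ Y e := ⟨hdeg, fun A hA B hB hAB hAe hBe =>
    (exists_adj_and_exists_compl_adj_of_not_hasPurePair hpure hX (hA.trans hYX) (hB.trans hYX)
      hAB hAe hBe).2⟩
  obtain ⟨m, hm, hcycle⟩ := hlinked.exists_cycleGraph_isIndContained he hL hY
  exact hC m hm (by simpa using hcycle.compl)

lemma exists_hasPurePair_or_sparse {U : Type*} [Finite U] (H : SimpleGraph U) {L : ℕ} (hL : 2 ≤ L)
    (E : ℕ) : ∃ D, 1 ≤ D ∧ ∀ {V : Type*} (G : SimpleGraph V), ¬ H ⊴ G →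
      (∀ m, L ≤ m → ¬ (cycleGraph m)ᶜ ⊴ G) →
      ∀ X : Finset V, D ≤ X.card → HasPurePair G X D ∨
        ∃ Y ⊆ X, ∃ e, 1 ≤ e ∧ X.card ≤ D * e ∧ E * e ≤ Y.card ∧
          ∀ x ∈ Y, (neighborsIn G Y x).card ≤ e := by
  obtain ⟨D, hD⟩ := exists_sparse_or_sparse_compl H (2 * E + 2 * (3 * L + 10))
  refine ⟨D + 1, by omega, fun G hH hC X hX => ?_⟩
  set w := X.card / (D + 1)
  have hw : 1 ≤ w := (Nat.one_le_div_iff (by omega)).2 hX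
  have hwX : (D + 1) * w ≤ X.card := Nat.mul_div_le _ _
  have hXw : X.card < (D + 1) * (w + 1) := Nat.lt_mul_div_succ _ (by omega)
  have hX2w : X.card ≤ (D + 1) * (2 * w) := hXw.le.trans (Nat.mul_le_mul_left _ (by omega))
  obtain ⟨Y, hYX, hYc, hsparse | hsparse⟩ := hD G hH w X (by linarith)
  · exact .inr ⟨Y, hYX, 2 * w, by omega, hX2w, by rw [hYc]; nlinarith, hsparse⟩
  · exact .inl (hasPurePair_of_sparse_compl (by omega) hL hYX hX2w (by rw [hYc]; nlinarith)
      hsparse hC)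

section Grouping

variable {ι : Type*} [DecidableEq ι] {col : V → ι} {w T : ℕ}

lemma exists_card_filter_mem_le_add (hw : ∀ i, (Y.filter (col · = i)).card ≤ w)
    (hT : T ≤ Y.card) :
    ∃ I : Finset ι, T ≤ (Y.filter (col · ∈ I)).card ∧ (Y.filter (col · ∈ I)).card ≤ T + w := by
  have hall : T ≤ (Y.filter (col · ∈ Y.image col)).card := by
    rwa [Finset.filter_true_of_mem fun x => Finset.mem_image_of_mem col]
  generalize Y.image col = I at hall
  induction I using Finset.induction_on with
  | empty => exact ⟨∅, hall, by simp⟩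
  | insert i I _ ih =>
    by_cases hI : T ≤ (Y.filter (col · ∈ I)).card
    · exact ih hI
    · classical
      refine ⟨insert i I, hall, ?_⟩
      have hunion : Y.filter (col · ∈ insert i I) =
          Y.filter (col · = i) ∪ Y.filter (col · ∈ I) := by
        simp only [Finset.mem_insert, Finset.filter_or]
      have hcard := Finset.card_union_le (Y.filter (col · = i)) (Y.filter (col · ∈ I))
      rw [hunion]
      linarith [hw i]

lemma exists_grouping (N : ℕ) (hw : ∀ i, (Y.filter (col · = i)).card ≤ w)
    (hY : N * (T + w) ≤ Y.card) :
    ∃ κ : ι → ℕ, ∀ j < N, T ≤ (Y.filter fun x => κ (col x) = j).card := by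
  induction N generalizing Y with
  | zero => exact ⟨fun _ => 0, by simp⟩
  | succ N ih =>
    obtain ⟨I, hTI, hIT⟩ := exists_card_filter_mem_le_add hw (T := T) (by nlinarith)
    have hsplit := Finset.card_filter_add_card_filter_not (s := Y) (col · ∈ I)
    obtain ⟨κ, hκ⟩ := ih (Y := Y.filter (col · ∉ I))
      (fun i => (hw i).trans' <| Finset.card_le_card <|
        Finset.filter_subset_filter _ (Finset.filter_subset _ _)) (by linarith)
    refine ⟨fun i => if i ∈ I then N else if κ i = N then N + 1 else κ i, fun j hj => ?_⟩
    rcases Nat.lt_succ_iff_lt_or_eq.1 hj with hjN | rfl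
    · refine (hκ j hjN).trans (Finset.card_le_card fun x hx => ?_)
      grind
    · exact hTI.trans (Finset.card_le_card fun x hx => by grind)

end Grouping

lemma exists_coherent_of_not_hasPurePair {ι : Type*} [DecidableEq ι] {col : V → ι} {D e w T N : ℕ}
    (hX : ¬ HasPurePair G X D) (hXe : X.card ≤ D * e) (hYX : Y ⊆ X)
    (hdeg : ∀ x ∈ Y, (neighborsIn G Y x).card ≤ e)
    (hw : ∀ i, (Y.filter (col · = i)).card ≤ w) (hY : N * (T + w) ≤ Y.card) :
    ∃ (κ : ι → ℕ) (Z : ℕ → Finset V), Coherent G (κ ∘ col) Z (Finset.range N) e ∧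
      (∀ j, Z j ⊆ Y) ∧ ∀ j < N, T ≤ (Z j).card := by
  obtain ⟨κ, hκ⟩ := exists_grouping N hw hY
  have hZY : ∀ j, Y.filter (fun x => κ (col x) = j) ⊆ Y := fun _ => Finset.filter_subset _ _
  refine ⟨κ, fun j => Y.filter fun x => κ (col x) = j, ⟨?_, ?_, ?_⟩, hZY, hκ⟩
  · exact fun j _ x hx => (Finset.mem_filter.1 hx).2
  · exact fun i _ x hx j _ =>
      (card_neighborsIn_mono G (hZY j) x).trans (hdeg x (hZY i hx))
  · intro i _ j _ hij A hA B hB hAe hBe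
    have hdisj : Disjoint A B := Finset.disjoint_left.2 fun x hxA hxB => hij <|
      (Finset.mem_filter.1 (hA hxA)).2.symm.trans (Finset.mem_filter.1 (hB hxB)).2
    exact (exists_adj_and_exists_compl_adj_of_not_hasPurePair hX hXe
      ((hA.trans (hZY i)).trans hYX) ((hB.trans (hZY j)).trans hYX) hdisj hAe hBe).1

theorem exists_hasPurePair_or_injective_embedding {U W : Type*} [Finite U] [Finite W]
    (H : SimpleGraph U) {L : ℕ} (hL : 2 ≤ L) {F : SimpleGraph W} (hF : F.IsAcyclic) :
    ∃ D, 1 ≤ D ∧ ∀ {V ι : Type*} [DecidableEq ι] (G : SimpleGraph V), ¬ H ⊴ G →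
      (∀ m, L ≤ m → ¬ (cycleGraph m)ᶜ ⊴ G) →
      ∀ (S : Finset V) (col : V → ι) (w : ℕ), 1 ≤ w →
        (∀ i, (S.filter (col · = i)).card ≤ w) → D * w ≤ S.card →
        HasPurePair G S D ∨
          ∃ f : F ↪g G, (∀ u, f u ∈ S) ∧ Function.Injective (col ∘ f) := by
  obtain ⟨N, C, hcopy⟩ := exists_hasRainbowCopy_of_coherent hF
  obtain ⟨D, hD, hsparse⟩ := exists_hasPurePair_or_sparse H hL (N * (C + 1))
  refine ⟨D, hD, fun G hH hC S col w hw hcol hS => or_iff_not_imp_left.2 fun hpure => ?_⟩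
  obtain ⟨Y, hYS, e, he, hSe, hYe, hdeg⟩ :=
    (hsparse G hH hC S ((Nat.le_mul_of_pos_right D hw).trans hS)).resolve_left hpure
  have hwe : w ≤ e := Nat.le_of_mul_le_mul_left (hS.trans hSe) hD
  obtain ⟨κ, Z, hZ, hZY, hZc⟩ := exists_coherent_of_not_hasPurePair (T := C * e) hpure hSe hYS hdeg
    (fun i => (Finset.card_le_card (Finset.filter_subset_filter _ hYS)).trans (hcol i))
    (hYe.trans' (by nlinarith [Nat.mul_le_mul_left N hwe]))
  obtain ⟨f, hf, hinj⟩ := hcopy G _ Z e he hZ hZc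
  exact ⟨f, fun u => hYS (hZY _ (hf u).2), Function.Injective.of_comp (f := κ) hinj⟩

end PurePairs

section Homogeneous

variable {V : Type*}

open Classical in
/-- The largest size of a clique contained in `X`. -/
noncomputable def cliqueNumOn (G : SimpleGraph V) (X : Finset V) : ℕ :=
  (X.powerset.filter fun K : Finset V => G.IsClique (K : Set V)).sup Finset.card

/-- The product of the largest sizes of a clique and of a stable set contained in `X`. -/
noncomputable def homNum (G : SimpleGraph V) (X : Finset V) : ℕ :=
  cliqueNumOn G X * cliqueNumOn Gᶜ X

variable {G : SimpleGraph V} {X Y A B K : Finset V}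

lemma card_le_cliqueNumOn (hK : K ⊆ X) (h : G.IsClique (K : Set V)) :
    K.card ≤ cliqueNumOn G X := by
  classical
  exact Finset.le_sup (f := Finset.card)
    (Finset.mem_filter.2 ⟨Finset.mem_powerset.2 hK, h⟩)

lemma exists_card_eq_cliqueNumOn (G : SimpleGraph V) (X : Finset V) :
    ∃ K ⊆ X, G.IsClique (K : Set V) ∧ K.card = cliqueNumOn G X := by
  classical
  obtain ⟨K, hK, hcard⟩ := Finset.exists_mem_eq_sup
    (X.powerset.filter fun K : Finset V => G.IsClique (K : Set V)) ⟨∅, by simp⟩ Finset.card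
  rw [Finset.mem_filter, Finset.mem_powerset] at hK
  exact ⟨K, hK.1, hK.2, hcard.symm⟩

lemma cliqueNumOn_mono (h : X ⊆ Y) : cliqueNumOn G X ≤ cliqueNumOn G Y := by
  obtain ⟨K, hKX, hK, hcard⟩ := exists_card_eq_cliqueNumOn G X
  exact hcard ▸ card_le_cliqueNumOn (hKX.trans h) hK

lemma one_le_cliqueNumOn (h : X.Nonempty) : 1 ≤ cliqueNumOn G X := by
  obtain ⟨x, hx⟩ := h
  exact card_le_cliqueNumOn (K := {x}) (by simpa using hx) (by simp)

lemma cliqueNumOn_univ_le_cliqueNum [Fintype V] (G : SimpleGraph V) :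
    cliqueNumOn G Finset.univ ≤ G.cliqueNum := by
  obtain ⟨K, -, hK, hcard⟩ := exists_card_eq_cliqueNumOn G Finset.univ
  exact hcard ▸ hK.card_le_cliqueNum

lemma isClique_union {s t : Set V} (hs : G.IsClique s) (ht : G.IsClique t)
    (h : ∀ a ∈ s, ∀ b ∈ t, G.Adj a b) : G.IsClique (s ∪ t) := by
  rintro x (hx | hx) y (hy | hy) hxy
  · exact hs hx hy hxy
  · exact h x hx y hy
  · exact (h y hy x hx).symm
  · exact ht hx hy hxy

lemma cliqueNumOn_add_le (hA : A ⊆ X) (hB : B ⊆ X) (hAB : Disjoint A B)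
    (h : ∀ a ∈ A, ∀ b ∈ B, G.Adj a b) : cliqueNumOn G A + cliqueNumOn G B ≤ cliqueNumOn G X := by
  classical
  obtain ⟨K, hKA, hK, hKcard⟩ := exists_card_eq_cliqueNumOn G A
  obtain ⟨J, hJB, hJ, hJcard⟩ := exists_card_eq_cliqueNumOn G B
  rw [← hKcard, ← hJcard, ← Finset.card_union_of_disjoint (hAB.mono hKA hJB)]
  refine card_le_cliqueNumOn (Finset.union_subset (hKA.trans hA) (hJB.trans hB)) ?_
  rw [Finset.coe_union]
  exact isClique_union hK hJ fun a ha b hb => h a (hKA ha) b (hJB hb)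

lemma homNum_mono (h : X ⊆ Y) : homNum G X ≤ homNum G Y :=
  Nat.mul_le_mul (cliqueNumOn_mono h) (cliqueNumOn_mono h)

lemma homNum_compl : homNum Gᶜ X = homNum G X := by
  rw [homNum, homNum, compl_compl, mul_comm]

lemma homNum_add_le_of_complete (hA : A ⊆ X) (hB : B ⊆ X) (hAB : Disjoint A B)
    (h : ∀ a ∈ A, ∀ b ∈ B, G.Adj a b) : homNum G A + homNum G B ≤ homNum G X := by
  calc homNum G A + homNum G B
      ≤ cliqueNumOn G A * cliqueNumOn Gᶜ X + cliqueNumOn G B * cliqueNumOn Gᶜ X :=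
        Nat.add_le_add (Nat.mul_le_mul_left _ (cliqueNumOn_mono hA))
          (Nat.mul_le_mul_left _ (cliqueNumOn_mono hB))
    _ = (cliqueNumOn G A + cliqueNumOn G B) * cliqueNumOn Gᶜ X := (Nat.add_mul ..).symm
    _ ≤ homNum G X := Nat.mul_le_mul_right _ (cliqueNumOn_add_le hA hB hAB h)

lemma homNum_add_le (hA : A ⊆ X) (hB : B ⊆ X) (hAB : Disjoint A B)
    (h : (∀ a ∈ A, ∀ b ∈ B, G.Adj a b) ∨ ∀ a ∈ A, ∀ b ∈ B, ¬ G.Adj a b) :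
    homNum G A + homNum G B ≤ homNum G X := by
  rcases h with hcomplete | hanti
  · exact homNum_add_le_of_complete hA hB hAB hcomplete
  · have hcompl := homNum_add_le_of_complete (G := Gᶜ) hA hB hAB fun a ha b hb =>
      (compl_adj _ _ _).2 ⟨fun hab => Finset.disjoint_left.1 hAB ha (hab ▸ hb), hanti a ha b hb⟩
    simpa only [homNum_compl] using hcompl

lemma one_le_homNum (h : X.Nonempty) : 1 ≤ homNum G X :=
  Nat.mul_pos (one_le_cliqueNumOn h) (one_le_cliqueNumOn h)

lemma two_le_homNum (h : 2 ≤ X.card) : 2 ≤ homNum G X := by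
  obtain ⟨x, hx, y, hy, hxy⟩ := Finset.one_lt_card.1 h
  have hadd := homNum_add_le (G := G) (A := {x}) (B := {y}) (X := X) (by simpa using hx)
    (by simpa using hy) (by simpa using hxy) (by simpa using em (G.Adj x y))
  have hx1 := one_le_homNum (G := G) (Finset.singleton_nonempty x)
  have hy1 := one_le_homNum (G := G) (Finset.singleton_nonempty y)
  omega

lemma card_rpow_le_homNum_of_le_two {c : ℝ} (hc : c ≠ 0) (h : (X.card : ℝ) ^ c ≤ 2) :
    (X.card : ℝ) ^ c ≤ homNum G X := by
  obtain hzero | hone | htwo : X.card = 0 ∨ X.card = 1 ∨ 2 ≤ X.card := by omega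
  · simp [hzero, Real.zero_rpow hc]
  · rw [hone, Nat.cast_one, Real.one_rpow]
    exact_mod_cast one_le_homNum (Finset.card_pos.1 (hone ▸ one_pos))
  · exact h.trans (mod_cast two_le_homNum htwo)

lemma HasPurePair.exists_homNum_add_le {D : ℕ} (h : HasPurePair G X D) (hX : X.Nonempty) :
    ∃ A ⊂ X, ∃ B ⊂ X, X.card ≤ D * A.card ∧ X.card ≤ D * B.card ∧
      homNum G A + homNum G B ≤ homNum G X := by
  obtain ⟨A, hA, B, hB, hAB, hAc, hBc, hpure⟩ := h
  obtain ⟨a, ha⟩ : A.Nonempty :=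
    Finset.card_pos.1 (Nat.pos_of_mul_pos_left (hX.card_pos.trans_le hAc))
  obtain ⟨b, hb⟩ : B.Nonempty :=
    Finset.card_pos.1 (Nat.pos_of_mul_pos_left (hX.card_pos.trans_le hBc))
  exact ⟨A, ⟨hA, fun hXA => Finset.disjoint_left.1 hAB (hXA (hB hb)) hb⟩,
    B, ⟨hB, fun hXB => Finset.disjoint_left.1 hAB ha (hXB (hA ha))⟩, hAc, hBc,
    homNum_add_le hA hB hAB hpure⟩

lemma rpow_le_two_mul_rpow {D x a c : ℝ} (hD : 0 ≤ D) (hx : 0 ≤ x) (ha : 0 ≤ a) (hc : 0 ≤ c)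
    (hDc : D ^ c ≤ 2) (h : x ≤ D * a) : x ^ c ≤ 2 * a ^ c := by
  calc x ^ c ≤ (D * a) ^ c := Real.rpow_le_rpow hx h hc
    _ = D ^ c * a ^ c := Real.mul_rpow hD ha
    _ ≤ 2 * a ^ c := by gcongr

lemma HasPurePair.mul_card_rpow_le_homNum {D : ℕ} {K c : ℝ} (h : HasPurePair G X D)
    (hX : X.Nonempty) (hK : 0 ≤ K) (hc : 0 ≤ c) (hD : (D : ℝ) ^ c ≤ 2)
    (hsub : ∀ Z ⊂ X, K * (Z.card : ℝ) ^ c ≤ homNum G Z) :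
    K * (X.card : ℝ) ^ c ≤ homNum G X := by
  obtain ⟨A, hA, B, hB, hAc, hBc, hAB⟩ := h.exists_homNum_add_le hX
  have hhalf : ∀ Z ⊂ X, X.card ≤ D * Z.card → K * (X.card : ℝ) ^ c ≤ 2 * homNum G Z := by
    intro Z hZ hZc
    have hrpow : (X.card : ℝ) ^ c ≤ 2 * (Z.card : ℝ) ^ c :=
      rpow_le_two_mul_rpow D.cast_nonneg (by positivity) (by positivity) hc hD (mod_cast hZc)
    linarith [mul_le_mul_of_nonneg_left hrpow hK, hsub Z hZ]
  have hadd : (homNum G A + homNum G B : ℝ) ≤ homNum G X := mod_cast hAB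
  linarith [hhalf A hA hAc, hhalf B hB hBc]

lemma rpow_mul_div_rpow_le {s M w c c₁ : ℝ} (hs : 0 ≤ s) (hM : 1 ≤ M) (hw : 0 < w) (hc : 0 ≤ c)
    (hcc : c ≤ c₁) (hsM : s ≤ M * w) : w ^ c * (s / (M * w)) ^ c₁ ≤ s ^ c := by
  have hMw : 0 < M * w := by positivity
  calc w ^ c * (s / (M * w)) ^ c₁
      ≤ w ^ c * (s / (M * w)) ^ c := by
        gcongr 1
        exact Real.rpow_le_rpow_of_exponent_ge' (by positivity) ((div_le_one hMw).2 hsM) hc hcc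
    _ ≤ w ^ c * (s / w) ^ c := by
        gcongr
        exact le_mul_of_one_le_left hw.le hM
    _ = s ^ c := by
        rw [← Real.mul_rpow hw.le (by positivity), mul_div_cancel₀ _ hw.ne']

lemma rpow_mul_div_rpow_le_homNum {D M w : ℕ} {c c₁ : ℝ} (hM : 1 ≤ M) (hw : 1 ≤ w)
    (hc : 0 ≤ c) (hcc : c ≤ c₁) (hD : (D : ℝ) ^ c₁ ≤ 2)
    (hpure : ∀ S ⊆ X, M * w ≤ S.card → HasPurePair G S D)
    (hsub : ∀ S ⊆ X, (S.card : ℝ) ^ c ≤ homNum G S) :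
    (w : ℝ) ^ c * (X.card / (M * w)) ^ c₁ ≤ homNum G X := by
  induction X using Finset.strongInduction with
  | H X ih =>
  rcases le_total (M * w) X.card with hlarge | hsmall
  · have hX : X.Nonempty := Finset.card_pos.1 (hlarge.trans_lt' (Nat.mul_pos hM hw))
    have hfactor : ∀ Z : Finset V, (w : ℝ) ^ c * (Z.card / (M * w)) ^ c₁ =
        (w : ℝ) ^ c / (M * w) ^ c₁ * (Z.card : ℝ) ^ c₁ := fun Z => by
      rw [Real.div_rpow (by positivity) (by positivity), mul_div_assoc', div_mul_eq_mul_div]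
    rw [hfactor]
    refine (hpure X subset_rfl hlarge).mul_card_rpow_le_homNum hX (by positivity) (hc.trans hcc) hD
      fun Z hZ => ?_
    rw [← hfactor]
    exact ih Z hZ (fun S hS => hpure S (hS.trans hZ.1)) fun S hS => hsub S (hS.trans hZ.1)
  · exact (rpow_mul_div_rpow_le X.card.cast_nonneg (mod_cast hM) (mod_cast hw) hc hcc
      (mod_cast hsmall)).trans (hsub X subset_rfl)

end Homogeneous

section Expanding

variable {V : Type*} {G : SimpleGraph V} {Y Z T S R : Finset V} {v : V} {a e : ℕ}

/-- A vertex `v` of `Y` together with a stable set `S` of neighbours of `v` and a large set `B` of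
nonneighbours of `v` such that every vertex of `B` has a neighbour in `S`, and no vertex of `S` has
more than `Δ` neighbours in `B`. -/
structure IsExpanding (G : SimpleGraph V) (Y : Finset V) (v : V) (Δ : ℕ) (S B : Finset V) :
    Prop where
  mem : v ∈ Y
  subset_neighborsIn : S ⊆ neighborsIn G Y v
  subset : B ⊆ Y
  ne_and_not_adj : ∀ b ∈ B, b ≠ v ∧ ¬ G.Adj v b
  isClique_compl : Gᶜ.IsClique (S : Set V)
  card_neighborsIn_le : ∀ s ∈ S, (neighborsIn G B s).card ≤ Δ
  exists_adj : ∀ b ∈ B, ∃ s ∈ S, G.Adj s b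
  lt_card : 100 * √(Y.card * Δ) < B.card

/-- A stage of the greedy growth of a stable set in `Y`: the stable set `T` chosen so far has no
neighbour in the set `Z` of vertices still available, and the number of vertices used up is at most
`T.card / (2 * a)` times the size of `Y`. -/
structure IsGreedy (G : SimpleGraph V) (Y : Finset V) (a : ℕ) (T Z : Finset V) : Prop where
  chosen_subset : T ⊆ Y
  available_subset : Z ⊆ Y
  disjoint : Disjoint T Z
  not_adj : ∀ t ∈ T, ∀ z ∈ Z, ¬ G.Adj t z
  isClique_compl : Gᶜ.IsClique (T : Set V)
  card_le : 2 * (a : ℝ) * (Y.card - Z.card) ≤ T.card * Y.card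

lemma isGreedy_empty (G : SimpleGraph V) (Y : Finset V) (a : ℕ) : IsGreedy G Y a ∅ Y :=
  ⟨by simp, subset_rfl, by simp, by simp, by simp, by simp⟩

lemma IsGreedy.extend [DecidableEq V] (h : IsGreedy G Y a T Z) (hSZ : S ⊆ Z)
    (hS : Gᶜ.IsClique (S : Set V)) (hSR : ∀ z ∈ Z, z ∉ R → z ∉ S ∧ ∀ s ∈ S, ¬ G.Adj s z)
    (hcard : 2 * (a : ℝ) * R.card ≤ S.card * Y.card) : IsGreedy G Y a (T ∪ S) (Z \ R) where
  chosen_subset := Finset.union_subset h.chosen_subset (hSZ.trans h.available_subset)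
  available_subset := Finset.sdiff_subset.trans h.available_subset
  disjoint := by
    refine Finset.disjoint_union_left.2
      ⟨h.disjoint.mono_right Finset.sdiff_subset, Finset.disjoint_right.2 fun z hz => ?_⟩
    exact (hSR z (Finset.mem_sdiff.1 hz).1 (Finset.mem_sdiff.1 hz).2).1
  not_adj t ht z hz := by
    obtain ⟨hzZ, hzR⟩ := Finset.mem_sdiff.1 hz
    rcases Finset.mem_union.1 ht with ht | ht
    · exact h.not_adj t ht z hzZ
    · exact (hSR z hzZ hzR).2 t ht
  isClique_compl := by
    rw [Finset.coe_union]
    exact isClique_union h.isClique_compl hS fun t ht s hs => (compl_adj _ _ _).2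
      ⟨fun hts => Finset.disjoint_left.1 h.disjoint ht (hts ▸ hSZ hs), h.not_adj t ht s (hSZ hs)⟩
  card_le := by
    have hZR : (Z.card : ℝ) ≤ (Z \ R).card + R.card := by
      exact_mod_cast Nat.sub_le_iff_le_add.1 (Finset.le_card_sdiff R Z)
    rw [Finset.card_union_of_disjoint (h.disjoint.mono_right hSZ)]
    push_cast
    calc 2 * (a : ℝ) * (Y.card - (Z \ R).card)
        ≤ 2 * a * (Y.card - Z.card) + 2 * a * R.card := by
          rw [← mul_add]
          gcongr
          linarith
      _ ≤ (T.card + S.card) * Y.card := by linarith [h.card_le]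

lemma IsGreedy.lt_card (h : IsGreedy G Y a T Z) (hstab : cliqueNumOn Gᶜ Y ≤ a)
    (ha : 2 * a < Y.card) : a < Z.card := by
  have hT : (T.card : ℝ) ≤ a := by
    exact_mod_cast (card_le_cliqueNumOn h.chosen_subset h.isClique_compl).trans hstab
  have ha' : 2 * (a : ℝ) < Y.card := by exact_mod_cast ha
  have ha_pos : (0 : ℝ) < a := by
    exact_mod_cast (one_le_cliqueNumOn (Finset.card_pos.1 (by omega))).trans hstab
  have hhalf : 2 * ((Y.card : ℝ) - Z.card) ≤ Y.card := by
    refine le_of_mul_le_mul_left ?_ ha_pos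
    calc (a : ℝ) * (2 * (Y.card - Z.card)) = 2 * a * (Y.card - Z.card) := by ring
      _ ≤ T.card * Y.card := h.card_le
      _ ≤ a * Y.card := by gcongr
  exact_mod_cast (by linarith : (a : ℝ) < Z.card)

lemma exists_forall_card_neighborsIn_le (h : cliqueNumOn Gᶜ Z < Z.card) :
    ∃ v ∈ Z, (neighborsIn G Z v).Nonempty ∧
      ∀ x ∈ Z, (neighborsIn G Z x).card ≤ (neighborsIn G Z v).card := by
  obtain ⟨v, hv, hmax⟩ := Finset.exists_max_image Z (fun x => (neighborsIn G Z x).card)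
    (Finset.card_pos.1 (by omega))
  refine ⟨v, hv, Finset.nonempty_iff_ne_empty.2 fun hempty => ?_, hmax⟩
  refine h.not_ge (card_le_cliqueNumOn subset_rfl fun x hx y hy hxy => ?_)
  refine (compl_adj _ _ _).2 ⟨hxy, fun hadj => ?_⟩
  have hpos := Finset.card_pos.2 ⟨y, mem_neighborsIn.2 ⟨hy, hadj⟩⟩
  have hle := hmax x hx
  rw [hempty, Finset.card_empty] at hle
  omega

lemma isExpanding_neighborsOf [DecidableEq V] (hZY : Z ⊆ Y) (hv : v ∈ Z)
    (hmax : ∀ x ∈ Z, (neighborsIn G Z x).card ≤ (neighborsIn G Z v).card)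
    (hSv : S ⊆ neighborsIn G Z v) (hS : Gᶜ.IsClique (S : Set V))
    (hcard : 100 * √(Y.card * (neighborsIn G Z v).card) <
      (neighborsOf G (Z \ insert v (neighborsIn G Z v)) S).card) :
    IsExpanding G Y v (neighborsIn G Z v).card S
      (neighborsOf G (Z \ insert v (neighborsIn G Z v)) S) := by
  have hsub : neighborsOf G (Z \ insert v (neighborsIn G Z v)) S ⊆ Z := fun b hb =>
    (Finset.mem_sdiff.1 (mem_neighborsOf.1 hb).1).1
  refine ⟨hZY hv, hSv.trans (neighborsIn_mono G hZY v), hsub.trans hZY, fun b hb => ?_, hS,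
    fun s hs => ?_, fun b hb => ?_, hcard⟩
  · have hb' := (Finset.mem_sdiff.1 (mem_neighborsOf.1 hb).1).2
    rw [Finset.mem_insert, mem_neighborsIn, not_or] at hb'
    exact ⟨hb'.1, fun hvb => hb'.2 ⟨hsub hb, hvb⟩⟩
  · exact (card_neighborsIn_mono G hsub s).trans (hmax s (neighborsIn_subset G Z v (hSv hs)))
  · obtain ⟨-, s, hs, hbs⟩ := mem_neighborsOf.1 hb
    exact ⟨s, hs, hbs.symm⟩

lemma not_mem_and_not_adj_of_not_mem [DecidableEq V] {b : V} (hSv : S ⊆ neighborsIn G Z v)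
    (hb : b ∈ Z) (hbR : b ∉ insert v (neighborsIn G Z v) ∪
      neighborsOf G (Z \ insert v (neighborsIn G Z v)) S) :
    b ∉ S ∧ ∀ s ∈ S, ¬ G.Adj s b := by
  rw [Finset.mem_union, not_or] at hbR
  exact ⟨fun hbS => hbR.1 (Finset.mem_insert_of_mem (hSv hbS)), fun s hs hsb =>
    hbR.2 (mem_neighborsOf.2 ⟨Finset.mem_sdiff.2 ⟨hb, hbR.1⟩, s, hs, hsb.symm⟩)⟩

lemma card_insert_union_le_sqrt [DecidableEq V] {N B : Finset V} (hN : N.Nonempty)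
    (hNY : N.card ≤ Y.card) (hB : (B.card : ℝ) ≤ 100 * √(Y.card * N.card)) :
    ((insert v N ∪ B).card : ℝ) ≤ 102 * √(Y.card * N.card) := by
  have hone : (1 : ℝ) ≤ N.card := by exact_mod_cast hN.card_pos
  have hNY' : (N.card : ℝ) ≤ Y.card := by exact_mod_cast hNY
  have hsqrt : (N.card : ℝ) ≤ √(Y.card * N.card) := Real.le_sqrt_of_sq_le (by nlinarith)
  have hunion : ((insert v N ∪ B).card : ℝ) ≤ N.card + 1 + B.card := by
    exact_mod_cast (Finset.card_union_le _ _).trans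
      (Nat.add_le_add_right (Finset.card_insert_le v N) _)
  linarith

lemma IsGreedy.exists_isExpanding_or_ssubset (h : IsGreedy G Y a T Z) (heY : e ≤ Y.card)
    (hdeg : ∀ x ∈ Y, (neighborsIn G Y x).card ≤ e) (hstab : cliqueNumOn Gᶜ Y ≤ a)
    (ha : 2 * a < Y.card) (hlarge : ∀ X ⊆ Y, X.Nonempty → X.card ≤ e →
      204 * (a : ℝ) * √(Y.card * X.card) ≤ cliqueNumOn Gᶜ X * Y.card) :
    (∃ v Δ S B, IsExpanding G Y v Δ S B) ∨ ∃ T', ∃ Z' ⊂ Z, IsGreedy G Y a T' Z' := by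
  classical
  obtain ⟨v, hv, hne, hmax⟩ := exists_forall_card_neighborsIn_le (G := G) (Z := Z)
    (((cliqueNumOn_mono h.available_subset).trans hstab).trans_lt (h.lt_card hstab ha))
  have hZY := h.available_subset
  have hNe : (neighborsIn G Z v).card ≤ e :=
    (card_neighborsIn_mono G hZY v).trans (hdeg v (hZY hv))
  have hNZ := neighborsIn_subset G Z v
  obtain ⟨S, hSv, hS, hScard⟩ := exists_card_eq_cliqueNumOn Gᶜ (neighborsIn G Z v)
  by_cases hB : 100 * √(Y.card * (neighborsIn G Z v).card) <
      (neighborsOf G (Z \ insert v (neighborsIn G Z v)) S).card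
  · exact Or.inl ⟨v, _, S, _, isExpanding_neighborsOf hZY hv hmax hSv hS hB⟩
  · refine Or.inr ⟨T ∪ S, _, ?_, h.extend (hSv.trans hNZ) hS
      (fun z hz => not_mem_and_not_adj_of_not_mem hSv hz) ?_⟩
    · exact (Finset.ssubset_iff_of_subset Finset.sdiff_subset).2 ⟨v, hv, by simp⟩
    · rw [hScard]
      refine le_trans ?_ (hlarge _ (hNZ.trans hZY) hne hNe)
      have hR := card_insert_union_le_sqrt (v := v) hne (hNe.trans heY) (not_lt.1 hB)
      calc _ ≤ 2 * (a : ℝ) * (102 * √(Y.card * (neighborsIn G Z v).card)) := by gcongr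
        _ = _ := by ring

/-- While no stable set of neighbours expands, it can be added to the greedy stable set at the price
of few vertices; this must fail at some point since the greedy stable set is bounded. -/
lemma exists_isExpanding (heY : e ≤ Y.card) (hdeg : ∀ x ∈ Y, (neighborsIn G Y x).card ≤ e)
    (hstab : cliqueNumOn Gᶜ Y ≤ a) (ha : 2 * a < Y.card)
    (hlarge : ∀ X ⊆ Y, X.Nonempty → X.card ≤ e →
      204 * (a : ℝ) * √(Y.card * X.card) ≤ cliqueNumOn Gᶜ X * Y.card) :
    ∃ v Δ S B, IsExpanding G Y v Δ S B := by
  suffices hgreedy : ∀ Z T, IsGreedy G Y a T Z → ∃ v Δ S B, IsExpanding G Y v Δ S B from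
    hgreedy Y ∅ (isGreedy_empty G Y a)
  intro Z
  induction Z using Finset.strongInduction with
  | H Z ih =>
  intro T h
  obtain hexp | ⟨T', Z', hZ', h'⟩ :=
    h.exists_isExpanding_or_ssubset heY hdeg hstab ha hlarge
  · exact hexp
  · exact ih Z' hZ' T' h'

end Expanding

section StarExpansion

variable {V W : Type*} {G : SimpleGraph V} {F : SimpleGraph W}

lemma starExpansion_isIndContained {v : V} (f : F ↪g G) (g : W → V)
    (hgf : ∀ u u', G.Adj (g u) (f u') ↔ u = u') (hgg : ∀ u u', ¬ G.Adj (g u) (g u'))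
    (hvg : ∀ u, G.Adj v (g u)) (hvf : ∀ u, f u ≠ v ∧ ¬ G.Adj v (f u)) :
    starExpansion F ⊴ G := by
  have hg : Function.Injective g := fun u u' h => (hgf u u').1 (h ▸ (hgf u' u').2 rfl)
  have hfg : ∀ u u', f u ≠ g u' := fun u u' h => (hvf u).2 (h ▸ hvg u')
  refine ⟨⟨⟨Sum.elim f (Sum.elim g fun _ => v), f.injective.sumElim
    (hg.sumElim (Function.injective_of_subsingleton _) fun u _ => (hvg u).ne') ?_⟩, ?_⟩⟩
  · rintro u (u' | _)
    · exact hfg u u'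
    · exact (hvf u).1
  · rintro (x | x | x) (y | y | y)
    case inl.inl => simpa [starExpansion, F.adj_comm y x] using fun h : F.Adj x y => h.ne
    all_goals simp [starExpansion, hgf, hgg, hvg, hvf, G.adj_comm _ (g _), G.adj_comm _ v, eq_comm]

end StarExpansion

section RootedComb

variable {V W : Type*} {G : SimpleGraph V} {F : SimpleGraph W} {A B : Finset V} {w : ℕ}
  {P : V → Finset V} {v : V}

/-- A comb whose spine `A` is a stable set of neighbours of the root `v` and whose teeth consist of
nonneighbours of `v`. -/
structure IsRootedComb (G : SimpleGraph V) (v : V) (A B : Finset V) (w : ℕ) (P : V → Finset V) :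
    Prop extends IsComb G A B w P where
  isClique_compl : Gᶜ.IsClique (A : Set V)
  adj : ∀ a ∈ A, G.Adj v a
  ne_and_not_adj : ∀ b ∈ B, b ≠ v ∧ ¬ G.Adj v b

lemma IsRootedComb.starExpansion_isIndContained {f : F ↪g G} {col : V → V}
    (h : IsRootedComb G v A B w P) (hcol : ∀ u, col (f u) ∈ A ∧ f u ∈ P (col (f u)))
    (hinj : Function.Injective (col ∘ f)) : starExpansion F ⊴ G := by
  refine _root_.starExpansion_isIndContained (v := v) f (col ∘ f) (fun u u' => ?_)
    (fun u u' hadj => ?_) (fun u => h.adj _ (hcol u).1)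
    fun u => h.ne_and_not_adj _ (h.subset _ (hcol u).1 (hcol u).2)
  · rw [Function.comp_apply, h.adj_iff _ (hcol u').1 _ (hcol u').2 _ (hcol u).1]
    exact hinj.eq_iff
  · exact ((compl_adj _ _ _).1 (h.isClique_compl (hcol u).1 (hcol u').1 hadj.ne)).2 hadj

lemma IsRootedComb.hasPurePair [DecidableEq V] {Q : Finset V} {D : ℕ}
    (h : IsRootedComb G v A B w P) (hG : ¬ starExpansion F ⊴ G) (hQ : Q ⊆ A.biUnion P)
    (hpair : ∀ col : V → V, (∀ i, (Q.filter (col · = i)).card ≤ w) → HasPurePair G Q D ∨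
      ∃ f : F ↪g G, (∀ u, f u ∈ Q) ∧ Function.Injective (col ∘ f)) :
    HasPurePair G Q D := by
  have : Nonempty V := ⟨v⟩
  have htooth : ∀ b ∈ Q, ∃ a ∈ A, b ∈ P a := fun b hb => Finset.mem_biUnion.1 (hQ hb)
  choose! col hcolA hcolP using htooth
  have hcard : ∀ i, (Q.filter (col · = i)).card ≤ w := by
    intro i
    obtain hempty | ⟨b, hb⟩ := (Q.filter (col · = i)).eq_empty_or_nonempty
    · simp [hempty]
    · obtain ⟨hbQ, rfl⟩ := Finset.mem_filter.1 hb
      rw [← h.card _ (hcolA b hbQ)]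
      refine Finset.card_le_card fun x hx => ?_
      obtain ⟨hxQ, hxb⟩ := Finset.mem_filter.1 hx
      exact hxb ▸ hcolP x hxQ
  refine (hpair col hcard).resolve_right ?_
  rintro ⟨f, hfQ, hinj⟩
  exact hG (h.starExpansion_isIndContained (fun u => ⟨hcolA _ (hfQ u), hcolP _ (hfQ u)⟩) hinj)

lemma IsExpanding.exists_isRootedComb {Y S : Finset V} {Δ e : ℕ} (h : IsExpanding G Y v Δ S B)
    (hdeg : ∀ x ∈ Y, (neighborsIn G Y x).card ≤ e) :
    ∃ A w P, 1 ≤ w ∧ w ≤ e ∧ Y.card ≤ A.card ^ 2 * w ∧ IsRootedComb G v A B w P := by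
  obtain ⟨A, hAS, w, P, hw, hYA, hcomb⟩ :=
    exists_isComb h.card_neighborsIn_le h.exists_adj h.lt_card
  have hAY : ∀ a ∈ A, a ∈ Y ∧ G.Adj v a := fun a ha =>
    mem_neighborsIn.1 (h.subset_neighborsIn (hAS ha))
  obtain ⟨a, ha⟩ : A.Nonempty := by
    rw [Finset.nonempty_iff_ne_empty]
    rintro rfl
    simp [Finset.ne_empty_of_mem h.mem] at hYA
  refine ⟨A, w, P, hw, ?_, hYA, hcomb, h.isClique_compl.subset (mod_cast hAS),
    fun x hx => (hAY x hx).2, h.ne_and_not_adj⟩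
  rw [← hcomb.card a ha]
  refine (Finset.card_le_card fun b hb => ?_).trans (hdeg a (hAY a ha).1)
  exact mem_neighborsIn.2 ⟨h.subset (hcomb.subset a ha hb), (hcomb.adj_iff a ha b hb a ha).2 rfl⟩

end RootedComb

section Exponents

lemma exists_forall_rpow_le_two {K : ℝ} (hK : 0 ≤ K) :
    ∃ c : ℝ, 0 < c ∧ ∀ c' : ℝ, 0 ≤ c' → c' ≤ c → K ^ c' ≤ 2 := by
  refine ⟨Real.logb (K + 2) 2, Real.logb_pos (by linarith) one_lt_two, fun c' h0 hc' => ?_⟩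
  calc K ^ c' ≤ (K + 2) ^ c' := by gcongr; linarith
    _ ≤ (K + 2) ^ Real.logb (K + 2) 2 := Real.rpow_le_rpow_of_exponent_le (by linarith) hc'
    _ = 2 := Real.rpow_logb (by linarith) (by linarith) two_pos

lemma mul_sqrt_le_rpow {K x c : ℝ} (hK : 1 ≤ K) (hx : 0 < x) (hKx : K ^ 4 * x ≤ 1)
    (hc : c ≤ 1 / 4) : K * √x ≤ x ^ c := by
  have hsqrt : √x = x ^ (1 / 4 : ℝ) * x ^ (1 / 4 : ℝ) := by
    rw [← Real.rpow_add hx, Real.sqrt_eq_rpow]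
    norm_num
  have hroot : K * x ^ (1 / 4 : ℝ) ≤ 1 := by
    refine (pow_le_one_iff_of_nonneg (by positivity) (by norm_num : 4 ≠ 0)).1 ?_
    rwa [mul_pow, ← Real.rpow_mul_natCast hx.le, Nat.cast_ofNat, one_div,
      inv_mul_cancel₀ (by norm_num), Real.rpow_one]
  have hx1 : x ≤ 1 := (le_mul_of_one_le_left hx.le (one_le_pow₀ hK)).trans hKx
  calc K * √x = K * x ^ (1 / 4 : ℝ) * x ^ (1 / 4 : ℝ) := by rw [hsqrt, mul_assoc]
    _ ≤ x ^ (1 / 4 : ℝ) := mul_le_of_le_one_left (by positivity) hroot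
    _ ≤ x ^ c := Real.rpow_le_rpow_of_exponent_ge hx hx1 hc

lemma mul_sqrt_mul_rpow_le {K D m n z c : ℝ} (hK : 1 ≤ 2 * K) (hD : 0 ≤ D) (hm : 0 < m)
    (hn : 0 ≤ n) (hz : 0 < z) (hnm : n ≤ D * m) (hzm : (2 * K) ^ 4 * z ≤ m) (hc : 0 ≤ c)
    (hc4 : c ≤ 1 / 4) (hDc : D ^ c ≤ 2) : K * √(m * z) * n ^ c ≤ z ^ c * m := by
  have hsmall : 2 * K * √(z / m) ≤ (z / m) ^ c :=
    mul_sqrt_le_rpow hK (by positivity) (by rwa [mul_div_assoc', div_le_one hm]) hc4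
  have hsqrt : √(m * z) = √(z / m) * m := by
    rw [show m * z = z / m * m ^ 2 by field_simp, Real.sqrt_mul (by positivity),
      Real.sqrt_sq hm.le]
  have hK0 : 0 ≤ K := by linarith
  calc K * √(m * z) * n ^ c ≤ K * (√(z / m) * m) * (2 * m ^ c) := by
        rw [hsqrt]
        gcongr
        exact rpow_le_two_mul_rpow hD hn hm.le hc hDc hnm
    _ = 2 * K * √(z / m) * m ^ c * m := by ring
    _ ≤ (z / m) ^ c * m ^ c * m := by gcongr
    _ = z ^ c * m := by
        rw [← Real.mul_rpow (by positivity) hm.le, div_mul_cancel₀ _ hm.ne']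

lemma two_mul_lt_of_lt_rpow {D m n a c : ℝ} (hD : 0 < D) (hn : 1 ≤ n) (hDn : 4 * D ^ 2 ≤ n)
    (hnm : n ≤ D * m) (hc : c ≤ 1 / 2) (ha : a < n ^ c) : 2 * a < m := by
  have hsqrt : n ^ c ≤ √n := by
    rw [Real.sqrt_eq_rpow]
    exact Real.rpow_le_rpow_of_exponent_le hn hc
  have hDsqrt : 2 * D ≤ √n := Real.le_sqrt_of_sq_le (by linarith)
  refine lt_of_mul_lt_mul_left ?_ hD.le
  calc D * (2 * a) = 2 * D * a := by ring
    _ < 2 * D * √n := by gcongr; exact ha.trans_le hsqrt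
    _ ≤ √n * √n := by gcongr
    _ = n := Real.mul_self_sqrt (by linarith)
    _ ≤ D * m := hnm

/-- The gain of the exponent `c₁` on a comb with many teeth outweighs the loss of passing from
`k ^ 2 * w` vertices to `k * w` vertices. -/
lemma rpow_le_rpow_mul_div_rpow {C D n k w c c₁ : ℝ} (hC : 0 ≤ C) (hD : 0 < D) (hn : 0 ≤ n)
    (hk : 1 ≤ k) (hw : 0 ≤ w) (hc : 0 ≤ c) (hcc : c ≤ c₁ / 4) (hCc : C ^ c ≤ 2)
    (hDc : D ^ c₁ ≤ 2) (hnk : n ≤ C * (k ^ 2 * w)) (hk4 : 4 ≤ k ^ (c₁ / 2)) :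
    n ^ c ≤ w ^ c * (k / D) ^ c₁ := by
  have hk0 : 0 ≤ k := by linarith
  have hsq : k ^ c₁ = k ^ (c₁ / 2) * k ^ (c₁ / 2) := by
    rw [← Real.rpow_add (by linarith), add_halves]
  calc n ^ c ≤ 2 * (k ^ 2 * w) ^ c := rpow_le_two_mul_rpow hC hn (by positivity) hc hCc hnk
    _ = 2 * (k ^ (2 * c) * w ^ c) := by
        rw [Real.mul_rpow (by positivity) hw, ← Real.rpow_natCast_mul hk0, Nat.cast_ofNat]
    _ ≤ 2 * (k ^ (c₁ / 2) * w ^ c) := by gcongr; linarith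
    _ = w ^ c * (4 * k ^ (c₁ / 2) / 2) := by ring
    _ ≤ w ^ c * (k ^ c₁ / 2) := by rw [hsq]; gcongr
    _ ≤ w ^ c * (k ^ c₁ / D ^ c₁) := by gcongr
    _ = w ^ c * (k / D) ^ c₁ := by rw [Real.div_rpow hk0 hD.le]

end Exponents

section MinCounterexample

variable {V : Type*} {G : SimpleGraph V} {X Y Z B : Finset V} {c : ℝ} {D e : ℕ}

/-- The set `X` is minimal with `homNum G X < X.card ^ c`. -/
structure IsMinCounterexample (G : SimpleGraph V) (c : ℝ) (X : Finset V) : Prop where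
  homNum_lt : homNum G X < (X.card : ℝ) ^ c
  le_homNum : ∀ Z ⊂ X, (Z.card : ℝ) ^ c ≤ homNum G Z

lemma exists_isMinCounterexample (h : homNum G X < (X.card : ℝ) ^ c) :
    ∃ Z, IsMinCounterexample G c Z := by
  induction X using Finset.strongInduction with
  | H X ih =>
  by_cases hsub : ∀ Z ⊂ X, (Z.card : ℝ) ^ c ≤ homNum G Z
  · exact ⟨X, h, hsub⟩
  · push Not at hsub
    obtain ⟨Z, hZX, hZ⟩ := hsub
    exact ih Z hZX hZ

namespace IsMinCounterexample

lemma lt_card {K : ℝ} (h : IsMinCounterexample G c X) (hc : 0 < c) (hK : K ^ c ≤ 2) :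
    K < X.card := by
  by_contra! hle
  have hX : (X.card : ℝ) ^ c ≤ 2 := (Real.rpow_le_rpow (by positivity) hle hc.le).trans hK
  exact h.homNum_lt.not_ge (card_rpow_le_homNum_of_le_two hc.ne' hX)

lemma nonempty (h : IsMinCounterexample G c X) (hc : 0 < c) : X.Nonempty :=
  Finset.card_pos.1 <| Nat.cast_pos.1 <| h.lt_card hc (by simp [hc.ne'])

lemma not_hasPurePair (h : IsMinCounterexample G c X) (hc : 0 < c) (hD : (D : ℝ) ^ c ≤ 2) :
    ¬ HasPurePair G X D := fun hpure => by
  have hle := hpure.mul_card_rpow_le_homNum (K := 1) (h.nonempty hc) zero_le_one hc.le hD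
    (by simpa only [one_mul] using h.le_homNum)
  rw [one_mul] at hle
  exact h.homNum_lt.not_ge hle

lemma cliqueNumOn_compl_mul_rpow_le (h : IsMinCounterexample G c X) (hZ : Z ⊂ X) :
    cliqueNumOn Gᶜ X * (Z.card : ℝ) ^ c ≤ cliqueNumOn Gᶜ Z * (X.card : ℝ) ^ c := by
  have hX : (cliqueNumOn G X * cliqueNumOn Gᶜ X : ℝ) ≤ (X.card : ℝ) ^ c := by
    exact_mod_cast h.homNum_lt.le
  have hZX : (homNum G Z : ℝ) ≤ cliqueNumOn G X * cliqueNumOn Gᶜ Z := by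
    exact_mod_cast Nat.mul_le_mul_right _ (cliqueNumOn_mono hZ.1)
  calc cliqueNumOn Gᶜ X * (Z.card : ℝ) ^ c
      ≤ cliqueNumOn Gᶜ X * (cliqueNumOn G X * cliqueNumOn Gᶜ Z) := by
        gcongr
        exact (h.le_homNum Z hZ).trans hZX
    _ = cliqueNumOn Gᶜ Z * (cliqueNumOn G X * cliqueNumOn Gᶜ X) := by ring
    _ ≤ cliqueNumOn Gᶜ Z * (X.card : ℝ) ^ c := by gcongr

lemma cliqueNumOn_compl_lt (h : IsMinCounterexample G c X) (hc : 0 < c) :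
    cliqueNumOn Gᶜ X < (X.card : ℝ) ^ c := by
  refine lt_of_le_of_lt ?_ h.homNum_lt
  exact_mod_cast Nat.le_mul_of_pos_left _ (one_le_cliqueNumOn (h.nonempty hc))

lemma mul_sqrt_le_cliqueNumOn_compl_mul (h : IsMinCounterexample G c X) (hc : 0 < c)
    (hc4 : c ≤ 1 / 4) (hD : (D : ℝ) ^ c ≤ 2) (hXY : X.card ≤ D * Y.card) (hYX : Y ⊆ X)
    (hZY : Z ⊆ Y) (hZ : Z.Nonempty) (hZc : 408 ^ 4 * Z.card ≤ Y.card) :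
    204 * (cliqueNumOn Gᶜ X : ℝ) * √(Y.card * Z.card) ≤ cliqueNumOn Gᶜ Z * Y.card := by
  have hZ_pos : 0 < Z.card := hZ.card_pos
  have hZX : Z ⊂ X := ⟨hZY.trans hYX, fun hXZ => by
    have := Finset.card_le_card (hYX.trans hXZ)
    omega⟩
  have hX : 0 < (X.card : ℝ) ^ c :=
    Real.rpow_pos_of_pos (mod_cast (h.nonempty hc).card_pos) c
  have hsqrt : 204 * √(Y.card * Z.card) * (X.card : ℝ) ^ c ≤ (Z.card : ℝ) ^ c * Y.card := by
    refine mul_sqrt_mul_rpow_le (D := D) (by norm_num) (by positivity) ?_ (by positivity)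
      (mod_cast hZ_pos) (mod_cast hXY) ?_ hc.le hc4 hD
    · exact_mod_cast (show 0 < Y.card by omega)
    · norm_num
      exact_mod_cast hZc
  refine le_of_mul_le_mul_right ?_ hX
  calc _ = cliqueNumOn Gᶜ X * (204 * √(Y.card * Z.card) * (X.card : ℝ) ^ c) := by ring
    _ ≤ cliqueNumOn Gᶜ X * ((Z.card : ℝ) ^ c * Y.card) := by gcongr
    _ = cliqueNumOn Gᶜ X * (Z.card : ℝ) ^ c * Y.card := by ring
    _ ≤ cliqueNumOn Gᶜ Z * (X.card : ℝ) ^ c * Y.card := by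
        gcongr ?_ * _
        exact h.cliqueNumOn_compl_mul_rpow_le hZX
    _ = _ := by ring

lemma exists_isExpanding (h : IsMinCounterexample G c X) (hc : 0 < c) (hc4 : c ≤ 1 / 4)
    (hD : (4 * D ^ 2 : ℝ) ^ c ≤ 2) (hD' : (D : ℝ) ^ c ≤ 2) (hYX : Y ⊆ X)
    (hXe : X.card ≤ D * e) (hYe : 408 ^ 4 * e ≤ Y.card)
    (hdeg : ∀ x ∈ Y, (neighborsIn G Y x).card ≤ e) : ∃ v Δ S B, IsExpanding G Y v Δ S B := by
  have heY : e ≤ Y.card := by omega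
  have hX_pos := (h.nonempty hc).card_pos
  have hXY : X.card ≤ D * Y.card := hXe.trans (Nat.mul_le_mul_left _ heY)
  have hD_pos : 0 < D := Nat.pos_of_mul_pos_right (hX_pos.trans_le hXe)
  have ha : 2 * (cliqueNumOn Gᶜ X : ℝ) < Y.card :=
    two_mul_lt_of_lt_rpow (D := D) (mod_cast hD_pos) (mod_cast hX_pos)
      (h.lt_card hc hD).le (mod_cast hXY) (hc4.trans (by norm_num)) (h.cliqueNumOn_compl_lt hc)
  refine _root_.exists_isExpanding heY hdeg (cliqueNumOn_mono hYX) (mod_cast ha)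
    fun Z hZY hZ hZe => ?_
  exact h.mul_sqrt_le_cliqueNumOn_compl_mul hc hc4 hD' hXY hYX hZY hZ (by omega)

lemma exists_isRootedComb {k : ℕ} (h : IsMinCounterexample G c X) (hc : 0 < c) (hc4 : c ≤ 1 / 4)
    (hD : (4 * D ^ 2 : ℝ) ^ c ≤ 2) (hD' : (D : ℝ) ^ c ≤ 2) (hYX : Y ⊆ X)
    (hXe : X.card ≤ D * e) (hYe : (k ^ 2 + 408 ^ 4) * e ≤ Y.card)
    (hdeg : ∀ x ∈ Y, (neighborsIn G Y x).card ≤ e) :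
    ∃ v A B w P, B ⊂ X ∧ 1 ≤ w ∧ k ≤ A.card ∧ X.card ≤ D * (A.card ^ 2 * w) ∧
      IsRootedComb G v A B w P := by
  rw [add_mul] at hYe
  obtain ⟨v, Δ, S, B, hexp⟩ := h.exists_isExpanding hc hc4 hD hD' hYX hXe (by omega) hdeg
  obtain ⟨A, w, P, hw, hwe, hYA, hcomb⟩ := hexp.exists_isRootedComb hdeg
  refine ⟨v, A, B, w, P, ?_, hw, ?_, ?_, hcomb⟩
  · exact (Finset.ssubset_iff_of_subset (hexp.subset.trans hYX)).2
      ⟨v, hYX hexp.mem, fun hv => (hexp.ne_and_not_adj v hv).1 rfl⟩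
  · have hkA : k ^ 2 * w ≤ A.card ^ 2 * w :=
      calc k ^ 2 * w ≤ k ^ 2 * e := by gcongr
        _ ≤ A.card ^ 2 * w := by omega
    exact le_of_pow_le_pow_left₀ two_ne_zero (by positivity) (Nat.le_of_mul_le_mul_right hkA hw)
  · exact hXe.trans (Nat.mul_le_mul_left _ (by omega))

lemma exists_not_hasPurePair [DecidableEq V] {A : Finset V} {C w : ℕ} {P : V → Finset V} {c₁ : ℝ}
    (h : IsMinCounterexample G c X) (hcomb : IsComb G A B w P) (hBX : B ⊂ X) (hA : A.Nonempty)
    (hw : 1 ≤ w) (hc : 0 ≤ c) (hcc : c ≤ c₁ / 4) (hC : (C : ℝ) ^ c ≤ 2)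
    (hD : (D : ℝ) ^ c₁ ≤ 2) (hD1 : 1 ≤ D) (hXA : X.card ≤ C * (A.card ^ 2 * w))
    (hA4 : 4 ≤ (A.card : ℝ) ^ (c₁ / 2)) :
    ∃ Q ⊆ A.biUnion P, D * w ≤ Q.card ∧ ¬ HasPurePair G Q D := by
  by_contra! hpure
  have hBX' : A.biUnion P ⊂ X := (Finset.biUnion_subset.2 hcomb.subset).trans_ssubset hBX
  have hlarge := rpow_mul_div_rpow_le_homNum hD1 hw hc (by linarith) hD hpure
    fun S hS => h.le_homNum S (hS.trans_ssubset hBX')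
  have hteeth : ((A.biUnion P).card : ℝ) / (D * w) = A.card / D := by
    rw [hcomb.card_biUnion, Nat.cast_mul, mul_div_mul_right]
    exact Nat.cast_ne_zero.2 (by omega)
  have hle : (homNum G (A.biUnion P) : ℝ) ≤ homNum G X := mod_cast homNum_mono hBX'.1
  refine h.homNum_lt.not_ge ((rpow_le_rpow_mul_div_rpow (C := C) (D := D) (w := w) (by positivity)
    (mod_cast hD1) (by positivity) (mod_cast hA.card_pos) (by positivity) hc hcc hC hD
    (mod_cast hXA) hA4).trans ?_)
  rw [hteeth] at hlarge
  exact hlarge.trans hle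

end IsMinCounterexample

end MinCounterexample

section ErdosHajnal

theorem exists_rpow_le_homNum {W : Type*} [Finite W] {F : SimpleGraph W} (hF : F.IsAcyclic)
    {L : ℕ} (hL : 2 ≤ L) : ∃ c : ℝ, 0 < c ∧ ∀ {V : Type*} (G : SimpleGraph V),
      ¬ starExpansion F ⊴ G → (∀ m, L ≤ m → ¬ (cycleGraph m)ᶜ ⊴ G) →
      ∀ X : Finset V, (X.card : ℝ) ^ c ≤ homNum G X := by
  classical
  obtain ⟨D₁, hD₁, hrainbow⟩ := exists_hasPurePair_or_injective_embedding (starExpansion F) hL hF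
  obtain ⟨c₁, hc₁, hD₁c⟩ := exists_forall_rpow_le_two D₁.cast_nonneg
  obtain ⟨k, hk⟩ := Filter.eventually_atTop.1 <|
    ((tendsto_rpow_atTop (half_pos hc₁)).comp tendsto_natCast_atTop_atTop).eventually_ge_atTop 4
  obtain ⟨D₂, hD₂, hsparse⟩ :=
    exists_hasPurePair_or_sparse (starExpansion F) hL ((k + 1) ^ 2 + 408 ^ 4)
  obtain ⟨c₂, hc₂, hD₂c⟩ := exists_forall_rpow_le_two (K := 4 * D₂ ^ 2) (by positivity)
  obtain ⟨c, hc, hc₁', hc₂', hc4⟩ : ∃ c, 0 < c ∧ c ≤ c₁ / 4 ∧ c ≤ c₂ ∧ c ≤ 1 / 4 :=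
    ⟨min (c₁ / 4) (min c₂ (1 / 4)), by positivity, by simp, by simp, by simp⟩
  have hD₂sq := hD₂c c hc.le hc₂'
  have hD₂le : (D₂ : ℝ) ≤ 4 * D₂ ^ 2 := by exact_mod_cast (by nlinarith : D₂ ≤ 4 * D₂ ^ 2)
  have hD₂' : (D₂ : ℝ) ^ c ≤ 2 := (Real.rpow_le_rpow (by positivity) hD₂le hc.le).trans hD₂sq
  refine ⟨c, hc, fun G hG hC X => ?_⟩
  by_contra! hX
  obtain ⟨X, hX⟩ := exists_isMinCounterexample hX
  have hD₂X : D₂ ≤ X.card := mod_cast (hX.lt_card hc hD₂').le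
  obtain ⟨Y, hYX, e, -, hXe, hYe, hdeg⟩ :=
    (hsparse G hG hC X hD₂X).resolve_left (hX.not_hasPurePair hc hD₂')
  obtain ⟨v, A, B, w, P, hBX, hw, hkA, hXA, hcomb⟩ :=
    hX.exists_isRootedComb hc hc4 hD₂sq hD₂' hYX hXe hYe hdeg
  obtain ⟨Q, hQ, hQw, hpure⟩ := hX.exists_not_hasPurePair hcomb.toIsComb hBX
    (Finset.card_pos.1 (by omega)) hw hc.le hc₁' hD₂' (hD₁c c₁ hc₁.le le_rfl) hD₁ hXA
    (hk A.card (by omega))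
  exact hpure (hcomb.hasPurePair hG hQ fun col hcol => hrainbow G hG hC Q col w hw hcol hQw)

lemma homNum_univ_le_sq {V : Type*} [Fintype V] (G : SimpleGraph V) :
    homNum G Finset.univ ≤ max (alphaNum G) (omegaNum G) ^ 2 := by
  rw [sq]
  exact Nat.mul_le_mul ((cliqueNumOn_univ_le_cliqueNum G).trans (le_max_right _ _))
    ((cliqueNumOn_univ_le_cliqueNum Gᶜ).trans (le_max_left _ _))

end ErdosHajnal

/-- For `H` the star-expansion of a forest and any `ℓ ≥ 3`, the set consisting of `H`
together with the complements of all cycles of length at least `ℓ` has the Erdős–Hajnal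
property. -/
theorem stmt_18 {W : Type*} [Fintype W] (F : SimpleGraph W) (hF : F.IsAcyclic)
    (ℓ : ℕ) (hℓ : 3 ≤ ℓ) :
    ∃ τ : ℝ, 0 < τ ∧
      ∀ (V : Type) [Fintype V] (G : SimpleGraph V),
        ¬ Nonempty (starExpansion F ↪g G) →
        (∀ m : ℕ, ℓ ≤ m → ¬ Nonempty ((cycleGraph m)ᶜ ↪g G)) →
        (Fintype.card V : ℝ) ^ τ ≤ ((max (alphaNum G) (omegaNum G) : ℕ) : ℝ) := by
  obtain ⟨c, hc, hhom⟩ := exists_rpow_le_homNum hF (L := ℓ) (by omega)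
  refine ⟨c / 2, half_pos hc, fun V _ G hG hC => ?_⟩
  refine le_of_pow_le_pow_left₀ two_ne_zero (Nat.cast_nonneg _) ?_
  calc ((Fintype.card V : ℝ) ^ (c / 2)) ^ 2 = (Fintype.card V : ℝ) ^ c := by
        rw [← Real.rpow_mul_natCast (Nat.cast_nonneg _), Nat.cast_ofNat,
          div_mul_cancel₀ c two_ne_zero]
    _ ≤ homNum G Finset.univ := hhom G hG hC Finset.univ
    _ ≤ ((max (alphaNum G) (omegaNum G) : ℕ) : ℝ) ^ 2 := mod_cast homNum_univ_le_sq G
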